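/- arXiv:1702.02428 — 2 statements merged into one kernel-verified Lean document; each statement's English description precedes it below -/
import Mathlib

section
/- Assume in addition that the diffusion coefficients are independent of the spatial variable (Q = Q(t)), that c ≡ 0, and that r̂₀ := sup_{I×ℝ^d} r₀ < +∞. Then for every s ∈ I, every f ∈ C¹_b(ℝ^d), every classical solution u bounded on strips with datum f, and every classical solution v bounded on strips with datum |∇f|, one has |∇_x u(t,x)| ≤ e^{r̂₀(t−s)}·v(t,x) for all t > s and x ∈ ℝ^d. -/
open Set Filter MeasureTheory

noncomputable section

abbrev Euc (d : ℕ) := EuclideanSpace ℝ (Fin d)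

noncomputable def hess (d : ℕ) (g : Euc d → ℝ) (x : Euc d) (i j : Fin d) : ℝ :=
  fderiv ℝ (fun y => fderiv ℝ g y (EuclideanSpace.single j 1)) x (EuclideanSpace.single i 1)

noncomputable def minEig (d : ℕ) (A : Fin d → Fin d → ℝ) : ℝ :=
  sInf {r : ℝ | ∃ ξ : Euc d, ‖ξ‖ = 1 ∧ (∑ i, ∑ j, A i j * ξ i * ξ j) = r}

noncomputable def pdist (d : ℕ) (p q : ℝ × Euc d) : ℝ :=
  Real.sqrt |p.1 - q.1| + ‖p.2 - q.2‖

def LocHolderParab (d : ℕ) (α : ℝ) (I : Set ℝ) (g : ℝ → Euc d → ℝ) : Prop :=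
  ∀ K : Set (ℝ × Euc d), IsCompact K → K ⊆ I ×ˢ (univ : Set (Euc d)) →
    ∃ C > 0, ∀ p ∈ K, ∀ q ∈ K, |g p.1 p.2 - g q.1 q.2| ≤ C * pdist d p q ^ α

noncomputable def Aop (d : ℕ) (Q : ℝ → Euc d → Fin d → Fin d → ℝ)
    (b : ℝ → Euc d → Fin d → ℝ) (c : ℝ → Euc d → ℝ)
    (t : ℝ) (g : Euc d → ℝ) (x : Euc d) : ℝ :=
  (∑ i, ∑ j, Q t x i j * hess d g x i j)
    + (∑ i, b t x i * fderiv ℝ g x (EuclideanSpace.single i 1))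
    + c t x * g x

structure IsClassicalSolution (d : ℕ) (Q : ℝ → Euc d → Fin d → Fin d → ℝ)
    (b : ℝ → Euc d → Fin d → ℝ) (c : ℝ → Euc d → ℝ)
    (s : ℝ) (f : Euc d → ℝ) (u : ℝ → Euc d → ℝ) : Prop where
  cont : ContinuousOn (fun p : ℝ × Euc d => u p.1 p.2) (Ici s ×ˢ univ)
  tdiff : ∀ t, s < t → ∀ x, DifferentiableAt ℝ (fun τ => u τ x) t
  tderiv_cont : ContinuousOn (fun p : ℝ × Euc d => deriv (fun τ => u τ p.2) p.1) (Ioi s ×ˢ univ)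
  xdiff : ∀ t, s < t → ContDiff ℝ 2 (u t)
  grad_cont : ContinuousOn (fun p : ℝ × Euc d => fderiv ℝ (u p.1) p.2) (Ioi s ×ˢ univ)
  hess_cont : ContinuousOn (fun p : ℝ × Euc d => hess d (u p.1) p.2) (Ioi s ×ˢ univ)
  pde : ∀ t, s < t → ∀ x, deriv (fun τ => u τ x) t = Aop d Q b c t (u t) x
  init : ∀ x, u s x = f x

def BoundedOnStrips (d : ℕ) (s : ℝ) (u : ℝ → Euc d → ℝ) : Prop :=
  ∀ T, s < T → ∃ M, ∀ t ∈ Icc s T, ∀ x, |u t x| ≤ M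

def LocBddOn (I : Set ℝ) (g : ℝ → ℝ) : Prop :=
  ∀ a b : ℝ, Icc a b ⊆ I → ∃ M, ∀ t ∈ Icc a b, |g t| ≤ M

theorem aux_dle {g : ℝ → ℝ} {g' : ℝ} (hg : HasDerivAt g g' 0) {r : ℝ} (hr : 0 < r)
    (h : ∀ τ, 0 < τ → τ < r → g τ ≤ g 0) : g' ≤ 0 := by
  have h1 := hasDerivAt_iff_tendsto_slope.1 hg
  have h2 : Tendsto (slope g 0) (nhdsWithin 0 (Ioi 0)) (nhds g') :=
    h1.mono_left (nhdsWithin_mono _ (fun x hx => ne_of_gt hx))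
  refine le_of_tendsto h2 ?_
  filter_upwards [Ioo_mem_nhdsGT hr] with τ hτ
  rw [slope_def_field]
  have := h τ hτ.1 hτ.2
  exact div_nonpos_of_nonpos_of_nonneg (by linarith) (by linarith [hτ.1])

theorem aux_second {g g1 : ℝ → ℝ} {g2 : ℝ} (h1 : ∀ τ, HasDerivAt g (g1 τ) τ)
    (h2 : HasDerivAt g1 g2 0) (hmax : ∀ τ, g τ ≤ g 0) : g2 ≤ 0 := by
  by_contra hcon
  push Not at hcon
  have hd : deriv g = g1 := funext fun τ => (h1 τ).deriv
  have hmx : IsLocalMax g 0 := Filter.Eventually.of_forall hmax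
  have hmn : IsLocalMin g 0 := isLocalMin_of_deriv_deriv_pos (by rw [hd, h2.deriv]; exact hcon)
    hmx.deriv_eq_zero (h1 0).continuousAt
  have hc : g =ᶠ[nhds 0] fun _ => g 0 := by
    filter_upwards [hmn] with τ hτ
    exact le_antisymm (hmax τ) hτ
  have h3 : deriv g =ᶠ[nhds 0] deriv (fun _ => g 0) := hc.deriv
  have h4 := h3.deriv_eq
  rw [hd, h2.deriv] at h4
  simp at h4
  linarith

theorem aux_max {E : Type*} [NormedAddCommGroup E] [ProperSpace E] (F : ℝ × E → ℝ) (s T R : ℝ)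
    (hc : ContinuousOn F (Icc s T ×ˢ univ)) (hinit : ∀ x, F (s, x) < 0)
    (hR : ∀ t ∈ Icc s T, ∀ x, 0 ≤ F (t, x) → ‖x‖ ≤ R)
    (hno : ∀ t, s < t → t ≤ T → ∀ x, 0 ≤ F (t, x) →
      (∀ t' ∈ Icc s T, ∀ x', F (t', x') ≤ F (t, x)) → False) :
    ∀ t ∈ Icc s T, ∀ x, F (t, x) < 0 := by
  intro t ht x
  by_contra hcon
  push Not at hcon
  have hK : IsCompact (Icc s T ×ˢ Metric.closedBall (0 : E) R) :=
    isCompact_Icc.prod (isCompact_closedBall _ _)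
  obtain ⟨⟨t0, x0⟩, hp, hmax⟩ := hK.exists_isMaxOn
    ⟨(t, x), ht, by simpa using hR t ht x hcon⟩
    (hc.mono (prod_mono_right (subset_univ _)))
  have h0 : 0 ≤ F (t0, x0) :=
    hcon.trans (hmax (a := (t, x)) ⟨ht, by simpa using hR t ht x hcon⟩)
  have ht0 : s < t0 := by
    rcases eq_or_lt_of_le hp.1.1 with h | h
    · exfalso
      have := hinit x0
      simp only at h
      rw [h] at this
      linarith
    · exact h
  refine hno t0 ht0 hp.1.2 x0 h0 ?_
  intro t' ht' x'
  by_cases h : 0 ≤ F (t', x')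
  · exact hmax (a := (t', x')) ⟨ht', by simpa using hR t' ht' x' h⟩
  · push Not at h
    linarith

theorem aux_lin (d : ℕ) (L : Euc d →L[ℝ] ℝ) (ξ : Euc d) :
    L ξ = ∑ i, ξ i * L (EuclideanSpace.single i 1) := by
  have : ξ = ∑ i, ξ i • (EuclideanSpace.single i 1 : Euc d) := by
    have := (EuclideanSpace.basisFun (Fin d) ℝ).sum_repr ξ
    simpa using this.symm
  conv_lhs => rw [this]
  simp [map_sum]

theorem aux_line (d : ℕ) {ψ : Euc d → ℝ} (x ξ : Euc d) (τ : ℝ)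
    (h : DifferentiableAt ℝ ψ (x + τ • ξ)) :
    HasDerivAt (fun τ : ℝ => ψ (x + τ • ξ))
      (∑ i, ξ i * fderiv ℝ ψ (x + τ • ξ) (EuclideanSpace.single i 1)) τ := by
  rw [← aux_lin]
  have h1 : HasDerivAt (fun τ : ℝ => x + τ • ξ) ξ τ := by
    simpa using ((hasDerivAt_id τ).smul_const ξ).const_add x
  exact h.hasFDerivAt.comp_hasDerivAt τ h1

theorem aux_line2 (d : ℕ) {ψ : Euc d → ℝ} (h : ContDiff ℝ 2 ψ) (x ξ : Euc d) :
    HasDerivAt (fun τ : ℝ => ∑ j, ξ j * fderiv ℝ ψ (x + τ • ξ) (EuclideanSpace.single j 1))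
      (∑ j, ξ j * ∑ i, ξ i * hess d ψ x i j) 0 := by
  refine HasDerivAt.fun_sum fun j _ => ?_
  have hd : Differentiable ℝ (fun y => fderiv ℝ ψ y (EuclideanSpace.single j 1)) := by
    have : ContDiff ℝ 1 (fderiv ℝ ψ) := h.fderiv_right (by norm_num)
    exact (this.clm_apply contDiff_const).differentiable (by norm_num)
  have := aux_line d x ξ 0 (hd (x + (0:ℝ) • ξ))
  simp only [zero_smul, add_zero] at this
  exact this.const_mul (ξ j)

theorem aux_psd (d : ℕ) (A : Fin d → Fin d → ℝ) (ν₀ : ℝ) (hν : 0 < ν₀) (h : ν₀ ≤ minEig d A)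
    (ξ : Euc d) : 0 ≤ ∑ i, ∑ j, A i j * ξ i * ξ j := by
  by_cases h0 : ξ = 0
  · simp [h0]
  have hb : BddBelow {r : ℝ | ∃ ξ : Euc d, ‖ξ‖ = 1 ∧ (∑ i, ∑ j, A i j * ξ i * ξ j) = r} := by
    by_contra hcon
    have := Real.sInf_of_not_bddBelow hcon
    unfold minEig at h
    linarith
  have hn : 0 < ‖ξ‖ := norm_pos_iff.2 h0
  have h1 : minEig d A ≤ ∑ i, ∑ j, A i j * (‖ξ‖⁻¹ • ξ) i * (‖ξ‖⁻¹ • ξ) j := by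
    refine csInf_le hb ⟨‖ξ‖⁻¹ • ξ, ?_, rfl⟩
    rw [norm_smul, norm_inv, norm_norm, inv_mul_cancel₀ hn.ne']
  have h2 : ∑ i, ∑ j, A i j * (‖ξ‖⁻¹ • ξ) i * (‖ξ‖⁻¹ • ξ) j
      = (‖ξ‖⁻¹)^2 * ∑ i, ∑ j, A i j * ξ i * ξ j := by
    simp only [Finset.mul_sum]
    refine Finset.sum_congr rfl fun i _ => Finset.sum_congr rfl fun j _ => ?_
    simp
    ring
  rw [h2] at h1
  by_contra hcon
  push Not at hcon
  have : 0 < (‖ξ‖⁻¹)^2 := by positivity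
  nlinarith

open scoped MatrixOrder Matrix.Norms.L2Operator in
theorem aux_sqrt (d : ℕ) (A : Matrix (Fin d) (Fin d) ℝ) (hA : A.PosSemidef) :
    ∃ B : Matrix (Fin d) (Fin d) ℝ, A = B.conjTranspose * B :=
  CStarAlgebra.nonneg_iff_eq_star_mul_self.mp hA.nonneg

theorem aux_trace (d : ℕ) (A H : Fin d → Fin d → ℝ) (hs : ∀ i j, A i j = A j i)
    (hA : ∀ ξ : Euc d, 0 ≤ ∑ i, ∑ j, A i j * ξ i * ξ j)
    (hH : ∀ ξ : Euc d, ∑ j, ξ j * ∑ i, ξ i * H i j ≤ 0) :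
    ∑ i, ∑ j, A i j * H i j ≤ 0 := by
  have hp : (Matrix.of A).PosSemidef := by
    refine Matrix.PosSemidef.of_dotProduct_mulVec_nonneg ?_ ?_
    · ext i j
      simp [hs i j]
    · intro x
      have := hA (WithLp.toLp 2 x)
      refine this.trans_eq ?_
      simp only [dotProduct, Matrix.mulVec, Finset.mul_sum]
      refine Finset.sum_congr rfl fun i _ => Finset.sum_congr rfl fun j _ => ?_
      simp
      ring
  have hB0 : ∃ B : Matrix (Fin d) (Fin d) ℝ, Matrix.of A = B.conjTranspose * B :=
    aux_sqrt d _ hp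
  obtain ⟨B, hB⟩ := hB0
  have hAB : ∀ i j, A i j = ∑ k, B k i * B k j := by
    intro i j
    have := congrFun (congrFun hB i) j
    simpa [Matrix.mul_apply] using this
  have : ∑ i, ∑ j, A i j * H i j = ∑ k, ∑ j, B k j * ∑ i, B k i * H i j := by
    simp only [hAB, Finset.sum_mul, Finset.mul_sum]
    rw [Finset.sum_comm]
    have e : ∀ j : Fin d, ∑ i, ∑ k, B k i * B k j * H i j = ∑ k, ∑ i, B k j * (B k i * H i j) := by
      intro j
      rw [Finset.sum_comm]
      refine Finset.sum_congr rfl fun i _ => Finset.sum_congr rfl fun j _ => ?_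
      ring
    simp only [e]
    rw [Finset.sum_comm]
  rw [this]
  exact Finset.sum_nonpos fun k _ => hH (WithLp.toLp 2 (B k))

theorem aux_jac (d : ℕ) (b : Euc d → Fin d → ℝ) (r : ℝ)
    (hb : ∀ (x : Euc d) (j : Fin d), DifferentiableAt ℝ (fun y => b y j) x)
    (hJ : ∀ (x : Euc d) (ξ : Euc d),
      (∑ i, ∑ j, fderiv ℝ (fun y => b y i) x (EuclideanSpace.single j 1) * ξ i * ξ j) ≤
        r * ‖ξ‖ ^ 2) (x y : Euc d) :
    ∑ i, (x - y) i * (b x i - b y i) ≤ r * ‖x - y‖ ^ 2 := by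
  set ξ := x - y with hξ
  have hd : ∀ τ, HasDerivAt (fun τ : ℝ => ∑ i, ξ i * b (y + τ • ξ) i)
      (∑ i, ξ i * ∑ j, ξ j * fderiv ℝ (fun y => b y i) (y + τ • ξ) (EuclideanSpace.single j 1)) τ :=
    fun τ => HasDerivAt.fun_sum fun i _ => (aux_line d y ξ τ (hb _ i)).const_mul (ξ i)
  have hle : ∀ τ, deriv (fun τ : ℝ => ∑ i, ξ i * b (y + τ • ξ) i) τ ≤ r * ‖ξ‖ ^ 2 := by
    intro τ
    rw [(hd τ).deriv]
    refine le_trans (le_of_eq ?_) (hJ (y + τ • ξ) ξ)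
    simp only [Finset.mul_sum]
    refine Finset.sum_congr rfl fun i _ => Finset.sum_congr rfl fun j _ => ?_
    ring
  have := image_sub_le_mul_sub_of_deriv_le (fun τ => (hd τ).differentiableAt) hle
    (zero_le_one)
  simp only [one_smul, zero_smul, add_zero, sub_zero, mul_one] at this
  rw [← Finset.sum_sub_distrib] at this
  have e : y + ξ = x := by simp [hξ]
  rw [e] at this
  simpa [mul_sub] using this

theorem aux_norm (d : ℕ) (w w' : Euc d) (hw : w ≠ 0) :
    HasDerivAt (fun τ : ℝ => ‖w + τ • w'‖) ((∑ i, w i * w' i) / ‖w‖) 0 := by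
  have h1 : HasDerivAt (fun τ : ℝ => w + τ • w') w' 0 := by
    simpa using ((hasDerivAt_id (0:ℝ)).smul_const w').const_add w
  have h2 := h1.norm_sq
  have h3 := h2.sqrt (by simpa using hw)
  have hn : 0 < ‖w‖ := norm_pos_iff.2 hw
  have e : inner ℝ w w' = ∑ i, w i * w' i := by
    simp [PiLp.inner_apply, mul_comm]
  simp only [zero_smul, add_zero, Real.sqrt_sq (norm_nonneg _), e] at h3
  convert h3 using 1
  field_simp

theorem aux_init (d : ℕ) (f φ : Euc d → ℝ) (hf : ContDiff ℝ 1 f) (Mf Mg : ℝ)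
    (hfb : ∀ x, |f x| ≤ Mf) (hfg : ∀ x, ‖fderiv ℝ f x‖ ≤ Mg)
    (hφc : Continuous φ) (hφ : ∀ x, 0 < φ x)
    (hinf : ∀ M : ℝ, ∃ R : ℝ, ∀ x : Euc d, R ≤ ‖x‖ → M ≤ φ x) (ε : ℝ) (hε : 0 < ε) :
    ∃ C, 0 ≤ C ∧ ∀ x y, f x - f y ≤ ‖x - y‖ * (‖fderiv ℝ f x‖ + ε * φ x) + C * ‖x - y‖ ^ 2 := by
  have hdf : Differentiable ℝ f := hf.differentiable (by norm_num)
  obtain ⟨R, hR⟩ := hinf (Mg / ε)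
  have hM : 0 ≤ Mf := (abs_nonneg _).trans (hfb 0)
  -- lower bound of φ
  obtain ⟨m, hm, hmφ⟩ : ∃ m > 0, ∀ x ∈ Metric.closedBall (0 : Euc d) R, m ≤ φ x := by
    by_cases hne : (Metric.closedBall (0 : Euc d) R).Nonempty
    · obtain ⟨x0, _, h0⟩ := (isCompact_closedBall (0 : Euc d) R).exists_isMinOn hne
        hφc.continuousOn
      exact ⟨φ x0, hφ x0, fun x hx => h0 hx⟩
    · exact ⟨1, one_pos, fun x hx => (hne ⟨x, hx⟩).elim⟩
  have huc := (isCompact_closedBall (0 : Euc d) (R+1)).uniformContinuousOn_of_continuous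
    (hf.continuous_fderiv (by norm_num)).continuousOn
  obtain ⟨δ, hδ, hδ'⟩ := Metric.uniformContinuousOn_iff.1 huc (ε * m) (by positivity)
  set δ' := min δ 1 with hδdef
  have hδp : 0 < δ' := lt_min hδ one_pos
  refine ⟨2 * Mf / δ' ^ 2, by positivity, fun x y => ?_⟩
  have hρ := norm_nonneg (x - y)
  have hC : 0 ≤ 2 * Mf / δ' ^ 2 := by positivity
  rcases le_or_gt R ‖x‖ with hx | hx
  · have h1 : Mg ≤ ε * φ x := by
      have := hR x hx
      rw [div_le_iff₀ hε] at this
      linarith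
    have h2 : ‖f x - f y‖ ≤ Mg * ‖x - y‖ :=
      convex_univ.norm_image_sub_le_of_norm_fderiv_le (fun z _ => hdf z) (fun z _ => hfg z)
        (mem_univ y) (mem_univ x)
    have h3 := (le_abs_self _).trans h2
    have h4 : Mg * ‖x - y‖ ≤ ‖x - y‖ * (‖fderiv ℝ f x‖ + ε * φ x) := by
      rw [mul_comm]
      exact mul_le_mul_of_nonneg_left (by linarith [norm_nonneg (fderiv ℝ f x)]) hρ
    have : 0 ≤ 2 * Mf / δ' ^ 2 * ‖x - y‖ ^ 2 := by positivity
    linarith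
  · rcases lt_or_ge ‖x - y‖ δ' with hxy | hxy
    · have hxB : x ∈ Metric.ball x δ' := Metric.mem_ball_self hδp
      have hyB : y ∈ Metric.ball x δ' := by
        rw [Metric.mem_ball, dist_comm, dist_eq_norm]; exact hxy
      have h2 : ‖f x - f y - fderiv ℝ f x (x - y)‖ ≤ (ε * m) * ‖x - y‖ := by
        refine (convex_ball x δ').norm_image_sub_le_of_norm_fderiv_le' (fun z _ => hdf z)
          (fun z hz => ?_) hyB hxB
        have hz' : dist z x < δ' := hz
        have : ‖z‖ ≤ ‖x‖ + dist z x := by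
          rw [dist_eq_norm]
          have := norm_add_le x (z - x)
          simpa using this
        have h5 := hδ' z (by
            simp only [Metric.mem_closedBall, dist_zero_right]
            linarith [min_le_right δ 1]) x (by
            simp only [Metric.mem_closedBall, dist_zero_right]; linarith)
            (hz'.trans_le (min_le_left _ _))
        rw [dist_eq_norm] at h5
        exact h5.le
      have h3 := (le_abs_self _).trans h2
      have h4 := (le_abs_self _).trans ((fderiv ℝ f x).le_opNorm (x - y))
      have h6 : ε * m ≤ ε * φ x :=
        mul_le_mul_of_nonneg_left (hmφ x (by simpa using hx.le)) hε.le
      have h7 := mul_le_mul_of_nonneg_right h6 hρ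
      have : 0 ≤ 2 * Mf / δ' ^ 2 * ‖x - y‖ ^ 2 := by positivity
      linarith
    · have h1 : f x - f y ≤ 2 * Mf := by
        linarith [(abs_le.1 (hfb x)).2, (abs_le.1 (hfb y)).1]
      have h2 : 2 * Mf ≤ 2 * Mf / δ' ^ 2 * ‖x - y‖ ^ 2 := by
        rw [div_mul_eq_mul_div, le_div_iff₀ (by positivity)]
        gcongr
      have : 0 ≤ ‖x - y‖ * (‖fderiv ℝ f x‖ + ε * φ x) := by
        have := hφ x
        positivity
      linarith

theorem aux_v_nonneg (d : ℕ) (Q : ℝ → Fin d → Fin d → ℝ) (b : ℝ → Euc d → Fin d → ℝ)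
    (s T lam : ℝ) (φ : Euc d → ℝ)
    (hsymm : ∀ t ∈ Icc s T, ∀ i j, Q t i j = Q t j i)
    (hpsd : ∀ t ∈ Icc s T, ∀ ξ : Euc d, 0 ≤ ∑ i, ∑ j, Q t i j * ξ i * ξ j)
    (hφ2 : ContDiff ℝ 2 φ) (hφ : ∀ x, 0 < φ x)
    (hinf : ∀ M : ℝ, ∃ R : ℝ, ∀ x : Euc d, R ≤ ‖x‖ → M ≤ φ x)
    (hlam : 0 < lam)
    (hLy : ∀ t ∈ Icc s T, ∀ x, Aop d (fun t _ => Q t) b (fun _ _ => 0) t φ x ≤ lam * φ x)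
    (g : Euc d → ℝ) (hg : ∀ x, 0 ≤ g x) (v : ℝ → Euc d → ℝ)
    (hv : IsClassicalSolution d (fun t _ => Q t) b (fun _ _ => 0) s g v)
    (hvb : ∃ M, ∀ t ∈ Icc s T, ∀ x, |v t x| ≤ M) :
    ∀ t ∈ Icc s T, ∀ x, 0 ≤ v t x := by
  obtain ⟨M, hM⟩ := hvb
  have key : ∀ η > 0, ∀ t ∈ Icc s T, ∀ x,
      - v t x - η * Real.exp ((lam + 1) * (t - s)) * φ x < 0 := by
    intro η hη
    obtain ⟨R, hR⟩ := hinf (M / η + 1)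
    refine aux_max (fun p : ℝ × Euc d =>
      - v p.1 p.2 - η * Real.exp ((lam + 1) * (p.1 - s)) * φ p.2) s T R ?_ ?_ ?_ ?_
    · have h1 : ContinuousOn (fun p : ℝ × Euc d => v p.1 p.2) (Icc s T ×ˢ univ) :=
        hv.cont.mono (prod_mono_left Icc_subset_Ici_self)
      have hc := hφ2.continuous
      exact h1.neg.sub (Continuous.continuousOn (by fun_prop))
    · intro x
      simp only [hv.init, sub_self, mul_zero, Real.exp_zero, mul_one]
      have := mul_pos hη (hφ x)
      linarith [hg x]
    · intro t ht x h0
      by_contra hcon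
      push Not at hcon
      have h1 := hR x hcon.le
      have h2 : M / η < φ x := by linarith
      rw [div_lt_iff₀ hη] at h2
      have h3 : 1 ≤ Real.exp ((lam + 1) * (t - s)) :=
        Real.one_le_exp (mul_nonneg (by linarith) (by linarith [ht.1]))
      have h4 : η * φ x * 1 ≤ η * φ x * Real.exp ((lam + 1) * (t - s)) :=
        mul_le_mul_of_nonneg_left h3 (mul_pos hη (hφ x)).le
      have h5 := (abs_le.1 (hM t ht x)).1
      simp only at h0
      nlinarith
    · intro t hst htT x _ hmax
      have ht : t ∈ Icc s T := ⟨hst.le, htT⟩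
      simp only at hmax
      set E := Real.exp ((lam + 1) * (t - s)) with hE
      have hEp : 0 < E := Real.exp_pos _
      have hvx := hv.xdiff t hst
      have hdv : Differentiable ℝ (v t) := hvx.differentiable (by norm_num)
      have hdφ : Differentiable ℝ φ := hφ2.differentiable (by norm_num)
      -- time derivative
      have htime : -(-(deriv (fun τ => v τ x) t) - η * (E * (lam + 1)) * φ x) ≤ 0 := by
        have h1 : HasDerivAt (fun τ : ℝ => t - τ) (-1) 0 := by
          simpa using (hasDerivAt_id (0:ℝ)).const_sub t
        have h2 : HasDerivAt (fun τ : ℝ => - v τ x - η * Real.exp ((lam + 1) * (τ - s)) * φ x)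
            (-(deriv (fun τ => v τ x) t) - η * (E * (lam + 1)) * φ x) (t - 0) := by
          rw [sub_zero]
          have e1 : HasDerivAt (fun τ : ℝ => (lam + 1) * (τ - s)) (lam + 1) t := by
            simpa using ((hasDerivAt_id t).sub_const s).const_mul (lam + 1)
          exact (hv.tdiff t hst x).hasDerivAt.neg.sub ((e1.exp.const_mul η).mul_const (φ x))
        have h3 := h2.comp (0:ℝ) h1
        have h4 := aux_dle h3 (r := t - s) (by linarith) (by
          intro τ h0 h1
          have := hmax (t - τ) ⟨by linarith, by linarith⟩ x
          simpa [Function.comp] using this)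
        linarith
      have hsp := fun x' => hmax t ht x'
      -- first
      have hfirst : (- (∑ i, b t x i * fderiv ℝ (v t) x (EuclideanSpace.single i 1))
          - η * E * (∑ i, b t x i * fderiv ℝ φ x (EuclideanSpace.single i 1))) = 0 := by
        have h1 := aux_line d (ψ := v t) x (WithLp.toLp 2 (b t x)) 0 (hdv _)
        have h2 := aux_line d (ψ := φ) x (WithLp.toLp 2 (b t x)) 0 (hdφ _)
        have h3 := h1.neg.sub (h2.const_mul (η * E))
        have h4 := IsLocalMax.hasDerivAt_eq_zero (Filter.Eventually.of_forall (by
          intro τ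
          have := hsp (x + τ • WithLp.toLp 2 (b t x))
          simpa using this)) h3
        simpa using h4
      have hsecond : ∑ i, ∑ j, Q t i j * (- hess d (v t) x i j - η * E * hess d φ x i j) ≤ 0 := by
        refine aux_trace d (Q t) _ (hsymm t ht) (hpsd t ht) fun ξ => ?_
        have h1 := fun τ => aux_line d (ψ := v t) x ξ τ (hdv _)
        have h2 := fun τ => aux_line d (ψ := φ) x ξ τ (hdφ _)
        have h3 := fun τ => (h1 τ).neg.sub ((h2 τ).const_mul (η * E))
        have h4 := (aux_line2 d hvx x ξ).neg.sub ((aux_line2 d hφ2 x ξ).const_mul (η * E))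
        have h5 := aux_second h3 h4 (by
          intro τ
          have := hsp (x + τ • ξ)
          simpa using this)
        refine le_trans (le_of_eq ?_) h5
        simp only [mul_sub, mul_neg, Finset.sum_sub_distrib, Finset.sum_neg_distrib, Finset.mul_sum]
        congr 1
        refine Finset.sum_congr rfl fun i _ => Finset.sum_congr rfl fun j _ => ?_
        ring
      have hs2 : -(∑ i, ∑ j, Q t i j * hess d (v t) x i j)
          - η * E * (∑ i, ∑ j, Q t i j * hess d φ x i j) ≤ 0 := by
        refine le_trans (le_of_eq ?_) hsecond
        simp only [mul_sub, mul_neg, Finset.sum_sub_distrib, Finset.sum_neg_distrib, Finset.mul_sum]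
        congr 1
        refine Finset.sum_congr rfl fun i _ => Finset.sum_congr rfl fun j _ => ?_
        ring
      have hpde := hv.pde t hst x
      have hL := hLy t ht x
      simp only [Aop, zero_mul, add_zero] at hpde hL
      rw [hpde] at htime
      have h6 : 0 < η * E := mul_pos hη hEp
      have h7 := mul_le_mul_of_nonneg_left hL h6.le
      have h8 := mul_pos h6 (hφ x)
      nlinarith
  intro t ht x
  by_contra hcon
  push Not at hcon
  have hp : 0 < Real.exp ((lam + 1) * (t - s)) * φ x := mul_pos (Real.exp_pos _) (hφ x)
  have := key (-v t x / (Real.exp ((lam + 1) * (t - s)) * φ x)) (div_pos (by linarith) hp) t ht x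
  rw [mul_assoc, div_mul_cancel₀ _ hp.ne'] at this
  linarith

theorem aux_compare (d : ℕ) (Q : ℝ → Fin d → Fin d → ℝ) (b : ℝ → Euc d → Fin d → ℝ)
    (s T lam r ε C : ℝ) (hε : 0 < ε) (hC : 0 ≤ C) (φ : Euc d → ℝ)
    (hsymm : ∀ t ∈ Icc s T, ∀ i j, Q t i j = Q t j i)
    (hpsd : ∀ t ∈ Icc s T, ∀ ξ : Euc d, 0 ≤ ∑ i, ∑ j, Q t i j * ξ i * ξ j)
    (hφ2 : ContDiff ℝ 2 φ) (hφ : ∀ x, 0 < φ x)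
    (hinf : ∀ M : ℝ, ∃ R : ℝ, ∀ x : Euc d, R ≤ ‖x‖ → M ≤ φ x)
    (hlam : 0 < lam)
    (hLy : ∀ t ∈ Icc s T, ∀ x, Aop d (fun t _ => Q t) b (fun _ _ => 0) t φ x ≤ lam * φ x)
    (hJ : ∀ t ∈ Icc s T, ∀ x y : Euc d,
      ∑ i, (x - y) i * (b t x i - b t y i) ≤ r * ‖x - y‖ ^ 2)
    (f g : Euc d → ℝ) (u v : ℝ → Euc d → ℝ)
    (hfg : ∀ x y, f x - f y ≤ ‖x - y‖ * (g x + ε * φ x) + C * ‖x - y‖ ^ 2)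
    (hu : IsClassicalSolution d (fun t _ => Q t) b (fun _ _ => 0) s f u)
    (hv : IsClassicalSolution d (fun t _ => Q t) b (fun _ _ => 0) s g v)
    (hub : ∃ M, ∀ t ∈ Icc s T, ∀ x, |u t x| ≤ M)
    (hv0 : ∀ t ∈ Icc s T, ∀ x, 0 ≤ v t x) :
    ∀ t ∈ Icc s T, ∀ x y, u t x - u t y ≤
      Real.exp (r * (t - s)) * ‖x - y‖ * (v t x + ε * Real.exp (lam * (t - s)) * φ x)
      + C * Real.exp (2 * r * (t - s)) * ‖x - y‖ ^ 2 := by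
  obtain ⟨M, hM⟩ := hub
  have key : ∀ η > 0, ∀ t ∈ Icc s T, ∀ z : Euc d × Euc d,
      u t z.1 - u t z.2 -
      Real.exp (r * (t - s)) * ‖z.1 - z.2‖ * (v t z.1 + ε * Real.exp (lam * (t - s)) * φ z.1)
      - C * Real.exp (2 * r * (t - s)) * ‖z.1 - z.2‖ ^ 2
      - η * Real.exp ((lam + 1) * (t - s)) * (φ z.1 + φ z.2) < 0 := by
    intro η hη
    obtain ⟨R, hR⟩ := hinf (2 * M / η + 1)
    refine aux_max (fun p : ℝ × Euc d × Euc d =>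
      u p.1 p.2.1 - u p.1 p.2.2 -
      Real.exp (r * (p.1 - s)) * ‖p.2.1 - p.2.2‖ *
        (v p.1 p.2.1 + ε * Real.exp (lam * (p.1 - s)) * φ p.2.1)
      - C * Real.exp (2 * r * (p.1 - s)) * ‖p.2.1 - p.2.2‖ ^ 2
      - η * Real.exp ((lam + 1) * (p.1 - s)) * (φ p.2.1 + φ p.2.2)) s T R ?_ ?_ ?_ ?_
    · have hc := hφ2.continuous
      have h1 : ContinuousOn (fun p : ℝ × Euc d × Euc d => u p.1 p.2.1) (Icc s T ×ˢ univ) :=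
        hu.cont.comp (f := fun p : ℝ × Euc d × Euc d => (p.1, p.2.1))
          (Continuous.continuousOn (by fun_prop)) (fun p hp => ⟨hp.1.1, mem_univ _⟩)
      have h2 : ContinuousOn (fun p : ℝ × Euc d × Euc d => u p.1 p.2.2) (Icc s T ×ˢ univ) :=
        hu.cont.comp (f := fun p : ℝ × Euc d × Euc d => (p.1, p.2.2))
          (Continuous.continuousOn (by fun_prop)) (fun p hp => ⟨hp.1.1, mem_univ _⟩)
      have h3 : ContinuousOn (fun p : ℝ × Euc d × Euc d => v p.1 p.2.1) (Icc s T ×ˢ univ) :=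
        hv.cont.comp (f := fun p : ℝ × Euc d × Euc d => (p.1, p.2.1))
          (Continuous.continuousOn (by fun_prop)) (fun p hp => ⟨hp.1.1, mem_univ _⟩)
      refine (((h1.sub h2).sub (ContinuousOn.mul (Continuous.continuousOn (by fun_prop))
        (h3.add (Continuous.continuousOn (by fun_prop))))).sub
        (Continuous.continuousOn (by fun_prop))).sub (Continuous.continuousOn (by fun_prop))
    · rintro ⟨x, y⟩
      simp only [hu.init, hv.init, sub_self, mul_zero, Real.exp_zero, mul_one, one_mul]
      have := mul_pos hη (add_pos (hφ x) (hφ y))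
      linarith [hfg x y]
    · rintro t ht ⟨x, y⟩ h0
      simp only at h0
      have h3 : 1 ≤ Real.exp ((lam + 1) * (t - s)) :=
        Real.one_le_exp (mul_nonneg (by linarith) (by linarith [ht.1]))
      have hxp := hφ x
      have hyp := hφ y
      have h4 : η * (φ x + φ y) * 1 ≤ η * (φ x + φ y) * Real.exp ((lam + 1) * (t - s)) :=
        mul_le_mul_of_nonneg_left h3 (by positivity)
      have h5 := (abs_le.1 (hM t ht x)).2
      have h6 := (abs_le.1 (hM t ht y)).1
      have h7 : 0 ≤ Real.exp (r * (t - s)) * ‖x - y‖ *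
        (v t x + ε * Real.exp (lam * (t - s)) * φ x) := by
        have := hv0 t ht x
        positivity
      have h8 : 0 ≤ C * Real.exp (2 * r * (t - s)) * ‖x - y‖ ^ 2 := by positivity
      have h9 : η * (φ x + φ y) ≤ 2 * M := by nlinarith
      have hφle : φ x + φ y ≤ 2 * M / η := by
        rw [le_div_iff₀ hη]; linarith
      rw [Prod.norm_def]
      refine max_le ?_ ?_
      · by_contra hcon
        push Not at hcon
        have := hR x hcon.le
        linarith
      · by_contra hcon
        push Not at hcon
        have := hR y hcon.le
        linarith
    · rintro t hst htT ⟨x, y⟩ hF hmax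
      have ht : t ∈ Icc s T := ⟨hst.le, htT⟩
      simp only at hmax hF
      have hxy : x - y ≠ 0 := by
        intro h
        have hxy : x = y := sub_eq_zero.1 h
        subst hxy
        simp only [sub_self, norm_zero, mul_zero, zero_mul] at hF
        have hxp := hφ x
        have : 0 < η * Real.exp ((lam + 1) * (t - s)) * (φ x + φ x) := by positivity
        norm_num at hF
        linarith
      have hρ : 0 < ‖x - y‖ := norm_pos_iff.2 hxy
      set E := Real.exp ((lam + 1) * (t - s)) with hE
      set E1 := Real.exp (r * (t - s)) with hE1
      set E2 := Real.exp (lam * (t - s)) with hE2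
      set E3 := Real.exp (2 * r * (t - s)) with hE3
      set ρ := ‖x - y‖ with hρdef
      have hEp : 0 < E := Real.exp_pos _
      have hE1p : 0 < E1 := Real.exp_pos _
      have hE2p : 0 < E2 := Real.exp_pos _
      have hE3p : 0 < E3 := Real.exp_pos _
      have hux := hu.xdiff t hst
      have hdu : Differentiable ℝ (u t) := hux.differentiable (by norm_num)
      have hvx := hv.xdiff t hst
      have hdv : Differentiable ℝ (v t) := hvx.differentiable (by norm_num)
      have hdφ : Differentiable ℝ φ := hφ2.differentiable (by norm_num)
      -- time derivative
      have htime : 0 ≤ deriv (fun τ => u τ x) t - deriv (fun τ => u τ y) t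
          - (E1 * r * ρ * (v t x + ε * E2 * φ x)
            + E1 * ρ * (deriv (fun τ => v τ x) t + ε * (E2 * lam) * φ x))
          - C * (E3 * (2 * r)) * ρ ^ 2 - η * (E * (lam + 1)) * (φ x + φ y) := by
        have h1 : HasDerivAt (fun τ : ℝ => t - τ) (-1) 0 := by
          simpa using (hasDerivAt_id (0:ℝ)).const_sub t
        have ee : ∀ k : ℝ, HasDerivAt (fun τ : ℝ => Real.exp (k * (τ - s)))
            (Real.exp (k * (t - s)) * k) t := by
          intro k
          have : HasDerivAt (fun τ : ℝ => k * (τ - s)) k t := by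
            simpa using ((hasDerivAt_id t).sub_const s).const_mul k
          exact this.exp
        have h2 := ((((hu.tdiff t hst x).hasDerivAt.sub (hu.tdiff t hst y).hasDerivAt).sub
          (((ee r).mul_const ρ).mul ((hv.tdiff t hst x).hasDerivAt.add
            (((ee lam).const_mul ε).mul_const (φ x))))).sub
          (((ee (2 * r)).const_mul C).mul_const (ρ ^ 2))).sub
          (((ee (lam + 1)).const_mul η).mul_const (φ x + φ y))
        rw [← sub_zero t] at h2
        have h3 := HasDerivAt.comp (0:ℝ) h2 h1
        have h4 := aux_dle h3 (r := t - s) (by linarith) (by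
          intro τ h0 h1
          have := hmax (t - τ) ⟨by linarith, by linarith⟩ (x, y)
          simpa [Function.comp] using this)
        simp only [sub_zero, Pi.add_apply, ← hE, ← hE1, ← hE2, ← hE3] at h4
        linarith
      have hsp := fun x' y' => hmax t ht (x', y')
      -- first
      have hfirst : (∑ i, b t x i * fderiv ℝ (u t) x (EuclideanSpace.single i 1))
          - (∑ i, b t y i * fderiv ℝ (u t) y (EuclideanSpace.single i 1))
          - (E1 * ((∑ i, (x - y) i * (b t x i - b t y i)) / ρ) * (v t x + ε * E2 * φ x)
            + E1 * ρ * ((∑ i, b t x i * fderiv ℝ (v t) x (EuclideanSpace.single i 1))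
              + ε * E2 * (∑ i, b t x i * fderiv ℝ φ x (EuclideanSpace.single i 1))))
          - C * E3 * (2 * ρ * ((∑ i, (x - y) i * (b t x i - b t y i)) / ρ))
          - η * E * ((∑ i, b t x i * fderiv ℝ φ x (EuclideanSpace.single i 1))
            + (∑ i, b t y i * fderiv ℝ φ y (EuclideanSpace.single i 1))) = 0 := by
        set β : Euc d := WithLp.toLp 2 (b t x) with hβ
        set γ : Euc d := WithLp.toLp 2 (b t y) with hγ
        have hu1 := aux_line d (ψ := u t) x β 0 (hdu _)
        have hu2 := aux_line d (ψ := u t) y γ 0 (hdu _)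
        have hv1 := aux_line d (ψ := v t) x β 0 (hdv _)
        have hp1 := aux_line d (ψ := φ) x β 0 (hdφ _)
        have hp2 := aux_line d (ψ := φ) y γ 0 (hdφ _)
        have hn := aux_norm d (x - y) (β - γ) hxy
        have h3 := (((hu1.sub hu2).sub ((hn.const_mul E1).mul
          (hv1.add (hp1.const_mul (ε * E2))))).sub ((hn.pow 2).const_mul (C * E3))).sub
          ((hp1.add hp2).const_mul (η * E))
        have h4 := IsLocalMax.hasDerivAt_eq_zero (Filter.Eventually.of_forall (by
          intro τ
          have := hsp (x + τ • β) (y + τ • γ)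
          have e : x + τ • β - (y + τ • γ) = x - y + τ • (β - γ) := by
            rw [smul_sub]; abel
          rw [e] at this
          simpa using this)) h3
        simpa [hβ, hγ] using h4
      have hsecond : ∑ i, ∑ j, Q t i j * (hess d (u t) x i j - hess d (u t) y i j
          - E1 * ρ * (hess d (v t) x i j + ε * E2 * hess d φ x i j)
          - η * E * (hess d φ x i j + hess d φ y i j)) ≤ 0 := by
        refine aux_trace d (Q t) _ (hsymm t ht) (hpsd t ht) fun ξ => ?_
        have hu1 := fun τ => aux_line d (ψ := u t) x ξ τ (hdu _)
        have hu2 := fun τ => aux_line d (ψ := u t) y ξ τ (hdu _)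
        have hv1 := fun τ => aux_line d (ψ := v t) x ξ τ (hdv _)
        have hp1 := fun τ => aux_line d (ψ := φ) x ξ τ (hdφ _)
        have hp2 := fun τ => aux_line d (ψ := φ) y ξ τ (hdφ _)
        have h3 := fun τ => (((hu1 τ).sub (hu2 τ)).sub (((hv1 τ).add
          ((hp1 τ).const_mul (ε * E2))).const_mul (E1 * ρ))).sub
          (((hp1 τ).add (hp2 τ)).const_mul (η * E))
        have h4 := (((aux_line2 d hux x ξ).sub (aux_line2 d hux y ξ)).sub
          (((aux_line2 d hvx x ξ).add
          ((aux_line2 d hφ2 x ξ).const_mul (ε * E2))).const_mul (E1 * ρ))).sub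
          (((aux_line2 d hφ2 x ξ).add (aux_line2 d hφ2 y ξ)).const_mul (η * E))
        have h5 := aux_second h3 h4 (by
          intro τ
          have := hsp (x + τ • ξ) (y + τ • ξ)
          have e : x + τ • ξ - (y + τ • ξ) = x - y := by abel
          rw [e] at this
          simp only [Pi.sub_apply, Pi.add_apply, zero_smul, add_zero]
          linarith)
        refine le_trans (le_of_eq ?_) h5
        simp only [Finset.mul_sum, ← Finset.sum_sub_distrib, ← Finset.sum_add_distrib]
        refine Finset.sum_congr rfl fun i _ => Finset.sum_congr rfl fun j _ => ?_
        ring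
      have hs2 : (∑ i, ∑ j, Q t i j * hess d (u t) x i j) - (∑ i, ∑ j, Q t i j * hess d (u t) y i j)
          - E1 * ρ * ((∑ i, ∑ j, Q t i j * hess d (v t) x i j)
            + ε * E2 * (∑ i, ∑ j, Q t i j * hess d φ x i j))
          - η * E * ((∑ i, ∑ j, Q t i j * hess d φ x i j)
            + (∑ i, ∑ j, Q t i j * hess d φ y i j)) ≤ 0 := by
        refine le_trans (le_of_eq ?_) hsecond
        simp only [Finset.mul_sum, ← Finset.sum_sub_distrib, ← Finset.sum_add_distrib]
        refine Finset.sum_congr rfl fun i _ => Finset.sum_congr rfl fun j _ => ?_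
        ring
      have hpu := hu.pde t hst x
      have hpu' := hu.pde t hst y
      have hpv := hv.pde t hst x
      have hL := hLy t ht x
      have hL' := hLy t ht y
      have hJ' := hJ t ht x y
      have hvn := hv0 t ht x
      have hxp := hφ x
      have hyp := hφ y
      simp only [Aop, zero_mul, add_zero] at hpu hpu' hpv hL hL'
      rw [hpu, hpu', hpv] at htime
      clear hpu hpu' hpv hsecond hmax hsp hF
      set σ := (∑ i, (x - y) i * (b t x i - b t y i)) / ρ with hσ
      have hσ' : σ ≤ r * ρ := by
        rw [hσ, div_le_iff₀ hρ]; linarith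
      have g1 : 0 ≤ E1 * (v t x + ε * E2 * φ x) * (r * ρ - σ) :=
        mul_nonneg (by positivity) (by linarith)
      have g2 : 0 ≤ C * E3 * 2 * ρ * (r * ρ - σ) :=
        mul_nonneg (by positivity) (by linarith)
      have g3 := mul_le_mul_of_nonneg_left hL (show 0 ≤ E1 * ρ * ε * E2 by positivity)
      have g4 := mul_le_mul_of_nonneg_left (add_le_add hL hL') (show 0 ≤ η * E by positivity)
      have g5 : 0 < η * E * (φ x + φ y) := by positivity
      linarith
  intro t ht x y
  refine le_of_forall_pos_lt_add fun κ hκ => ?_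
  have hp : 0 < Real.exp ((lam + 1) * (t - s)) * (φ x + φ y) :=
    mul_pos (Real.exp_pos _) (add_pos (hφ x) (hφ y))
  have := key (κ / (Real.exp ((lam + 1) * (t - s)) * (φ x + φ y))) (div_pos hκ hp) t ht (x, y)
  simp only at this
  rw [mul_assoc (κ / _), div_mul_cancel₀ _ hp.ne'] at this
  linarith

theorem aux_final (d : ℕ) (w : Euc d → ℝ) (x : Euc d) (hw : DifferentiableAt ℝ w x) (B C : ℝ)
    (hB : 0 ≤ B) (h : ∀ y, w x - w y ≤ B * ‖x - y‖ + C * ‖x - y‖ ^ 2) :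
    ‖fderiv ℝ w x‖ ≤ B := by
  have hdir : ∀ ξ : Euc d, - fderiv ℝ w x ξ ≤ B * ‖ξ‖ := by
    intro ξ
    have h1 := aux_line d x ξ 0 (ψ := w) (by simpa using hw)
    rw [← aux_lin] at h1
    simp only [zero_smul, add_zero] at h1
    have h2 : HasDerivAt (fun τ : ℝ => B * ‖ξ‖ * τ) (B * ‖ξ‖) 0 := by
      simpa using (hasDerivAt_id (0:ℝ)).const_mul (B * ‖ξ‖)
    have h3 : HasDerivAt (fun τ : ℝ => C * ‖ξ‖ ^ 2 * τ ^ 2) 0 0 := by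
      simpa using ((hasDerivAt_id (0:ℝ)).pow 2).const_mul (C * ‖ξ‖ ^ 2)
    have h4 := aux_dle ((h1.neg.sub h2).sub h3) one_pos (by
      intro τ hτ _
      have := h (x + τ • ξ)
      have e : ‖x - (x + τ • ξ)‖ = τ * ‖ξ‖ := by
        rw [sub_add_cancel_left, norm_neg, norm_smul, Real.norm_of_nonneg hτ.le]
      rw [e] at this
      simp only [Pi.sub_apply, Pi.neg_apply, zero_smul, add_zero]
      nlinarith)
    linarith
  refine ContinuousLinearMap.opNorm_le_bound _ hB fun ξ => ?_
  rw [Real.norm_eq_abs, abs_le]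
  have h1 := hdir ξ
  have h2 := hdir (-ξ)
  rw [map_neg, norm_neg] at h2
  constructor <;> linarith

/-- with `Q = Q(t)`, `c ≡ 0` and `rhat₀ = sup r₀ < ∞`, the first-order pointwise
gradient estimate `|∇_x u(t,x)| ≤ e^{rhat₀(t−s)} v(t,x)` holds, `v` being the solution with
datum `|∇f|`. -/
theorem gradient_estimate_p_one
    (d : ℕ) (hd : 1 ≤ d) (I : Set ℝ)
    (hI : ∀ ⦃t t' : ℝ⦄, t ∈ I → t ≤ t' → t' ∈ I)
    (Q : ℝ → Fin d → Fin d → ℝ) (b : ℝ → Euc d → Fin d → ℝ)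
    (α : ℝ) (hα : α ∈ Ioo (0:ℝ) 1)
    (hQhold : ∀ i j, LocHolderParab d α I (fun t _ => Q t i j))
    (hbhold : ∀ j, LocHolderParab d α I (fun t x => b t x j))
    (hsymm : ∀ t ∈ I, ∀ i j, Q t i j = Q t j i)
    (ν₀ : ℝ) (hν₀ : 0 < ν₀) (hell : ∀ t ∈ I, ν₀ ≤ minEig d (Q t))
    -- Lyapunov condition (with c ≡ 0)
    (hLyap : ∃ φ : Euc d → ℝ, ContDiff ℝ 2 φ ∧ (∀ x, 0 < φ x) ∧
      (∀ M : ℝ, ∃ R : ℝ, ∀ x : Euc d, R ≤ ‖x‖ → M ≤ φ x) ∧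
      (∀ a b' : ℝ, Icc a b' ⊆ I → ∃ lam > 0, ∀ t ∈ Icc a b', ∀ x : Euc d,
        Aop d (fun t _ => Q t) b (fun _ _ => 0) t φ x ≤ lam * φ x))
    -- smoothness and growth hypotheses on the drift
    (hbdiff : ∀ t ∈ I, ∀ (x : Euc d) (j : Fin d),
      DifferentiableAt ℝ (fun y => b t y j) x)
    (hgradHold : ∃ α' ∈ Ioo (0:ℝ) 1, ∀ j k, LocHolderParab d α' I
      (fun t x => fderiv ℝ (fun y => b t y j) x (EuclideanSpace.single k 1)))
    (C₁ C₂ : ℝ → ℝ) (hC₁ : LocBddOn I C₁) (hC₂ : LocBddOn I C₂)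
    (hgrowthQ : ∀ t ∈ I, ∀ x : Euc d,
      Real.sqrt (∑ i, (∑ j, Q t i j * x j) ^ 2) + (∑ i, Q t i i) ≤
        C₁ t * (1 + ‖x‖ ^ 2) * minEig d (Q t))
    (hgrowthb : ∀ t ∈ I, ∀ x : Euc d,
      (∑ i, b t x i * x i) ≤ C₂ t * (1 + ‖x‖ ^ 2) * minEig d (Q t))
    (r₀ : ℝ → Euc d → ℝ)
    (hJac : ∀ t ∈ I, ∀ (x : Euc d) (ξ : Euc d),
      (∑ i, ∑ j, fderiv ℝ (fun y => b t y i) x (EuclideanSpace.single j 1) * ξ i * ξ j) ≤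
        r₀ t x * ‖ξ‖ ^ 2)
    -- rhat₀ := sup r₀ < +∞
    (rhat₀ : ℝ) (hrhat₀ : ∀ t ∈ I, ∀ x : Euc d, r₀ t x ≤ rhat₀)
    -- data and solutions
    (s : ℝ) (hs : s ∈ I)
    (f : Euc d → ℝ) (hf : ContDiff ℝ 1 f)
    (hfb : ∃ Mf, ∀ x, |f x| ≤ Mf) (hfg : ∃ Mf, ∀ x, ‖fderiv ℝ f x‖ ≤ Mf)
    (u v : ℝ → Euc d → ℝ)
    (hu : IsClassicalSolution d (fun t _ => Q t) b (fun _ _ => 0) s f u)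
    (hub : BoundedOnStrips d s u)
    (hv : IsClassicalSolution d (fun t _ => Q t) b (fun _ _ => 0) s
      (fun x => ‖fderiv ℝ f x‖) v)
    (hvb : BoundedOnStrips d s v) :
    ∀ t, s < t → ∀ x : Euc d,
      ‖fderiv ℝ (u t) x‖ ≤ Real.exp (rhat₀ * (t - s)) * v t x := by
  intro t hst x
  obtain ⟨φ, hφ2, hφ, hinf, hLy⟩ := hLyap
  have hsub : Icc s t ⊆ I := fun τ hτ => hI hs hτ.1
  obtain ⟨lam, hlam, hLy⟩ := hLy s t hsub
  obtain ⟨Mf, hMf⟩ := hfb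
  obtain ⟨Mg, hMg⟩ := hfg
  have hsy : ∀ τ ∈ Icc s t, ∀ i j, Q τ i j = Q τ j i := fun τ hτ => hsymm τ (hsub hτ)
  have hpsd : ∀ τ ∈ Icc s t, ∀ ξ : Euc d, 0 ≤ ∑ i, ∑ j, Q τ i j * ξ i * ξ j :=
    fun τ hτ => aux_psd d (Q τ) ν₀ hν₀ (hell τ (hsub hτ))
  have hv0 := aux_v_nonneg d Q b s t lam φ hsy hpsd hφ2 hφ hinf hlam hLy _
    (fun x => norm_nonneg _) v hv (hvb t hst)
  have hJ : ∀ τ ∈ Icc s t, ∀ x y : Euc d,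
      ∑ i, (x - y) i * (b τ x i - b τ y i) ≤ rhat₀ * ‖x - y‖ ^ 2 := fun τ hτ =>
    aux_jac d (b τ) rhat₀ (hbdiff τ (hsub hτ)) (fun z ξ => (hJac τ (hsub hτ) z ξ).trans
      (mul_le_mul_of_nonneg_right (hrhat₀ τ (hsub hτ) z) (by positivity)))
  have htt : t ∈ Icc s t := ⟨hst.le, le_rfl⟩
  have hvx := hv0 t htt x
  have hxp := hφ x
  have key : ∀ ε > 0, ‖fderiv ℝ (u t) x‖ ≤
      Real.exp (rhat₀ * (t - s)) * (v t x + ε * Real.exp (lam * (t - s)) * φ x) := by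
    intro ε hε
    obtain ⟨C, hC, hin⟩ := aux_init d f φ hf Mf Mg hMf hMg hφ2.continuous hφ hinf ε hε
    have hcmp := aux_compare d Q b s t lam rhat₀ ε C hε hC φ hsy hpsd hφ2 hφ hinf hlam hLy hJ f _
      u v hin hu hv (hub t hst) hv0 t htt x
    refine aux_final d (u t) x ((hu.xdiff t hst).differentiable (by norm_num) x) _
      (C * Real.exp (2 * rhat₀ * (t - s))) (by positivity) fun y => ?_
    linarith [hcmp y]
  refine le_of_forall_pos_le_add fun κ hκ => ?_
  have hp : 0 < Real.exp (rhat₀ * (t - s)) * (Real.exp (lam * (t - s)) * φ x) := by positivity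
  have h1 := key (κ / (Real.exp (rhat₀ * (t - s)) * (Real.exp (lam * (t - s)) * φ x)))
    (div_pos hκ hp)
  refine h1.trans (le_of_eq ?_)
  field_simp
end
end

section
/- Assume in addition that the growth functions C₁, C₂ in the Bernstein hypotheses are constants, and that for every bounded interval J ⊂ I there exist a function φ_J ∈ C²(ℝ^d) with φ_J(x) → +∞ as |x| → +∞ and a constant M_J > 0 such that Tr(Q D²φ_J) + ⟨b,∇φ_J⟩ + cφ_J ≤ M_J on J×ℝ^d. Then for every p ∈ (1,+∞) there exist constants a_p > 0 and ω_p ≥ 0 such that for every s ∈ I, every f ∈ C_b(ℝ^d), every classical solution u bounded on strips with datum f, and every classical solution v bounded on strips with datum |f|^p, one has |∇_x u(t,x)|^p ≤ a_p·max{1,(t−s)^{−p/2}}·e^{ω_p(t−s)}·v(t,x) for all t > s and x ∈ ℝ^d. -/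
open Set Filter MeasureTheory

noncomputable section

def dd (d : ℕ) (g : Euc d → ℝ) (i : Fin d) (x : Euc d) : ℝ :=
  fderiv ℝ g x (EuclideanSpace.single i 1)

def A0 (d : ℕ) (q : Fin d → Fin d → ℝ) (β : Fin d → ℝ) (g : Euc d → ℝ) (x : Euc d) : ℝ :=
  (∑ i, ∑ j, q i j * hess d g x i j) + ∑ i, β i * dd d g i x

def Gam (d : ℕ) (q : Fin d → Fin d → ℝ) (a b : Fin d → ℝ) : ℝ :=
  ∑ i, ∑ j, q i j * a i * b j

theorem hess_eq (d : ℕ) (g : Euc d → ℝ) (x : Euc d) (i j : Fin d) :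
    hess d g x i j = dd d (dd d g j) i x := rfl

theorem c2_diff {d : ℕ} {g : Euc d → ℝ} (hg : ContDiff ℝ 2 g) : Differentiable ℝ g :=
  hg.differentiable (by norm_num)

theorem c2_dd {d : ℕ} {g : Euc d → ℝ} (hg : ContDiff ℝ 2 g) (j : Fin d) :
    Differentiable ℝ (dd d g j) := by
  have h1 : ContDiff ℝ 1 (fderiv ℝ g) := hg.fderiv_right (by norm_num)
  have h2 : Differentiable ℝ (fderiv ℝ g) := h1.differentiable (by norm_num)
  intro x
  exact (h2 x).clm_apply (differentiableAt_const _)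

theorem dd_add {d : ℕ} {f g : Euc d → ℝ} (hf : Differentiable ℝ f) (hg : Differentiable ℝ g)
    (i : Fin d) : dd d (fun x => f x + g x) i = fun x => dd d f i x + dd d g i x := by
  funext x
  unfold dd
  rw [fderiv_fun_add (hf x) (hg x)]; rfl

theorem dd_cmul {d : ℕ} {f : Euc d → ℝ} (hf : Differentiable ℝ f) (a : ℝ)
    (i : Fin d) : dd d (fun x => a * f x) i = fun x => a * dd d f i x := by
  funext x
  unfold dd
  rw [fderiv_const_mul (hf x)]; rfl

theorem dd_mul {d : ℕ} {f g : Euc d → ℝ} (hf : Differentiable ℝ f) (hg : Differentiable ℝ g)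
    (i : Fin d) : dd d (fun x => f x * g x) i = fun x => f x * dd d g i x + g x * dd d f i x := by
  funext x
  unfold dd
  rw [fderiv_fun_mul (hf x) (hg x)]; rfl

theorem dd_sum {d : ℕ} {f : Fin d → Euc d → ℝ} (hf : ∀ k, Differentiable ℝ (f k))
    (i : Fin d) : dd d (fun x => ∑ k, f k x) i = fun x => ∑ k, dd d (f k) i x := by
  funext x
  unfold dd
  rw [fderiv_fun_sum (fun k _ => hf k x)]
  simp

theorem dd_comp {d : ℕ} {f : Euc d → ℝ} (hf : Differentiable ℝ f) {Φ Φ' : ℝ → ℝ}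
    (hΦ : ∀ x, HasDerivAt Φ (Φ' (f x)) (f x))
    (i : Fin d) : dd d (fun x => Φ (f x)) i = fun x => Φ' (f x) * dd d f i x := by
  funext x
  unfold dd
  have := (hΦ x).comp_hasFDerivAt x (hf x).hasFDerivAt
  have h2 : fderiv ℝ (fun x => Φ (f x)) x = Φ' (f x) • fderiv ℝ f x := this.fderiv
  rw [h2]; rfl

theorem dd_shift {d : ℕ} (f : Euc d → ℝ) (v : Euc d)
    (i : Fin d) : dd d (fun x => f (x + v)) i = fun x => dd d f i (x + v) := by
  funext x
  unfold dd
  rw [fderiv_comp_add_right]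

theorem hess_add {d : ℕ} {f g : Euc d → ℝ} (hf : ContDiff ℝ 2 f) (hg : ContDiff ℝ 2 g)
    (x : Euc d) (i j : Fin d) :
    hess d (fun x => f x + g x) x i j = hess d f x i j + hess d g x i j := by
  rw [hess_eq, dd_add (c2_diff hf) (c2_diff hg), dd_add (c2_dd hf j) (c2_dd hg j)]; rfl

theorem hess_cmul {d : ℕ} {f : Euc d → ℝ} (hf : ContDiff ℝ 2 f) (a : ℝ)
    (x : Euc d) (i j : Fin d) :
    hess d (fun x => a * f x) x i j = a * hess d f x i j := by
  rw [hess_eq, dd_cmul (c2_diff hf), dd_cmul (c2_dd hf j)]; rfl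

theorem hess_mul {d : ℕ} {f g : Euc d → ℝ} (hf : ContDiff ℝ 2 f) (hg : ContDiff ℝ 2 g)
    (x : Euc d) (i j : Fin d) :
    hess d (fun x => f x * g x) x i j = f x * hess d g x i j + g x * hess d f x i j
      + dd d f i x * dd d g j x + dd d g i x * dd d f j x := by
  rw [hess_eq, dd_mul (c2_diff hf) (c2_diff hg),
    dd_add ((c2_diff hf).fun_mul (c2_dd hg j)) ((c2_diff hg).fun_mul (c2_dd hf j)),
    dd_mul (c2_diff hf) (c2_dd hg j), dd_mul (c2_diff hg) (c2_dd hf j), hess_eq, hess_eq]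
  ring

theorem hess_sum {d : ℕ} {f : Fin d → Euc d → ℝ} (hf : ∀ k, ContDiff ℝ 2 (f k))
    (x : Euc d) (i j : Fin d) :
    hess d (fun x => ∑ k, f k x) x i j = ∑ k, hess d (f k) x i j := by
  rw [hess_eq, dd_sum (fun k => c2_diff (hf k)), dd_sum (fun k => c2_dd (hf k) j)]; rfl

theorem hess_comp {d : ℕ} {f : Euc d → ℝ} (hf : ContDiff ℝ 2 f) {Φ Φ' Φ'' : ℝ → ℝ}
    (hΦ : ∀ x, HasDerivAt Φ (Φ' (f x)) (f x)) (hΦ' : ∀ x, HasDerivAt Φ' (Φ'' (f x)) (f x))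
    (x : Euc d) (i j : Fin d) :
    hess d (fun x => Φ (f x)) x i j
      = Φ' (f x) * hess d f x i j + Φ'' (f x) * dd d f i x * dd d f j x := by
  have hD : Differentiable ℝ (fun x => Φ' (f x)) := fun x =>
    ((hΦ' x).comp_hasFDerivAt x (c2_diff hf x).hasFDerivAt).differentiableAt
  rw [hess_eq, dd_comp (c2_diff hf) hΦ, dd_mul hD (c2_dd hf j), dd_comp (c2_diff hf) hΦ', hess_eq]
  ring

theorem hess_shift {d : ℕ} (f : Euc d → ℝ) (v : Euc d) (x : Euc d)
    (i j : Fin d) : hess d (fun x => f (x + v)) x i j = hess d f (x + v) i j := by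
  rw [hess_eq, dd_shift, dd_shift]; rfl

theorem A0_add {d : ℕ} (q : Fin d → Fin d → ℝ) (β : Fin d → ℝ)
    {f g : Euc d → ℝ} (hf : ContDiff ℝ 2 f) (hg : ContDiff ℝ 2 g) (x : Euc d) :
    A0 d q β (fun x => f x + g x) x = A0 d q β f x + A0 d q β g x := by
  unfold A0
  simp only [hess_add hf hg, dd_add (c2_diff hf) (c2_diff hg), mul_add, Finset.sum_add_distrib]
  ring

theorem A0_cmul {d : ℕ} (q : Fin d → Fin d → ℝ) (β : Fin d → ℝ)
    {f : Euc d → ℝ} (hf : ContDiff ℝ 2 f) (a : ℝ) (x : Euc d) :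
    A0 d q β (fun x => a * f x) x = a * A0 d q β f x := by
  unfold A0
  simp only [hess_cmul hf, dd_cmul (c2_diff hf), mul_add, Finset.mul_sum]
  congr 1
  · refine Finset.sum_congr rfl fun i _ => Finset.sum_congr rfl fun j _ => by ring
  · refine Finset.sum_congr rfl fun i _ => by ring

theorem Gam_symm {d : ℕ} (q : Fin d → Fin d → ℝ) (hq : ∀ i j, q i j = q j i) (a b : Fin d → ℝ) :
    Gam d q a b = Gam d q b a := by
  unfold Gam
  rw [Finset.sum_comm]
  refine Finset.sum_congr rfl fun i _ => Finset.sum_congr rfl fun j _ => by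
    rw [hq i j]; ring

theorem A0_mul {d : ℕ} (q : Fin d → Fin d → ℝ) (hq : ∀ i j, q i j = q j i) (β : Fin d → ℝ)
    {f g : Euc d → ℝ} (hf : ContDiff ℝ 2 f) (hg : ContDiff ℝ 2 g) (x : Euc d) :
    A0 d q β (fun x => f x * g x) x = f x * A0 d q β g x + g x * A0 d q β f x
      + 2 * Gam d q (fun i => dd d f i x) (fun i => dd d g i x) := by
  have h2 : 2 * Gam d q (fun i => dd d f i x) (fun i => dd d g i x) =
      Gam d q (fun i => dd d f i x) (fun i => dd d g i x)
      + Gam d q (fun i => dd d g i x) (fun i => dd d f i x) := by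
    rw [Gam_symm q hq (fun i => dd d g i x)]; ring
  rw [h2]
  unfold A0 Gam
  simp only [hess_mul hf hg, dd_mul (c2_diff hf) (c2_diff hg), mul_add, Finset.mul_sum,
    Finset.sum_add_distrib]
  have e1 : ∀ i j, q i j * (f x * hess d g x i j) = f x * (q i j * hess d g x i j) := by
    intros; ring
  have e2 : ∀ i j, q i j * (g x * hess d f x i j) = g x * (q i j * hess d f x i j) := by
    intros; ring
  have e3 : ∀ i, β i * (f x * dd d g i x) = f x * (β i * dd d g i x) := by
    intros; ring
  have e4 : ∀ i, β i * (g x * dd d f i x) = g x * (β i * dd d f i x) := by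
    intros; ring
  simp only [e1, e2, e3, e4, mul_assoc]
  ring

theorem A0_sum {d : ℕ} (q : Fin d → Fin d → ℝ) (β : Fin d → ℝ)
    {f : Fin d → Euc d → ℝ} (hf : ∀ k, ContDiff ℝ 2 (f k)) (x : Euc d) :
    A0 d q β (fun x => ∑ k, f k x) x = ∑ k, A0 d q β (f k) x := by
  unfold A0
  simp only [hess_sum hf, dd_sum (fun k => c2_diff (hf k)), Finset.mul_sum,
    Finset.sum_add_distrib]
  congr 1
  · calc ∑ i, ∑ j, ∑ k, q i j * hess d (f k) x i j = ∑ i, ∑ k, ∑ j, q i j * hess d (f k) x i j :=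
          Finset.sum_congr rfl fun i _ => Finset.sum_comm
      _ = _ := Finset.sum_comm
  · rw [Finset.sum_comm]

theorem A0_comp {d : ℕ} (q : Fin d → Fin d → ℝ) (β : Fin d → ℝ)
    {f : Euc d → ℝ} (hf : ContDiff ℝ 2 f) {Φ Φ' Φ'' : ℝ → ℝ}
    (hΦ : ∀ x, HasDerivAt Φ (Φ' (f x)) (f x)) (hΦ' : ∀ x, HasDerivAt Φ' (Φ'' (f x)) (f x))
    (x : Euc d) :
    A0 d q β (fun x => Φ (f x)) x
      = Φ' (f x) * A0 d q β f x + Φ'' (f x) * Gam d q (fun i => dd d f i x) (fun i => dd d f i x) := by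
  unfold A0 Gam
  simp only [hess_comp hf hΦ hΦ', dd_comp (c2_diff hf) hΦ, mul_add, Finset.mul_sum,
    Finset.sum_add_distrib]
  rw [add_right_comm]
  congr 1
  · congr 1
    · refine Finset.sum_congr rfl fun i _ => Finset.sum_congr rfl fun j _ => by ring
    · refine Finset.sum_congr rfl fun i _ => by ring
  · refine Finset.sum_congr rfl fun i _ => Finset.sum_congr rfl fun j _ => by ring

/-- trace inequality -/
theorem trace_psd {d : ℕ} (q H : Fin d → Fin d → ℝ) (hq : ∀ i j, q i j = q j i)
    (hpsd : ∀ ξ : Fin d → ℝ, 0 ≤ Gam d q ξ ξ)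
    (hH : ∀ ξ : Fin d → ℝ, 0 ≤ Gam d H ξ ξ) : 0 ≤ ∑ i, ∑ j, q i j * H i j := by
  have hP : (Matrix.of q).PosSemidef := by
    refine Matrix.PosSemidef.of_dotProduct_mulVec_nonneg ?_ ?_
    · ext i j
      simp [Matrix.conjTranspose_apply, hq i j]
    · intro x
      have := hpsd x
      unfold Gam at this
      simp only [dotProduct, Matrix.mulVec, Matrix.of_apply, star_trivial, Finset.mul_sum]
      refine this.trans (le_of_eq ?_)
      refine Finset.sum_congr rfl fun i _ => Finset.sum_congr rfl fun j _ => by ring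
  obtain ⟨m, B, hB⟩ := Matrix.posSemidef_iff_eq_sum_vecMulVec.mp hP
  have hqe : ∀ i j, q i j = ∑ m, B m i * B m j := by
    intro i j
    have := congrFun (congrFun hB i) j
    simpa [Matrix.sum_apply, Matrix.vecMulVec_apply] using this
  have : ∑ i, ∑ j, q i j * H i j = ∑ m, Gam d H (B m) (B m) := by
    unfold Gam
    simp only [hqe, Finset.sum_mul]
    calc ∑ i, ∑ j, ∑ m, B m i * B m j * H i j = ∑ i, ∑ m, ∑ j, B m i * B m j * H i j := by
          refine Finset.sum_congr rfl fun i _ => Finset.sum_comm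
      _ = ∑ m, ∑ i, ∑ j, B m i * B m j * H i j := Finset.sum_comm
      _ = _ := by
          refine Finset.sum_congr rfl fun m _ => Finset.sum_congr rfl fun i _ =>
            Finset.sum_congr rfl fun j _ => by ring
  rw [this]
  exact Finset.sum_nonneg fun m _ => hH _

theorem fderiv_apply_sum {d : ℕ} (l : Euc d →L[ℝ] ℝ) (ξ : Euc d) :
    l ξ = ∑ i, ξ i * l (EuclideanSpace.single i 1) := by
  have h : ξ = ∑ i, ξ i • (EuclideanSpace.single i (1:ℝ) : Euc d) := by
    ext j
    simp [Finset.sum_apply, Pi.single_apply]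
  conv_lhs => rw [h]
  rw [map_sum]
  simp

theorem localMin_test {d : ℕ} {g : Euc d → ℝ} (hg : ContDiff ℝ 2 g) {x : Euc d}
    (hmin : IsLocalMin g x) (q : Fin d → Fin d → ℝ) (β : Fin d → ℝ)
    (hq : ∀ i j, q i j = q j i) (hpsd : ∀ ξ : Fin d → ℝ, 0 ≤ Gam d q ξ ξ) :
    (∀ i, dd d g i x = 0) ∧ 0 ≤ A0 d q β g x := by
  have h0 : fderiv ℝ g x = 0 := hmin.fderiv_eq_zero
  have h1 : ∀ i, dd d g i x = 0 := fun i => by unfold dd; rw [h0]; rfl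
  refine ⟨h1, ?_⟩
  unfold A0
  simp only [h1, mul_zero, Finset.sum_const_zero, add_zero]
  refine trace_psd q _ hq hpsd ?_
  intro ξ'
  set ξ : Euc d := WithLp.toLp 2 ξ' with hξ
  have hξi : ∀ i, ξ i = ξ' i := fun i => rfl
  -- one dimensional function
  set φ : ℝ → ℝ := fun σ => g (x + σ • ξ) with hφ
  have hline : ∀ σ : ℝ, HasDerivAt (fun σ : ℝ => x + σ • ξ) ξ σ := by
    intro σ
    simpa using ((hasDerivAt_id σ).smul_const ξ).const_add x
  have hφ' : ∀ σ, HasDerivAt φ (∑ i, ξ' i * dd d g i (x + σ • ξ)) σ := by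
    intro σ
    have := (c2_diff hg (x + σ • ξ)).hasFDerivAt.comp_hasDerivAt σ (hline σ)
    rw [fderiv_apply_sum] at this
    exact this
  have hder : deriv φ = fun σ => ∑ i, ξ' i * dd d g i (x + σ • ξ) := by
    funext σ; exact (hφ' σ).deriv
  have hφ'' : HasDerivAt (deriv φ) (Gam d (fun i j => hess d g x i j) ξ' ξ') 0 := by
    rw [hder]
    have h3 : ∀ j, HasDerivAt (fun σ : ℝ => ξ' j * dd d g j (x + σ • ξ))
        (ξ' j * ∑ i, ξ' i * hess d g x i j) 0 := by
      intro j
      have := (c2_dd hg j (x + (0:ℝ) • ξ)).hasFDerivAt.comp_hasDerivAt 0 (hline 0)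
      rw [fderiv_apply_sum, zero_smul, add_zero] at this
      exact this.const_mul (ξ' j)
    have h4 := HasDerivAt.fun_sum (u := Finset.univ) (fun j _ => h3 j)
    refine h4.congr_deriv ?_
    symm
    unfold Gam
    rw [Finset.sum_comm]
    refine Finset.sum_congr rfl fun j _ => ?_
    rw [Finset.mul_sum]
    refine Finset.sum_congr rfl fun i _ => by ring
  by_contra hneg
  push Not at hneg
  have hd0 : deriv φ 0 = 0 := by
    rw [hder]
    simp [h1]
  have hmax : IsLocalMax φ 0 := by
    have hn : IsLocalMin (fun σ => -φ σ) 0 := by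
      refine isLocalMin_of_deriv_deriv_pos ?_ ?_ ?_
      · have : deriv (fun σ => -φ σ) = fun σ => - deriv φ σ := by
          funext σ; exact deriv.fun_neg
        rw [this, (hφ''.fun_neg).deriv]
        linarith
      · rw [deriv.fun_neg, hd0, neg_zero]
      · exact (hφ' 0).continuousAt.neg
    simpa using hn.neg
  have hmin' : IsLocalMin φ 0 := by
    have hc : ContinuousAt (fun σ : ℝ => x + σ • ξ) 0 := (hline 0).continuousAt
    have : Tendsto (fun σ : ℝ => x + σ • ξ) (nhds 0) (nhds x) := by
      have := hc.tendsto
      simpa using this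
    have h5 := this.eventually hmin
    refine h5.mono fun σ hσ => ?_
    simp only [hφ, zero_smul, add_zero]
    exact hσ
  have hconst : φ =ᶠ[nhds 0] fun _ => φ 0 := by
    filter_upwards [hmax, hmin'] with σ a b
    exact le_antisymm a b
  have hdc : deriv φ =ᶠ[nhds 0] fun _ => 0 := by
    have := hconst.deriv
    simpa using this
  have : deriv (deriv φ) 0 = 0 := by
    rw [hdc.deriv_eq]; simp
  rw [hφ''.deriv] at this
  linarith
theorem left_deriv_nonpos {f : ℝ → ℝ} {f' a t : ℝ} (hat : a < t) (hf : HasDerivAt f f' t)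
    (h : ∀ τ ∈ Icc a t, f t ≤ f τ) : f' ≤ 0 := by
  have h1 : Tendsto (slope f t) (nhdsWithin t (Iio t)) (nhds f') :=
    (hasDerivAt_iff_tendsto_slope.mp hf).mono_left
      (nhdsWithin_mono _ (fun y hy => ne_of_lt hy))
  refine le_of_tendsto h1 ?_
  have : Ioo a t ∈ nhdsWithin t (Iio t) := Ioo_mem_nhdsLT hat
  filter_upwards [this] with τ hτ
  rw [slope_def_field]
  exact div_nonpos_of_nonneg_of_nonpos (by linarith [h τ ⟨hτ.1.le, hτ.2.le⟩]) (by linarith [hτ.2])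

theorem linear_mp {d : ℕ} (Q : ℝ → Euc d → Fin d → Fin d → ℝ) (b : ℝ → Euc d → Fin d → ℝ)
    (c : ℝ → Euc d → ℝ) (s T c₀ : ℝ) (V Vt : ℝ → Euc d → ℝ)
    (hVc : ContinuousOn (fun p : ℝ × Euc d => V p.1 p.2) (Icc s T ×ˢ univ))
    (hV2 : ∀ t ∈ Ioc s T, ContDiff ℝ 2 (V t))
    (hVt : ∀ t ∈ Ioc s T, ∀ x, HasDerivAt (fun τ => V τ x) (Vt t x) t)
    (hLV : ∀ t ∈ Ioc s T, ∀ x, c t x * V t x ≤ Vt t x - A0 d (Q t x) (b t x) (V t) x)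
    (hsym : ∀ t ∈ Ioc s T, ∀ x, ∀ i j, Q t x i j = Q t x j i)
    (hpsd : ∀ t ∈ Ioc s T, ∀ x, ∀ ξ : Fin d → ℝ, 0 ≤ Gam d (Q t x) ξ ξ)
    (hc : ∀ t ∈ Ioc s T, ∀ x, c t x ≤ c₀)
    (hinit : ∀ x, 0 ≤ V s x)
    (ρ : ℝ) (hfar : ∀ t ∈ Icc s T, ∀ x : Euc d, ρ ≤ ‖x‖ → 0 ≤ V t x) :
    ∀ t ∈ Icc s T, ∀ x, 0 ≤ V t x := by
  intro t1 ht1 x1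
  by_contra hbad
  push Not at hbad
  set lam := c₀ + 1 with hlam
  set F : ℝ × Euc d → ℝ := fun p => Real.exp (-lam * p.1) * V p.1 p.2 with hF
  have hFc : ContinuousOn F (Icc s T ×ˢ univ) := by
    refine ContinuousOn.mul ?_ hVc
    fun_prop
  have hK : IsCompact (Icc s T ×ˢ Metric.closedBall (0 : Euc d) ρ) :=
    isCompact_Icc.prod (isCompact_closedBall _ _)
  have hx1 : ‖x1‖ < ρ := by
    by_contra h
    push Not at h
    linarith [hfar t1 ht1 x1 h]
  have hmem : (t1, x1) ∈ Icc s T ×ˢ Metric.closedBall (0 : Euc d) ρ := by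
    refine ⟨ht1, ?_⟩
    simpa using hx1.le
  obtain ⟨⟨t0, x0⟩, ⟨ht0, hx0⟩, hmin⟩ := hK.exists_isMinOn ⟨_, hmem⟩
    (hFc.mono (prod_mono le_rfl (subset_univ _)))
  have hneg : F (t0, x0) < 0 := lt_of_le_of_lt (hmin hmem)
    (mul_neg_of_pos_of_neg (Real.exp_pos _) hbad)
  have hV0 : V t0 x0 < 0 := by
    by_contra h
    push Not at h
    have : 0 ≤ F (t0, x0) := mul_nonneg (Real.exp_pos _).le h
    linarith
  have hglob : ∀ t ∈ Icc s T, ∀ x, F (t0, x0) ≤ F (t, x) := by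
    intro t ht x
    by_cases hx : ‖x‖ ≤ ρ
    · exact hmin (⟨ht, by simpa using hx⟩ : (t, x) ∈ Icc s T ×ˢ Metric.closedBall (0 : Euc d) ρ)
    · push Not at hx
      exact hneg.le.trans (mul_nonneg (Real.exp_pos _).le (hfar t ht x hx.le))
  simp only at ht0
  have ht0s : s < t0 := by
    rcases lt_or_eq_of_le ht0.1 with h | h
    · exact h
    · rw [← h] at hV0
      linarith [hinit x0]
  have ht0' : t0 ∈ Ioc s T := ⟨ht0s, ht0.2⟩
  have hspace : IsLocalMin (V t0) x0 := by
    refine Filter.Eventually.of_forall fun x => ?_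
    have := hglob t0 ht0 x
    simp only [hF] at this
    exact le_of_mul_le_mul_left this (Real.exp_pos _)
  obtain ⟨_, hA⟩ := localMin_test (hV2 t0 ht0') hspace (Q t0 x0) (b t0 x0) (hsym t0 ht0' x0)
    (hpsd t0 ht0' x0)
  have htime := left_deriv_nonpos (f := fun τ => F (τ, x0))
    (f' := (Real.exp (-lam * t0) * (-lam * 1)) * V t0 x0 + Real.exp (-lam * t0) * Vt t0 x0) ht0s
    (by
      have h1 : HasDerivAt (fun τ => Real.exp (-lam * τ)) (Real.exp (-lam * t0) * (-lam * 1)) t0 :=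
        ((hasDerivAt_id t0).const_mul (-lam)).exp
      exact h1.mul (hVt t0 ht0' x0))
    (fun τ hτ => hglob τ ⟨hτ.1, hτ.2.trans ht0.2⟩ x0)
  have h2 : Real.exp (-lam * t0) * (Vt t0 x0 - lam * V t0 x0) ≤ 0 := by
    refine le_trans (le_of_eq ?_) htime
    ring
  have h3 : Vt t0 x0 - lam * V t0 x0 ≤ 0 := by
    by_contra h
    push Not at h
    have := mul_pos (Real.exp_pos (-lam * t0)) h
    linarith
  have h4 := hLV t0 ht0' x0
  have h5 := hc t0 ht0' x0
  nlinarith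

theorem ratio_max {d : ℕ} (Q : ℝ → Euc d → Fin d → Fin d → ℝ) (b : ℝ → Euc d → Fin d → ℝ)
    (c : ℝ → Euc d → ℝ) (s s0 T r κ : ℝ) (hr : 0 < r) (G Gt V Vt : ℝ → Euc d → ℝ)
    (hGc : ContinuousOn (fun p : ℝ × Euc d => G p.1 p.2) (Icc s0 T ×ˢ univ))
    (hVc : ContinuousOn (fun p : ℝ × Euc d => V p.1 p.2) (Icc s0 T ×ˢ univ))
    (hVpos : ∀ t ∈ Icc s0 T, ∀ x, 0 < V t x)
    (hG2 : ∀ t ∈ Ioc s0 T, ContDiff ℝ 2 (G t))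
    (hV2 : ∀ t ∈ Ioc s0 T, ContDiff ℝ 2 (V t))
    (hGt : ∀ t ∈ Ioc s0 T, ∀ x, HasDerivAt (fun τ => G τ x) (Gt t x) t)
    (hVt : ∀ t ∈ Ioc s0 T, ∀ x, HasDerivAt (fun τ => V τ x) (Vt t x) t)
    (hLV : ∀ t ∈ Ioc s0 T, ∀ x, c t x * V t x ≤ Vt t x - A0 d (Q t x) (b t x) (V t) x)
    (hsym : ∀ t ∈ Ioc s0 T, ∀ x, ∀ i j, Q t x i j = Q t x j i)
    (hpsd : ∀ t ∈ Ioc s0 T, ∀ x, ∀ ξ : Fin d → ℝ, 0 ≤ Gam d (Q t x) ξ ξ)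
    (hinit : ∀ x, G s0 x ≤ Real.exp (r * κ * (s0 - s)) * V s0 x ^ r)
    (ρ : ℝ) (hfar : ∀ t ∈ Icc s0 T, ∀ x : Euc d, ρ ≤ ‖x‖ →
      G t x ≤ Real.exp (r * κ * (t - s)) * V t x ^ r)
    (t1 : ℝ) (ht1 : t1 ∈ Icc s0 T) (x1 : Euc d)
    (hbad : Real.exp (r * κ * (t1 - s)) * V t1 x1 ^ r < G t1 x1) :
    ∃ t ∈ Ioc s0 T, ∃ x : Euc d, ‖x‖ ≤ ρ ∧ Real.exp (r * κ * (t - s)) * V t x ^ r < G t x ∧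
      r * (κ + c t x) * G t x ≤ Gt t x - A0 d (Q t x) (b t x) (G t) x
        + (r - 1) / r * (Gam d (Q t x) (fun i => dd d (G t) i x) (fun i => dd d (G t) i x) / G t x) := by
  set D : ℝ → Euc d → ℝ := fun t x => Real.exp (r * κ * (t - s)) * V t x ^ r with hD
  have hDpos : ∀ t ∈ Icc s0 T, ∀ x, 0 < D t x := fun t ht x =>
    mul_pos (Real.exp_pos _) (Real.rpow_pos_of_pos (hVpos t ht x) _)
  have hDc : ContinuousOn (fun p : ℝ × Euc d => D p.1 p.2) (Icc s0 T ×ˢ univ) := by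
    refine ContinuousOn.mul (by fun_prop) ?_
    exact hVc.rpow_const fun p hp => Or.inl (hVpos p.1 hp.1 p.2).ne'
  set F : ℝ × Euc d → ℝ := fun p => G p.1 p.2 / D p.1 p.2 with hF
  have hFc : ContinuousOn F (Icc s0 T ×ˢ univ) :=
    hGc.div hDc fun p hp => (hDpos p.1 hp.1 p.2).ne'
  have hK : IsCompact (Icc s0 T ×ˢ Metric.closedBall (0 : Euc d) ρ) :=
    isCompact_Icc.prod (isCompact_closedBall _ _)
  have hx1 : ‖x1‖ < ρ := by
    by_contra h
    push Not at h
    linarith [hfar t1 ht1 x1 h]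
  have hmem : (t1, x1) ∈ Icc s0 T ×ˢ Metric.closedBall (0 : Euc d) ρ := by
    refine ⟨ht1, ?_⟩
    simpa using hx1.le
  obtain ⟨⟨t0, x0⟩, ⟨ht0, hx0⟩, hmax⟩ := hK.exists_isMaxOn ⟨_, hmem⟩
    (hFc.mono (prod_mono le_rfl (subset_univ _)))
  simp only at ht0 hx0
  have hR1 : 1 < F (t0, x0) := lt_of_lt_of_le
    ((one_lt_div (hDpos t1 ht1 x1)).mpr hbad) (hmax hmem)
  set R0 := F (t0, x0) with hR0
  have hglob : ∀ t ∈ Icc s0 T, ∀ x, G t x ≤ R0 * D t x := by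
    intro t ht x
    by_cases hx : ‖x‖ ≤ ρ
    · have := hmax (⟨ht, by simpa using hx⟩ :
        (t, x) ∈ Icc s0 T ×ˢ Metric.closedBall (0 : Euc d) ρ)
      exact (div_le_iff₀ (hDpos t ht x)).mp this
    · push Not at hx
      have := hfar t ht x hx.le
      have h2 := hDpos t ht x
      have h3 : G t x ≤ D t x := this
      nlinarith
  have hG0 : G t0 x0 = R0 * D t0 x0 := by
    rw [hR0, hF]
    simp only
    rw [div_mul_cancel₀ _ (hDpos t0 ht0 x0).ne']
  have hDG : D t0 x0 < G t0 x0 := by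
    rw [hG0]
    nlinarith [hDpos t0 ht0 x0]
  have ht0s : s0 < t0 := by
    rcases lt_or_eq_of_le ht0.1 with h | h
    · exact h
    · have h5 := hinit x0
      rw [h] at h5
      have h6 : G t0 x0 ≤ D t0 x0 := h5
      linarith
  have ht0' : t0 ∈ Ioc s0 T := ⟨ht0s, ht0.2⟩
  refine ⟨t0, ht0', x0, by simpa using hx0, hDG, ?_⟩
  -- space
  have hVp := hVpos t0 ht0
  set P := R0 * Real.exp (r * κ * (t0 - s)) with hP
  have hVr2 : ContDiff ℝ 2 (fun x => V t0 x ^ r) :=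
    (hV2 t0 ht0').rpow_const_of_ne fun x => (hVp x).ne'
  have hΦ : ∀ x, HasDerivAt (fun y : ℝ => y ^ r) ((fun y : ℝ => r * y ^ (r - 1)) (V t0 x)) (V t0 x) :=
    fun x => Real.hasDerivAt_rpow_const (Or.inl (hVp x).ne')
  have hΦ' : ∀ x, HasDerivAt (fun y : ℝ => r * y ^ (r - 1))
      ((fun y : ℝ => r * ((r - 1) * y ^ (r - 1 - 1))) (V t0 x)) (V t0 x) :=
    fun x => (Real.hasDerivAt_rpow_const (Or.inl (hVp x).ne')).const_mul r
  have h2a : ContDiff ℝ 2 (fun x => P * V t0 x ^ r) := contDiff_const.mul hVr2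
  have h2b : ContDiff ℝ 2 (fun x => (-1) * G t0 x) := contDiff_const.mul (hG2 t0 ht0')
  have hspace : IsLocalMin (fun x => P * V t0 x ^ r + (-1) * G t0 x) x0 := by
    refine Filter.Eventually.of_forall fun x => ?_
    have h5 := hglob t0 ht0 x
    have h6 := hG0
    simp only [hD] at h5 h6
    have e1 : P * V t0 x ^ r = R0 * (Real.exp (r * κ * (t0 - s)) * V t0 x ^ r) := by
      rw [hP]; ring
    have e2 : P * V t0 x0 ^ r = R0 * (Real.exp (r * κ * (t0 - s)) * V t0 x0 ^ r) := by
      rw [hP]; ring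
    show P * V t0 x0 ^ r + (-1) * G t0 x0 ≤ P * V t0 x ^ r + (-1) * G t0 x
    rw [e1, e2]
    linarith
  have hAcomp := A0_comp (Q t0 x0) (b t0 x0) (hV2 t0 ht0')
    (Φ := fun y : ℝ => y ^ r) (Φ' := fun y : ℝ => r * y ^ (r - 1))
    (Φ'' := fun y : ℝ => r * ((r - 1) * y ^ (r - 1 - 1))) hΦ hΦ' x0
  have hdcomp := dd_comp (c2_diff (hV2 t0 ht0')) (Φ := fun y : ℝ => y ^ r) (Φ' := fun y : ℝ => r * y ^ (r - 1)) hΦ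
  obtain ⟨hgrad, hA⟩ := localMin_test (h2a.add h2b) hspace (Q t0 x0) (b t0 x0) (hsym t0 ht0' x0)
    (hpsd t0 ht0' x0)
  rw [A0_add _ _ h2a h2b, A0_cmul _ _ hVr2, A0_cmul _ _ (hG2 t0 ht0'),
    hAcomp] at hA
  have hgrad' : ∀ i, dd d (G t0) i x0 = P * (r * V t0 x0 ^ (r - 1)) * dd d (V t0) i x0 := by
    intro i
    have := hgrad i
    rw [dd_add (c2_diff h2a) (c2_diff h2b), dd_cmul (c2_diff hVr2), dd_cmul (c2_diff (hG2 t0 ht0')),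
      hdcomp] at this
    linarith
  -- time
  have htime := left_deriv_nonpos (f := fun τ => R0 * D τ x0 - G τ x0)
    (f' := R0 * ((Real.exp (r * κ * (t0 - s)) * (r * κ * 1)) * V t0 x0 ^ r
      + Real.exp (r * κ * (t0 - s)) * (Vt t0 x0 * r * V t0 x0 ^ (r - 1))) - Gt t0 x0) ht0s
    (by
      have h1 : HasDerivAt (fun τ => Real.exp (r * κ * (τ - s)))
          (Real.exp (r * κ * (t0 - s)) * (r * κ * 1)) t0 :=
        (((hasDerivAt_id t0).sub_const s).const_mul (r * κ)).exp
      have h2 := (hVt t0 ht0' x0).rpow_const (p := r) (Or.inl (hVp x0).ne')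
      exact ((h1.mul h2).const_mul R0).sub (hGt t0 ht0' x0))
    (fun τ hτ => by
      have h5 := hglob τ ⟨hτ.1, hτ.2.trans ht0.2⟩ x0
      linarith)
  have hL := hLV t0 ht0' x0
  have hGam : Gam d (Q t0 x0) (fun i => dd d (G t0) i x0) (fun i => dd d (G t0) i x0)
      = (P * (r * V t0 x0 ^ (r - 1))) ^ 2 *
        Gam d (Q t0 x0) (fun i => dd d (V t0) i x0) (fun i => dd d (V t0) i x0) := by
    unfold Gam
    simp only [hgrad', Finset.mul_sum]
    refine Finset.sum_congr rfl fun i _ => Finset.sum_congr rfl fun j _ => by ring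
  rw [hGam]
  have hGe : G t0 x0 = P * V t0 x0 ^ r := by rw [hG0, hP]; simp only [hD]; ring
  rw [hGe]
  have hv := hVp x0
  have hPpos : 0 < P := mul_pos (by linarith) (Real.exp_pos _)
  simp only [Real.rpow_sub_one hv.ne'] at hA htime ⊢
  set w := V t0 x0 with hw
  have hWpos : 0 < w ^ r := Real.rpow_pos_of_pos hv _
  set W := w ^ r with hW
  set a0V := A0 d (Q t0 x0) (b t0 x0) (V t0) x0
  set a0G := A0 d (Q t0 x0) (b t0 x0) (G t0) x0
  set gV := Gam d (Q t0 x0) (fun i => dd d (V t0) i x0) (fun i => dd d (V t0) i x0)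
  have e3 : (r - 1) / r * ((P * (r * (W / w))) ^ 2 * gV / (P * W)) =
      P * (r * ((r - 1) * (W / w / w)) * gV) := by
    field_simp
  rw [e3]
  have h7 : P * r * (W / w) * (c t0 x0 * w) ≤ P * r * (W / w) * (Vt t0 x0 - a0V) :=
    mul_le_mul_of_nonneg_left hL (by positivity)
  have e4 : P * r * (W / w) * (c t0 x0 * w) = r * c t0 x0 * (P * W) := by
    field_simp
  rw [e4] at h7
  have h8 : R0 * (Real.exp (r * κ * (t0 - s)) * (r * κ * 1) * W +
      Real.exp (r * κ * (t0 - s)) * (Vt t0 x0 * r * (W / w))) =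
      r * κ * (P * W) + P * r * (W / w) * Vt t0 x0 := by rw [hP]; ring
  rw [h8] at htime
  linarith [htime, hA, h7]
theorem psd_decomp {d : ℕ} (q : Fin d → Fin d → ℝ) (hq : ∀ i j, q i j = q j i)
    (hpsd : ∀ ξ : Fin d → ℝ, 0 ≤ Gam d q ξ ξ) :
    ∃ (m : ℕ) (B : Fin m → Fin d → ℝ), ∀ ξ : Fin d → ℝ,
      Gam d q ξ ξ = ∑ l, (∑ i, B l i * ξ i) ^ 2 := by
  have hP : (Matrix.of q).PosSemidef := by
    refine Matrix.PosSemidef.of_dotProduct_mulVec_nonneg ?_ ?_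
    · ext i j
      simp [Matrix.conjTranspose_apply, hq i j]
    · intro x
      have := hpsd x
      unfold Gam at this
      simp only [dotProduct, Matrix.mulVec, Matrix.of_apply, star_trivial, Finset.mul_sum]
      refine this.trans (le_of_eq ?_)
      refine Finset.sum_congr rfl fun i _ => Finset.sum_congr rfl fun j _ => by ring
  obtain ⟨m, B, hB⟩ := Matrix.posSemidef_iff_eq_sum_vecMulVec.mp hP
  have hqe : ∀ i j, q i j = ∑ m, B m i * B m j := by
    intro i j
    have := congrFun (congrFun hB i) j
    simpa [Matrix.sum_apply, Matrix.vecMulVec_apply] using this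
  refine ⟨m, B, fun ξ => ?_⟩
  unfold Gam
  simp only [hqe, Finset.sum_mul]
  calc ∑ i, ∑ j, ∑ m, B m i * B m j * ξ i * ξ j = ∑ i, ∑ m, ∑ j, B m i * B m j * ξ i * ξ j := by
          refine Finset.sum_congr rfl fun i _ => Finset.sum_comm
      _ = ∑ m, ∑ i, ∑ j, B m i * B m j * ξ i * ξ j := Finset.sum_comm
      _ = _ := by
          refine Finset.sum_congr rfl fun m _ => ?_
          rw [pow_two, Finset.sum_mul_sum]
          refine Finset.sum_congr rfl fun i _ => Finset.sum_congr rfl fun j _ => by ring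

theorem scalar_cs {U α A Y Z p : ℝ} (hA : 0 ≤ A) (hY : 0 ≤ Y) (hZ : 0 ≤ Z) (hp : p ^ 2 ≤ Y * Z) :
    (U * α + A * p) ^ 2 ≤ (U ^ 2 + A * Y) * (α ^ 2 + A * Z) := by
  have h1 : 2 * (U * α) * p ≤ U ^ 2 * Z + Y * α ^ 2 := by
    refine abs_le_of_sq_le_sq' ?_ (by positivity) |>.2
    have h2 : (U * α) ^ 2 * p ^ 2 ≤ (U * α) ^ 2 * (Y * Z) :=
      mul_le_mul_of_nonneg_left hp (sq_nonneg _)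
    nlinarith [sq_nonneg (U ^ 2 * Z - Y * α ^ 2)]
  have h3 := mul_le_mul_of_nonneg_left h1 hA
  have h4 := mul_le_mul_of_nonneg_left hp (sq_nonneg A)
  nlinarith

theorem gam_cs {d : ℕ} (q : Fin d → Fin d → ℝ) (hq : ∀ i j, q i j = q j i)
    (hpsd : ∀ ξ : Fin d → ℝ, 0 ≤ Gam d q ξ ξ) (U A : ℝ) (hA : 0 ≤ A) (y : Fin d → ℝ)
    (a0 : Fin d → ℝ) (ak : Fin d → Fin d → ℝ) :
    Gam d q (fun i => U * a0 i + A * ∑ k, y k * ak k i) (fun i => U * a0 i + A * ∑ k, y k * ak k i)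
      ≤ (U ^ 2 + A * ∑ k, y k ^ 2) * (Gam d q a0 a0 + A * ∑ k, Gam d q (ak k) (ak k)) := by
  obtain ⟨m, B, hB⟩ := psd_decomp q hq hpsd
  simp only [hB]
  have e1 : ∀ l, ∑ i, B l i * (U * a0 i + A * ∑ k, y k * ak k i)
      = U * (∑ i, B l i * a0 i) + A * ∑ k, y k * ∑ i, B l i * ak k i := by
    intro l
    simp only [mul_add, Finset.sum_add_distrib, Finset.mul_sum]
    congr 1
    · refine Finset.sum_congr rfl fun i _ => by ring
    · rw [Finset.sum_comm]
      refine Finset.sum_congr rfl fun i _ => Finset.sum_congr rfl fun j _ => by ring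
  simp only [e1]
  have e2 : ∑ k, ∑ l, (∑ i, B l i * ak k i) ^ 2 = ∑ l, ∑ k, (∑ i, B l i * ak k i) ^ 2 :=
    Finset.sum_comm
  rw [e2, Finset.mul_sum (f := fun l => ∑ k, (∑ i, B l i * ak k i) ^ 2), ← Finset.sum_add_distrib,
    Finset.mul_sum (a := U ^ 2 + A * ∑ k, y k ^ 2)]
  refine Finset.sum_le_sum fun l _ => ?_
  refine scalar_cs hA (Finset.sum_nonneg fun _ _ => sq_nonneg _)
    (Finset.sum_nonneg fun _ _ => sq_nonneg _) ?_
  exact Finset.sum_mul_sq_le_sq_mul_sq _ _ _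

def ee (d : ℕ) (k : Fin d) : Euc d := EuclideanSpace.single k 1

def wk (d : ℕ) (U : Euc d → ℝ) (h : ℝ) (k : Fin d) (x : Euc d) : ℝ :=
  h⁻¹ * (U (x + h • ee d k) + (-1) * U x)

def GG (d : ℕ) (U θ : Euc d → ℝ) (h A : ℝ) (x : Euc d) : ℝ :=
  U x * U x + A * ∑ k, (θ x * wk d U h k x) * (θ x * wk d U h k x)

def Rem (d : ℕ) (q : Fin d → Fin d → ℝ) (a A μ θ0 Aθ : ℝ) (gθ gU w K : Fin d → ℝ)
    (z : Fin d → Fin d → ℝ) : ℝ :=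
  a * ∑ k, (θ0 * w k) ^ 2
  + 2 * A * ∑ k, θ0 * w k * (θ0 * K k - w k * Aθ - 2 * Gam d q gθ (z k))
  - μ * (Gam d q gU gU
      + A * ∑ k, Gam d q (fun i => θ0 * z k i + w k * gθ i) (fun i => θ0 * z k i + w k * gθ i))

def KK (d : ℕ) (Q : Euc d → Fin d → Fin d → ℝ) (b : Euc d → Fin d → ℝ)
    (c : Euc d → ℝ) (U : Euc d → ℝ) (h : ℝ) (x : Euc d) (k : Fin d) : ℝ :=
  (∑ i, ∑ j, h⁻¹ * (Q (x + h • ee d k) i j - Q x i j) * hess d U (x + h • ee d k) i j)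
  + (∑ i, h⁻¹ * (b (x + h • ee d k) i - b x i) * dd d U i (x + h • ee d k))
  + h⁻¹ * (c (x + h • ee d k) - c x) * U (x + h • ee d k)

theorem c2_shift {d : ℕ} {U : Euc d → ℝ} (hU : ContDiff ℝ 2 U) (v : Euc d) :
    ContDiff ℝ 2 (fun x => U (x + v)) := hU.comp (contDiff_id.add contDiff_const)

theorem c2_wk {d : ℕ} {U : Euc d → ℝ} (hU : ContDiff ℝ 2 U) (h : ℝ) (k : Fin d) :
    ContDiff ℝ 2 (wk d U h k) :=
  contDiff_const.mul ((c2_shift hU _).add (contDiff_const.mul hU))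

theorem c2_GG {d : ℕ} {U θ : Euc d → ℝ} (hU : ContDiff ℝ 2 U) (hθ : ContDiff ℝ 2 θ) (h A : ℝ) :
    ContDiff ℝ 2 (GG d U θ h A) := by
  refine (hU.mul hU).add (contDiff_const.mul ?_)
  refine ContDiff.sum fun k _ => ?_
  exact (hθ.mul (c2_wk hU h k)).mul (hθ.mul (c2_wk hU h k))

theorem A0_wk {d : ℕ} (q : Fin d → Fin d → ℝ) (β : Fin d → ℝ)
    {U : Euc d → ℝ} (hU : ContDiff ℝ 2 U) (h : ℝ) (k : Fin d) (x : Euc d) :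
    A0 d q β (wk d U h k) x = h⁻¹ * (A0 d q β U (x + h • ee d k) - A0 d q β U x) := by
  have e : wk d U h k = fun x => h⁻¹ * (U (x + h • ee d k) + (-1) * U x) := rfl
  have h1 := c2_shift hU (h • ee d k)
  have h2 : ContDiff ℝ 2 (fun x => (-1) * U x) := contDiff_const.mul hU
  rw [e, A0_cmul _ _ (h1.add h2), A0_add _ _ h1 h2, A0_cmul _ _ hU]
  have h3 : A0 d q β (fun x => U (x + h • ee d k)) x = A0 d q β U (x + h • ee d k) := by
    unfold A0
    simp only [hess_shift, dd_shift]
  rw [h3]; ring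

theorem dd_wk {d : ℕ} {U : Euc d → ℝ} (hU : ContDiff ℝ 2 U) (h : ℝ) (k i : Fin d) (x : Euc d) :
    dd d (wk d U h k) i x = wk d (dd d U i) h k x := by
  have e : wk d U h k = fun x => h⁻¹ * (U (x + h • ee d k) + (-1) * U x) := rfl
  have h1 := c2_shift hU (h • ee d k)
  have h2 : ContDiff ℝ 2 (fun x => (-1) * U x) := contDiff_const.mul hU
  rw [e, dd_cmul (c2_diff (h1.add h2)), dd_add (c2_diff h1) (c2_diff h2), dd_cmul (c2_diff hU),
    dd_shift]
  rfl

theorem A0_GG {d : ℕ} (q : Fin d → Fin d → ℝ) (hq : ∀ i j, q i j = q j i) (β : Fin d → ℝ)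
    {U θ : Euc d → ℝ} (hU : ContDiff ℝ 2 U) (hθ : ContDiff ℝ 2 θ) (h A : ℝ) (x : Euc d) :
    A0 d q β (GG d U θ h A) x = 2 * U x * A0 d q β U x
      + 2 * Gam d q (fun i => dd d U i x) (fun i => dd d U i x)
      + A * ∑ k, (2 * (θ x * wk d U h k x) * (θ x * A0 d q β (wk d U h k) x
          + wk d U h k x * A0 d q β θ x
          + 2 * Gam d q (fun i => dd d θ i x) (fun i => wk d (dd d U i) h k x))
        + 2 * Gam d q (fun i => θ x * wk d (dd d U i) h k x + wk d U h k x * dd d θ i x)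
            (fun i => θ x * wk d (dd d U i) h k x + wk d U h k x * dd d θ i x)) := by
  have e : GG d U θ h A = fun x => U x * U x +
    A * ∑ k, (θ x * wk d U h k x) * (θ x * wk d U h k x) := rfl
  have hy : ∀ k, ContDiff ℝ 2 (fun x => θ x * wk d U h k x) := fun k => hθ.mul (c2_wk hU h k)
  have hyy : ∀ k, ContDiff ℝ 2 (fun x => (θ x * wk d U h k x) * (θ x * wk d U h k x)) :=
    fun k => (hy k).mul (hy k)
  have hs : ContDiff ℝ 2 (fun x => ∑ k, (θ x * wk d U h k x) * (θ x * wk d U h k x)) :=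
    ContDiff.sum fun k _ => hyy k
  rw [e, A0_add q β (hU.mul hU) (contDiff_const.mul hs), A0_mul q hq β hU hU,
    A0_cmul q β hs, A0_sum q β hyy]
  congr 1
  · ring
  · congr 1
    refine Finset.sum_congr rfl fun k _ => ?_
    rw [A0_mul q hq β (hy k) (hy k), A0_mul q hq β hθ (c2_wk hU h k)]
    have e2 : ∀ i, dd d (fun x => θ x * wk d U h k x) i x
        = θ x * wk d (dd d U i) h k x + wk d U h k x * dd d θ i x := by
      intro i
      rw [dd_mul (c2_diff hθ) (c2_diff (c2_wk hU h k))]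
      simp only [dd_wk hU]
    simp only [e2, dd_wk hU]
    ring

theorem dd_GG {d : ℕ} {U θ : Euc d → ℝ} (hU : ContDiff ℝ 2 U) (hθ : ContDiff ℝ 2 θ) (h A : ℝ)
    (x : Euc d) (i : Fin d) :
    dd d (GG d U θ h A) i x = 2 * (U x * dd d U i x + A * ∑ k, (θ x * wk d U h k x) *
      (θ x * wk d (dd d U i) h k x + wk d U h k x * dd d θ i x)) := by
  have e : GG d U θ h A = fun x => U x * U x +
    A * ∑ k, (θ x * wk d U h k x) * (θ x * wk d U h k x) := rfl
  have hy : ∀ k, ContDiff ℝ 2 (fun x => θ x * wk d U h k x) := fun k => hθ.mul (c2_wk hU h k)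
  have hyy : ∀ k, ContDiff ℝ 2 (fun x => (θ x * wk d U h k x) * (θ x * wk d U h k x)) :=
    fun k => (hy k).mul (hy k)
  have hs : ContDiff ℝ 2 (fun x => ∑ k, (θ x * wk d U h k x) * (θ x * wk d U h k x)) :=
    ContDiff.sum fun k _ => hyy k
  rw [e, dd_add (c2_diff (hU.mul hU)) (c2_diff (contDiff_const.mul hs)),
    dd_mul (c2_diff hU) (c2_diff hU), dd_cmul (c2_diff hs), dd_sum (fun k => c2_diff (hyy k))]
  rw [mul_add, mul_left_comm 2 A, Finset.mul_sum]
  beta_reduce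
  congr 1
  · ring
  · congr 1
    refine Finset.sum_congr rfl fun k _ => ?_
    rw [dd_mul (c2_diff (hy k)) (c2_diff (hy k))]
    rw [dd_mul (c2_diff hθ) (c2_diff (c2_wk hU h k))]
    simp only [dd_wk hU]
    ring

/-- static consequence of the maximum condition -/
theorem GG_static {d : ℕ} (Q : Euc d → Fin d → Fin d → ℝ) (b : Euc d → Fin d → ℝ)
    (c : Euc d → ℝ) (x : Euc d) (hq : ∀ i j, Q x i j = Q x j i)
    (hpsd : ∀ ξ : Fin d → ℝ, 0 ≤ Gam d (Q x) ξ ξ)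
    {U θ Ut : Euc d → ℝ} (hU : ContDiff ℝ 2 U) (hθ : ContDiff ℝ 2 θ) (h A a : ℝ) (hA : 0 ≤ A)
    (hpde : ∀ y, Ut y = A0 d (Q y) (b y) U y + c y * U y)
    (r κ μ : ℝ) (hr : 0 < r) (hμ2 : μ ≤ 2) (hμr : μ ≤ 4 / r - 2)
    (hG : 0 < GG d U θ h A x)
    (hmax : r * (κ + c x) * GG d U θ h A x ≤
      (2 * U x * Ut x + (a * ∑ k, (θ x * wk d U h k x) * (θ x * wk d U h k x)
        + A * ∑ k, 2 * (θ x * wk d U h k x) * (θ x * wk d Ut h k x)))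
        - A0 d (Q x) (b x) (GG d U θ h A) x
        + (r - 1) / r * (Gam d (Q x) (fun i => dd d (GG d U θ h A) i x)
            (fun i => dd d (GG d U θ h A) i x) / GG d U θ h A x)) :
    (r * κ - (2 - r) * c x) * GG d U θ h A x ≤
      Rem d (Q x) a A μ (θ x) (A0 d (Q x) (b x) θ x) (fun i => dd d θ i x) (fun i => dd d U i x)
        (fun k => wk d U h k x) (KK d Q b c U h x) (fun k i => wk d (dd d U i) h k x) := by
  set G := GG d U θ h A x with hGdef
  set E := Gam d (Q x) (fun i => dd d U i x) (fun i => dd d U i x)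
      + A * ∑ k, Gam d (Q x) (fun i => θ x * wk d (dd d U i) h k x + wk d U h k x * dd d θ i x)
            (fun i => θ x * wk d (dd d U i) h k x + wk d U h k x * dd d θ i x) with hE
  have hE0 : 0 ≤ E := add_nonneg (hpsd _) (mul_nonneg hA (Finset.sum_nonneg fun k _ => hpsd _))
  have hGe : G = U x ^ 2 + A * ∑ k, (θ x * wk d U h k x) ^ 2 := by
    rw [hGdef]; unfold GG
    simp only [pow_two]
  set gam := Gam d (Q x) (fun i => dd d (GG d U θ h A) i x) (fun i => dd d (GG d U θ h A) i x)
    with hgam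
  have hgam0 : 0 ≤ gam := hpsd _
  have hgamle : gam ≤ 4 * (G * E) := by
    have := gam_cs (Q x) hq hpsd (U x) A hA (fun k => θ x * wk d U h k x) (fun i => dd d U i x)
      (fun k i => θ x * wk d (dd d U i) h k x + wk d U h k x * dd d θ i x)
    rw [← hGe, ← hE] at this
    refine le_trans (le_of_eq ?_) (mul_le_mul_of_nonneg_left this (by norm_num : (0:ℝ) ≤ 4))
    rw [hgam]
    unfold Gam
    simp only [dd_GG hU hθ]
    rw [Finset.mul_sum (a := (4:ℝ))]
    simp only [Finset.mul_sum (a := (4:ℝ))]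
    refine Finset.sum_congr rfl fun i _ => Finset.sum_congr rfl fun j _ => by ring
  have hlast : (r - 1) / r * (gam / G) ≤ (2 - μ) * E := by
    have h1 : gam / G ≤ 4 * E := by
      rw [div_le_iff₀ hG]; linarith
    have h0 : 0 ≤ gam / G := div_nonneg hgam0 hG.le
    rcases le_or_gt r 1 with hr1 | hr1
    · have h2 : (r - 1) / r ≤ 0 := div_nonpos_of_nonpos_of_nonneg (by linarith) hr.le
      have h3 := mul_nonneg (by linarith : 0 ≤ 2 - μ) hE0
      nlinarith
    · have h2 : 0 ≤ (r - 1) / r := div_nonneg (by linarith) hr.le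
      have h3 := mul_le_mul_of_nonneg_left h1 h2
      have h4 : (r - 1) / r * 4 ≤ 2 - μ := by
        have : (r - 1) / r * 4 = 4 - 4 / r := by field_simp
        linarith
      nlinarith
  have hwt : ∀ k, wk d Ut h k x = A0 d (Q x) (b x) (wk d U h k) x + c x * wk d U h k x
      + KK d Q b c U h x k := by
    intro k
    rw [A0_wk _ _ hU]
    unfold wk
    rw [hpde, hpde]
    have e1 : KK d Q b c U h x k = h⁻¹ * ((A0 d (Q (x + h • ee d k)) (b (x + h • ee d k)) U
        (x + h • ee d k) - A0 d (Q x) (b x) U (x + h • ee d k))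
        + (c (x + h • ee d k) - c x) * U (x + h • ee d k)) := by
      unfold KK A0
      simp only [mul_sub, sub_mul, mul_assoc, Finset.sum_sub_distrib, Finset.mul_sum, mul_add]
      ring
    rw [e1]
    ring
  have hfin : (2 * U x * Ut x + (a * ∑ k, (θ x * wk d U h k x) * (θ x * wk d U h k x)
        + A * ∑ k, 2 * (θ x * wk d U h k x) * (θ x * wk d Ut h k x)))
        - A0 d (Q x) (b x) (GG d U θ h A) x = 2 * c x * G - 2 * E + (Rem d (Q x) a A μ (θ x) (A0 d (Q x) (b x) θ x) (fun i => dd d θ i x) (fun i => dd d U i x)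
        (fun k => wk d U h k x) (KK d Q b c U h x) (fun k i => wk d (dd d U i) h k x) + μ * E) := by
    rw [A0_GG _ hq _ hU hθ, hpde, hGe, hE]
    unfold Rem
    simp only [hwt]
    have e5 : ∀ f : Fin d → ℝ, ∀ g : Fin d → ℝ, ∀ y : ℝ, y * (∑ k, f k) - y * ∑ k, g k
      = y * ∑ k, (f k - g k) := by
      intro f g y; rw [← mul_sub, Finset.sum_sub_distrib]
    have e6 : ∑ k, 2 * (θ x * wk d U h k x) * (θ x * (A0 d (Q x) (b x) (wk d U h k) x
          + c x * wk d U h k x + KK d Q b c U h x k))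
        - ∑ k, (2 * (θ x * wk d U h k x) * (θ x * A0 d (Q x) (b x) (wk d U h k) x
          + wk d U h k x * A0 d (Q x) (b x) θ x
          + 2 * Gam d (Q x) (fun i => dd d θ i x) (fun i => wk d (dd d U i) h k x))
        + 2 * Gam d (Q x) (fun i => θ x * wk d (dd d U i) h k x + wk d U h k x * dd d θ i x)
            (fun i => θ x * wk d (dd d U i) h k x + wk d U h k x * dd d θ i x))
        = 2 * c x * ∑ k, (θ x * wk d U h k x) ^ 2
        + 2 * ∑ k, θ x * wk d U h k x * (θ x * KK d Q b c U h x k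
            - wk d U h k x * A0 d (Q x) (b x) θ x
            - 2 * Gam d (Q x) (fun i => dd d θ i x) (fun i => wk d (dd d U i) h k x))
        - 2 * ∑ k, Gam d (Q x) (fun i => θ x * wk d (dd d U i) h k x + wk d U h k x * dd d θ i x)
            (fun i => θ x * wk d (dd d U i) h k x + wk d U h k x * dd d θ i x) := by
      simp only [Finset.mul_sum, ← Finset.sum_sub_distrib, ← Finset.sum_add_distrib]
      refine Finset.sum_congr rfl fun k _ => by ring
    have e7 : ∑ k, (θ x * wk d U h k x) * (θ x * wk d U h k x) = ∑ k, (θ x * wk d U h k x) ^ 2 :=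
      Finset.sum_congr rfl fun k _ => by ring
    rw [e7]
    linear_combination A * e6
  rw [hfin] at hmax
  nlinarith
theorem abs_sum_le_card {d : ℕ} (f : Fin d → ℝ) (B : ℝ) (h : ∀ i, |f i| ≤ B) :
    |∑ i, f i| ≤ d * B := by
  refine (Finset.abs_sum_le_sum_abs _ _).trans ?_
  refine (Finset.sum_le_sum fun i _ => h i).trans ?_
  simp

set_option maxHeartbeats 2000000 in
theorem Rem_bound {d : ℕ} (q : Fin d → Fin d → ℝ) (ν ν₀ a A μ θ0 Aθ u r0 ϱ L M' CQ Kθ : ℝ)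
    (gθ g K : Fin d → ℝ) (Hs : Fin d → Fin d → ℝ) (dQ : Fin d → Fin d → Fin d → ℝ)
    (dB : Fin d → Fin d → ℝ) (dc : Fin d → ℝ)
    (hν₀ : 0 < ν₀) (hν : ν₀ ≤ ν) (hcoer : ∀ ξ : Fin d → ℝ, ν * ∑ i, ξ i ^ 2 ≤ Gam d q ξ ξ)
    (hK : ∀ k, K k = ∑ i, ∑ j, dQ k i j * Hs i j + ∑ i, dB k i * g i + dc k * u)
    (hdQ : ∀ k i j, |dQ k i j| ≤ CQ * ν)
    (hdB : ∑ k, ∑ i, dB k i * g i * g k ≤ r0 * ∑ k, g k ^ 2)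
    (hdc : (∑ k, dc k * g k) ^ 2 ≤ ϱ ^ 2 * ∑ k, g k ^ 2)
    (hdiss : r0 + L * ϱ ^ 2 ≤ M' * ν) (hL : 0 < L) (hM' : 0 ≤ M') (hCQ : 0 ≤ CQ) (hKθ : 0 ≤ Kθ)
    (hθ0 : 0 ≤ θ0) (hθ1 : θ0 ≤ 1) (hgθ : ∀ i, |gθ i| ≤ Kθ) (hAθ : -(Kθ * ν) ≤ Aθ)
    (hqθ : ∀ j, |∑ i, q i j * gθ i| ≤ Kθ * ν)
    (hA0 : 0 ≤ A) (hAa : A ≤ a) (hμ : 0 < μ)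
    (ha : a * (1 / ν₀ + (2 * d ^ 3 * CQ * Kθ + 4 * d ^ 2 * Kθ ^ 2 + 2 * Kθ + 2 * M')
      + (2 * d ^ 3 * CQ + 4 * d ^ 2 * Kθ) ^ 2 / (4 * μ)) ≤ μ) :
    Rem d q a A μ θ0 Aθ gθ g g K Hs ≤ a / (2 * L) * u ^ 2 := by
  have hνp : 0 < ν := lt_of_lt_of_le hν₀ hν
  set Y : Fin d → Fin d → ℝ := fun k i => θ0 * Hs k i + g k * gθ i with hY
  set S := ∑ k, g k ^ 2 with hS
  set T := ∑ k, ∑ i, Y k i ^ 2 with hT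
  have hS0 : 0 ≤ S := Finset.sum_nonneg fun _ _ => sq_nonneg _
  have hT0 : 0 ≤ T := Finset.sum_nonneg fun _ _ => Finset.sum_nonneg fun _ _ => sq_nonneg _
  set sS := Real.sqrt S with hsS
  set sT := Real.sqrt T with hsT
  have hsS0 : 0 ≤ sS := Real.sqrt_nonneg _
  have hsT0 : 0 ≤ sT := Real.sqrt_nonneg _
  have hsS2 : sS ^ 2 = S := Real.sq_sqrt hS0
  have hsT2 : sT ^ 2 = T := Real.sq_sqrt hT0
  have hg : ∀ k, |g k| ≤ sS := by
    intro k
    refine Real.abs_le_sqrt ?_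
    exact Finset.single_le_sum (f := fun k => g k ^ 2) (fun _ _ => sq_nonneg _) (Finset.mem_univ k)
  have hYb : ∀ k i, |Y k i| ≤ sT := by
    intro k i
    refine Real.abs_le_sqrt ?_
    refine (Finset.single_le_sum (f := fun i => Y k i ^ 2) (fun _ _ => sq_nonneg _)
      (Finset.mem_univ i)).trans ?_
    exact Finset.single_le_sum (f := fun k => ∑ i, Y k i ^ 2)
      (fun _ _ => Finset.sum_nonneg fun _ _ => sq_nonneg _) (Finset.mem_univ k)
  have hθabs : |θ0| ≤ 1 := by rw [abs_of_nonneg hθ0]; exact hθ1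
  have hdiff : ∀ i j, |Y i j - g i * gθ j| ≤ sT + sS * Kθ := by
    intro i j
    refine (abs_sub _ _).trans ?_
    rw [abs_mul]
    exact add_le_add (hYb i j) (mul_le_mul (hg i) (hgθ j) (abs_nonneg _) hsS0)
  -- term 1
  set t1 := ∑ k, ∑ i, ∑ j, θ0 * g k * dQ k i j * (Y i j - g i * gθ j) with ht1
  have h1 : |t1| ≤ d * (d * (d * (1 * sS * (CQ * ν) * (sT + sS * Kθ)))) := by
    refine abs_sum_le_card _ _ fun k => abs_sum_le_card _ _ fun i => abs_sum_le_card _ _ fun j => ?_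
    rw [abs_mul, abs_mul, abs_mul]
    have := hg k
    have := hdQ k i j
    have := hdiff i j
    gcongr
  -- term 4
  set t4 := ∑ k, ∑ j, g k * (∑ i, q i j * gθ i) * (Y k j - g k * gθ j) with ht4
  have h4 : |t4| ≤ d * (d * (sS * (Kθ * ν) * (sT + sS * Kθ))) := by
    refine abs_sum_le_card _ _ fun k => abs_sum_le_card _ _ fun j => ?_
    rw [abs_mul, abs_mul]
    have := hg k
    have := hqθ j
    have := hdiff k j
    gcongr
  -- drift terms
  set tB := ∑ k, ∑ i, dB k i * g i * g k with htB
  set tc := ∑ k, dc k * g k with htc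
  have h2 : tB + u * tc ≤ M' * ν * S + u ^ 2 / (4 * L) := by
    have h5 : u * tc ≤ L * ϱ ^ 2 * S + u ^ 2 / (4 * L) := by
      have e : u * tc ≤ L * tc ^ 2 + u ^ 2 / (4 * L) := by
        have : L * tc ^ 2 + u ^ 2 / (4 * L) - u * tc = (2 * L * tc - u) ^ 2 / (4 * L) := by
          field_simp; ring
        have h6 : 0 ≤ (2 * L * tc - u) ^ 2 / (4 * L) := by positivity
        linarith
      have := mul_le_mul_of_nonneg_left hdc hL.le
      linarith
    have h6 := mul_le_mul_of_nonneg_right hdiss hS0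
    linarith
  have hgam : ∀ k, θ0 * Gam d q gθ (Hs k) = ∑ j, (∑ i, q i j * gθ i) * (Y k j - g k * gθ j) := by
    intro k
    unfold Gam
    rw [Finset.sum_comm, Finset.mul_sum]
    refine Finset.sum_congr rfl fun j _ => ?_
    rw [Finset.mul_sum, Finset.sum_mul]
    refine Finset.sum_congr rfl fun i _ => ?_
    simp only [hY]; ring
  have hmain : ∑ k, θ0 * g k * (θ0 * K k - g k * Aθ - 2 * Gam d q gθ (Hs k))
      = t1 + θ0 ^ 2 * (tB + u * tc) - θ0 * Aθ * S - 2 * t4 := by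
    have e4 : t4 = ∑ k, g k * (θ0 * Gam d q gθ (Hs k)) := by
      rw [ht4]
      refine Finset.sum_congr rfl fun k _ => ?_
      rw [hgam, Finset.mul_sum]
      refine Finset.sum_congr rfl fun i _ => by ring
    have e1 : t1 = ∑ k, θ0 * g k * (θ0 * ∑ i, ∑ j, dQ k i j * Hs i j) := by
      rw [ht1]
      refine Finset.sum_congr rfl fun k _ => ?_
      simp only [Finset.mul_sum]
      refine Finset.sum_congr rfl fun i _ => Finset.sum_congr rfl fun j _ => ?_
      simp only [hY]; ring
    have eB : tB = ∑ k, g k * ∑ i, dB k i * g i := by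
      rw [htB]
      refine Finset.sum_congr rfl fun k _ => ?_
      rw [Finset.mul_sum]
      refine Finset.sum_congr rfl fun i _ => by ring
    rw [e4, e1, eB, htc, hS]
    simp only [Finset.mul_sum (ι := Fin d) (s := Finset.univ) (a := u),
      ← Finset.sum_add_distrib]
    rw [Finset.mul_sum (a := θ0 ^ 2), Finset.mul_sum (a := θ0 * Aθ), Finset.mul_sum (a := (2:ℝ)),
      ← Finset.sum_add_distrib, ← Finset.sum_sub_distrib, ← Finset.sum_sub_distrib]
    refine Finset.sum_congr rfl fun k _ => ?_
    rw [hK]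
    ring
  have hcoU := hcoer g
  have hcoY : ν * T ≤ ∑ k, Gam d q (Y k) (Y k) := by
    rw [hT, Finset.mul_sum]
    exact Finset.sum_le_sum fun k _ => hcoer (Y k)
  have hSθ : ∑ k, (θ0 * g k) ^ 2 = θ0 ^ 2 * S := by
    rw [hS, Finset.mul_sum]
    exact Finset.sum_congr rfl fun k _ => by ring
  unfold Rem
  rw [hmain, hSθ]
  have ha0 : 0 ≤ a := hA0.trans hAa
  have hθ2 : θ0 ^ 2 ≤ 1 := pow_le_one₀ hθ0 hθ1
  -- assemble
  have b1 : t1 ≤ d ^ 3 * CQ * ν * (sS * sT) + d ^ 3 * CQ * Kθ * ν * S := by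
    refine (le_abs_self _).trans (h1.trans (le_of_eq ?_))
    rw [← hsS2]; ring
  have b4 : -t4 ≤ d ^ 2 * Kθ * ν * (sS * sT) + d ^ 2 * Kθ ^ 2 * ν * S := by
    refine (neg_le_abs _).trans (h4.trans (le_of_eq ?_))
    rw [← hsS2]; ring
  have b2 : θ0 ^ 2 * (tB + u * tc) ≤ M' * ν * S + u ^ 2 / (4 * L) := by
    have h7 : 0 ≤ M' * ν * S + u ^ 2 / (4 * L) := by positivity
    have h8 := mul_le_mul_of_nonneg_left h2 (sq_nonneg θ0)
    exact h8.trans (mul_le_of_le_one_left h7 hθ2)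
  have b3 : -(θ0 * Aθ * S) ≤ Kθ * ν * S := by
    have h7 : -Aθ ≤ Kθ * ν := by linarith
    have h8 : θ0 * (-Aθ) ≤ θ0 * (Kθ * ν) := mul_le_mul_of_nonneg_left h7 hθ0
    have h9 : θ0 * (Kθ * ν) ≤ Kθ * ν := by
      have : 0 ≤ Kθ * ν := by positivity
      exact mul_le_of_le_one_left this hθ1
    have := mul_le_mul_of_nonneg_right (h8.trans h9) hS0
    linarith
  set k3 : ℝ := 2 * d ^ 3 * CQ + 4 * d ^ 2 * Kθ with hk3
  set k2 : ℝ := 2 * d ^ 3 * CQ * Kθ + 4 * d ^ 2 * Kθ ^ 2 + 2 * Kθ + 2 * M' with hk2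
  have hk20 : 0 ≤ k2 := by positivity
  have b5 : 2 * (t1 + θ0 ^ 2 * (tB + u * tc) - θ0 * Aθ * S - 2 * t4)
      ≤ k3 * ν * (sS * sT) + k2 * ν * S + u ^ 2 / (2 * L) := by
    have e : u ^ 2 / (2 * L) = 2 * (u ^ 2 / (4 * L)) := by field_simp; norm_num
    rw [e, hk3, hk2]
    linarith
  have b6 : k3 * (sS * sT) ≤ μ * T + k3 ^ 2 / (4 * μ) * S := by
    rw [← hsS2, ← hsT2]
    have : μ * sT ^ 2 + k3 ^ 2 / (4 * μ) * sS ^ 2 - k3 * (sS * sT)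
        = (2 * μ * sT - k3 * sS) ^ 2 / (4 * μ) := by
      field_simp; ring
    have h6 : 0 ≤ (2 * μ * sT - k3 * sS) ^ 2 / (4 * μ) := by positivity
    linarith
  have b7 : a * (θ0 ^ 2 * S) ≤ a * (1 / ν₀) * (ν * S) := by
    have : S ≤ 1 / ν₀ * (ν * S) := by
      rw [← mul_assoc]
      have : 1 ≤ 1 / ν₀ * ν := by
        rw [one_div, ← div_eq_inv_mul, le_div_iff₀ hν₀]; linarith
      exact le_mul_of_one_le_left hS0 this
    have h8 : θ0 ^ 2 * S ≤ 1 / ν₀ * (ν * S) := (mul_le_of_le_one_left hS0 hθ2).trans this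
    have := mul_le_mul_of_nonneg_left h8 ha0
    linarith
  have b8 : μ * (ν * S + A * (ν * T)) ≤ μ * (Gam d q g g + A * ∑ k, Gam d q (Y k) (Y k)) := by
    refine mul_le_mul_of_nonneg_left ?_ hμ.le
    exact add_le_add hcoU (mul_le_mul_of_nonneg_left hcoY hA0)
  have b9 := mul_le_mul_of_nonneg_left b5 hA0
  have b10 : A * (k3 * ν * (sS * sT)) ≤ A * (ν * (μ * T + k3 ^ 2 / (4 * μ) * S)) := by
    refine mul_le_mul_of_nonneg_left ?_ hA0
    have := mul_le_mul_of_nonneg_left b6 hνp.le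
    linarith
  have hνS : 0 ≤ ν * S := by positivity
  have b11 : A * (ν * (k3 ^ 2 / (4 * μ) * S) + k2 * ν * S)
      ≤ a * (ν * (k3 ^ 2 / (4 * μ) * S) + k2 * ν * S) :=
    mul_le_mul_of_nonneg_right hAa (by positivity)
  have b12 := mul_le_mul_of_nonneg_right ha hνS
  have b13 : A * (u ^ 2 / (2 * L)) ≤ a * (u ^ 2 / (2 * L)) :=
    mul_le_mul_of_nonneg_right hAa (by positivity)
  have e14 : a / (2 * L) * u ^ 2 = a * (u ^ 2 / (2 * L)) := by ring
  rw [e14]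
  simp only [hY] at b8
  linarith
theorem chi_exists : ∃ Φ Φ' Φ'' : ℝ → ℝ, ∃ K0 : ℝ, 0 ≤ K0 ∧ ContDiff ℝ 2 Φ ∧
    (∀ σ, HasDerivAt Φ (Φ' σ) σ) ∧ (∀ σ, HasDerivAt Φ' (Φ'' σ) σ) ∧
    (∀ σ, 0 ≤ Φ σ) ∧ (∀ σ, Φ σ ≤ 1) ∧ (∀ σ ≤ 1, Φ σ = 1) ∧ (∀ σ, 2 ≤ σ → Φ σ = 0) ∧
    (∀ σ, Φ' σ ≤ 0) ∧ (∀ σ, 0 ≤ σ → |Φ' σ| ≤ K0) ∧ (∀ σ, 0 ≤ σ → |Φ'' σ| ≤ K0) ∧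
    (∀ σ, 2 < σ → Φ' σ = 0) ∧ (∀ σ, 2 < σ → Φ'' σ = 0) := by
  set Φ : ℝ → ℝ := fun σ => Real.smoothTransition (2 - σ) with hΦ
  have hC : ContDiff ℝ 3 Φ := Real.smoothTransition.contDiff.comp (contDiff_const.sub contDiff_id)
  have hC1 : ContDiff ℝ 2 (deriv Φ) := (contDiff_succ_iff_deriv (n := 2)).mp hC |>.2.2
  have hC2 : ContDiff ℝ 1 (deriv (deriv Φ)) := (contDiff_succ_iff_deriv (n := 1)).mp hC1 |>.2.2
  have hd0 : ∀ σ, HasDerivAt Φ (deriv Φ σ) σ := fun σ =>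
    (hC.differentiable (by norm_num) σ).hasDerivAt
  have hd1 : ∀ σ, HasDerivAt (deriv Φ) (deriv (deriv Φ) σ) σ := fun σ =>
    (hC1.differentiable (by norm_num) σ).hasDerivAt
  have hz : ∀ σ, 2 ≤ σ → Φ σ = 0 := fun σ h => by
    simp only [hΦ]; exact Real.smoothTransition.zero_of_nonpos (by linarith)
  have hz1 : ∀ σ, 2 < σ → deriv Φ σ = 0 := fun σ h => by
    have : Φ =ᶠ[nhds σ] fun _ => 0 := by
      filter_upwards [Ioi_mem_nhds h] with y hy using hz y (le_of_lt hy)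
    rw [this.deriv_eq]; simp
  have hz2 : ∀ σ, 2 < σ → deriv (deriv Φ) σ = 0 := fun σ h => by
    have : deriv Φ =ᶠ[nhds σ] fun _ => 0 := by
      filter_upwards [Ioi_mem_nhds h] with y hy using hz1 y hy
    rw [this.deriv_eq]; simp
  obtain ⟨B1, hB1⟩ := (isCompact_Icc (a := (0:ℝ)) (b := 2)).exists_bound_of_continuousOn
    hC1.continuous.continuousOn
  obtain ⟨B2, hB2⟩ := (isCompact_Icc (a := (0:ℝ)) (b := 2)).exists_bound_of_continuousOn
    hC2.continuous.continuousOn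
  have hm : Antitone Φ := fun x y h => Real.smoothTransition.monotone (by linarith)
  have p1 : 0 ≤ B1 := (norm_nonneg _).trans (hB1 0 (by simp))
  have p2 : 0 ≤ B2 := (norm_nonneg _).trans (hB2 0 (by simp))
  refine ⟨Φ, deriv Φ, deriv (deriv Φ), B1 + B2, by positivity, hC.of_le (by norm_num), hd0, hd1,
    fun σ => Real.smoothTransition.nonneg _, fun σ => Real.smoothTransition.le_one _,
    fun σ h => Real.smoothTransition.one_of_one_le (by linarith), hz, fun σ => hm.deriv_nonpos,
    fun σ h => ?_, fun σ h => ?_, hz1, hz2⟩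
  · rcases le_or_gt σ 2 with h2 | h2
    · have := hB1 σ ⟨h, h2⟩
      rw [Real.norm_eq_abs] at this; linarith
    · rw [hz1 σ h2]; simp; positivity
  · rcases le_or_gt σ 2 with h2 | h2
    · have := hB2 σ ⟨h, h2⟩
      rw [Real.norm_eq_abs] at this; linarith
    · rw [hz2 σ h2]; simp; positivity

theorem normsq_c2 {d : ℕ} (ε : ℝ) : ContDiff ℝ 2 (fun x : Euc d => ε * ‖x‖ ^ 2) :=
  contDiff_const.mul (contDiff_norm_sq ℝ)

theorem dd_normsq {d : ℕ} (ε : ℝ) (i : Fin d) :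
    dd d (fun x : Euc d => ε * ‖x‖ ^ 2) i = fun x => 2 * ε * x i := by
  rw [dd_cmul ((contDiff_norm_sq ℝ (n := 2)).differentiable (by norm_num))]
  funext x
  unfold dd
  rw [fderiv_norm_sq_apply]
  simp [EuclideanSpace.inner_single_right]
  ring

theorem hess_normsq {d : ℕ} (ε : ℝ) (i j : Fin d) (x : Euc d) :
    hess d (fun x : Euc d => ε * ‖x‖ ^ 2) x i j = 2 * ε * (if i = j then 1 else 0) := by
  rw [hess_eq, dd_normsq]
  unfold dd
  have : HasFDerivAt (fun y : Euc d => 2 * ε * y j)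
      ((2 * ε) • (EuclideanSpace.proj j : Euc d →L[ℝ] ℝ)) x :=
    ((EuclideanSpace.proj j : Euc d →L[ℝ] ℝ).hasFDerivAt).const_mul (2 * ε)
  rw [this.fderiv]
  simp [eq_comm]

theorem cutoff_exists (d : ℕ) (C₁ C₂ : ℝ) : ∃ K : ℝ, 0 ≤ K ∧ ∀ R : ℝ, 1 ≤ R →
    ∃ θ : Euc d → ℝ, ContDiff ℝ 2 θ ∧ (∀ x, 0 ≤ θ x) ∧ (∀ x, θ x ≤ 1) ∧
      (∀ x, ‖x‖ ≤ R → θ x = 1) ∧ (∀ x, 2 * R ≤ ‖x‖ → θ x = 0) ∧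
      ∀ (q : Fin d → Fin d → ℝ) (β : Fin d → ℝ) (x : Euc d) (ν : ℝ), 0 ≤ ν →
        (∀ i j, q i j = q j i) → (∀ ξ : Fin d → ℝ, 0 ≤ Gam d q ξ ξ) →
        Real.sqrt (∑ i, (∑ j, q i j * x j) ^ 2) + (∑ i, q i i) ≤ C₁ * (1 + ‖x‖ ^ 2) * ν →
        (∑ i, β i * x i) ≤ C₂ * (1 + ‖x‖ ^ 2) * ν →
        (∀ i, |dd d θ i x| ≤ K) ∧ (∀ j, |∑ i, q i j * dd d θ i x| ≤ K * ν) ∧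
        -(K * ν) ≤ A0 d q β θ x := by
  obtain ⟨Φ, Φ', Φ'', K0, hK0, hC, hΦ, hΦ', h0, h1, hone, hzero, hneg, hb1, hb2, hz1, hz2⟩ := chi_exists
  set D1 := |C₁| with hD1
  set D2 := |C₂| with hD2
  have D10 : 0 ≤ D1 := abs_nonneg _
  have D20 : 0 ≤ D2 := abs_nonneg _
  refine ⟨4 * K0 + 6 * K0 * (D1 + D2) + 24 * d * K0 * D1, by positivity, fun R hR => ?_⟩
  have hR0 : 0 < R := by linarith
  set ε := (R ^ 2)⁻¹ with hε
  have hε0 : 0 < ε := by positivity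
  have hεR : ε * R ^ 2 = 1 := by rw [hε]; field_simp
  set f : Euc d → ℝ := fun x => ε * ‖x‖ ^ 2 with hf
  have hf2 : ContDiff ℝ 2 f := normsq_c2 ε
  refine ⟨fun x => Φ (f x), hC.comp hf2, fun x => h0 _, fun x => h1 _, fun x hx => hone _ ?_,
    fun x hx => hzero _ ?_, ?_⟩
  · simp only [hf]
    calc ε * ‖x‖ ^ 2 ≤ ε * R ^ 2 := by gcongr
      _ = 1 := hεR
  · simp only [hf]
    have : ε * (2 * R) ^ 2 ≤ ε * ‖x‖ ^ 2 := by gcongr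
    nlinarith
  intro q β x ν hν hsym hpsd hQ hβ
  have hfx : 0 ≤ f x := by simp only [hf]; positivity
  rw [A0_comp q β hf2 (fun x => hΦ _) (fun x => hΦ' _)]
  simp only [dd_comp (c2_diff hf2) (fun x => hΦ (f x))]
  rcases le_or_gt (f x) 2 with h2 | h2
  swap
  · rw [hz1 _ h2, hz2 _ h2]
    simp only [zero_mul, mul_zero, Finset.sum_const_zero, abs_zero, add_zero]
    refine ⟨fun i => by positivity, fun j => by positivity, ?_⟩
    rw [neg_nonpos]; positivity
  have hx2 : ‖x‖ ^ 2 ≤ 2 * R ^ 2 := by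
    have : R ^ 2 * (ε * ‖x‖ ^ 2) ≤ R ^ 2 * 2 := mul_le_mul_of_nonneg_left h2 (by positivity)
    calc ‖x‖ ^ 2 = (ε * R ^ 2) * ‖x‖ ^ 2 := by rw [hεR, one_mul]
      _ = R ^ 2 * (ε * ‖x‖ ^ 2) := by ring
      _ ≤ _ := by linarith
  have hxn : ‖x‖ ≤ 2 * R := by
    refine abs_le_of_sq_le_sq' (by nlinarith) (by positivity) |>.2
  have hxi : ∀ i, |x i| ≤ 2 * R := fun i => by
    have := PiLp.norm_apply_le x i
    rw [Real.norm_eq_abs] at this; exact this.trans hxn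
  have hRR : R ≤ R ^ 2 := by nlinarith
  have h3 : 1 + ‖x‖ ^ 2 ≤ 3 * R ^ 2 := by nlinarith
  have hqd : ∀ i, 0 ≤ q i i := fun i => by
    have := hpsd (Pi.single i 1)
    simpa [Gam, Pi.single_apply] using this
  have htr0 : 0 ≤ ∑ i, q i i := Finset.sum_nonneg fun i _ => hqd i
  have hB1 : C₁ * (1 + ‖x‖ ^ 2) * ν ≤ D1 * (3 * R ^ 2) * ν := by
    have : C₁ ≤ D1 := le_abs_self _
    gcongr
  have hB2 : C₂ * (1 + ‖x‖ ^ 2) * ν ≤ D2 * (3 * R ^ 2) * ν := by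
    have : C₂ ≤ D2 := le_abs_self _
    gcongr
  have hsq0 : 0 ≤ Real.sqrt (∑ i, (∑ j, q i j * x j) ^ 2) := Real.sqrt_nonneg _
  have hqx : ∀ i, |∑ j, q i j * x j| ≤ D1 * (3 * R ^ 2) * ν := by
    intro i
    have : |∑ j, q i j * x j| ≤ Real.sqrt (∑ i, (∑ j, q i j * x j) ^ 2) := by
      refine Real.abs_le_sqrt ?_
      exact Finset.single_le_sum (f := fun i => (∑ j, q i j * x j) ^ 2) (fun _ _ => sq_nonneg _)
        (Finset.mem_univ i)
    linarith
  have k1 := hb1 _ hfx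
  have k2 := hb2 _ hfx
  refine ⟨fun i => ?_, fun j => ?_, ?_⟩
  · simp only [hf, dd_normsq]
    rw [abs_mul]
    have : |2 * ε * x i| ≤ 4 := by
      rw [abs_mul, abs_of_pos (by positivity)]
      calc 2 * ε * |x i| ≤ 2 * ε * (2 * R ^ 2) := by
            have := hxi i; gcongr; linarith
        _ = 4 * (ε * R ^ 2) := by ring
        _ = 4 := by rw [hεR, mul_one]
    calc |Φ' (ε * ‖x‖ ^ 2)| * |2 * ε * x i| ≤ K0 * 4 := by
          refine mul_le_mul k1 this (abs_nonneg _) hK0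
      _ ≤ _ := by
          have : 0 ≤ 6 * K0 * (D1 + D2) + 24 * d * K0 * D1 := by positivity
          linarith
  · simp only [hf, dd_normsq]
    have e : ∑ i, q i j * (Φ' (ε * ‖x‖ ^ 2) * (2 * ε * x i))
        = Φ' (ε * ‖x‖ ^ 2) * (2 * ε * ∑ i, q j i * x i) := by
      rw [Finset.mul_sum, Finset.mul_sum]
      refine Finset.sum_congr rfl fun i _ => ?_
      rw [hsym i j]; ring
    rw [e, abs_mul, abs_mul, abs_of_pos (show 0 < 2 * ε by positivity)]
    calc _ ≤ K0 * (2 * ε * (D1 * (3 * R ^ 2) * ν)) := by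
          refine mul_le_mul k1 ?_ (by positivity) hK0
          have := hqx j; gcongr
      _ = 6 * K0 * D1 * ν * (ε * R ^ 2) := by ring
      _ = 6 * K0 * D1 * ν := by rw [hεR, mul_one]
      _ ≤ _ := by
          have : 0 ≤ (4 * K0 + 6 * K0 * D2 + 24 * d * K0 * D1) * ν := by positivity
          linarith
  · have eA : A0 d q β f x = 2 * ε * (∑ i, q i i + ∑ i, β i * x i) := by
      have : A0 d q β f x = (∑ i, ∑ j, q i j * hess d f x i j) + ∑ i, β i * dd d f i x := rfl
      rw [this]
      simp only [hf, hess_normsq, dd_normsq, mul_add, Finset.mul_sum]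
      congr 1
      · refine Finset.sum_congr rfl fun i _ => ?_
        simp; ring
      · refine Finset.sum_congr rfl fun i _ => by ring
    have hA : A0 d q β f x ≤ 6 * (D1 + D2) * ν := by
      rw [eA]
      calc _ ≤ 2 * ε * (D1 * (3 * R ^ 2) * ν + D2 * (3 * R ^ 2) * ν) := by
            refine mul_le_mul_of_nonneg_left ?_ (by positivity)
            linarith
        _ = 6 * (D1 + D2) * ν * (ε * R ^ 2) := by ring
        _ = _ := by rw [hεR, mul_one]
    have eG : Gam d q (fun i => dd d f i x) (fun i => dd d f i x)
        = 4 * ε ^ 2 * ∑ i, x i * ∑ j, q i j * x j := by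
      unfold Gam
      simp only [hf, dd_normsq, Finset.mul_sum]
      refine Finset.sum_congr rfl fun i _ => Finset.sum_congr rfl fun j _ => by ring
    have hG0 := hpsd (fun i => dd d f i x)
    have hG : Gam d q (fun i => dd d f i x) (fun i => dd d f i x) ≤ 24 * d * D1 * ν := by
      rw [eG]
      have h5 : |∑ i, x i * ∑ j, q i j * x j| ≤ d * (2 * R ^ 2 * (D1 * (3 * R ^ 2) * ν)) := by
        refine abs_sum_le_card _ _ fun i => ?_
        rw [abs_mul]
        refine mul_le_mul ((hxi i).trans (by linarith)) (hqx i) (abs_nonneg _) (by positivity)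
      calc _ ≤ 4 * ε ^ 2 * (d * (2 * R ^ 2 * (D1 * (3 * R ^ 2) * ν))) := by
            refine mul_le_mul_of_nonneg_left ((le_abs_self _).trans h5) (by positivity)
        _ = 24 * d * D1 * ν * (ε * R ^ 2) ^ 2 := by ring
        _ = _ := by rw [hεR]; ring
    have m1 : -(K0 * (6 * (D1 + D2) * ν)) ≤ Φ' (f x) * A0 d q β f x := by
      have n1 := mul_le_mul_of_nonpos_left hA (hneg (f x))
      have n2 : -K0 ≤ Φ' (f x) := (abs_le.mp k1).1
      have n3 := mul_le_mul_of_nonneg_right n2 (show 0 ≤ 6 * (D1 + D2) * ν by positivity)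
      linarith
    have m2 : -(K0 * (24 * d * D1 * ν)) ≤
        Φ'' (f x) * Gam d q (fun i => dd d f i x) (fun i => dd d f i x) := by
      have n2 : -K0 ≤ Φ'' (f x) := (abs_le.mp k2).1
      have n3 := mul_le_mul_of_nonneg_right n2 hG0
      have n4 := mul_le_mul_of_nonneg_left hG hK0
      linarith
    have : 0 ≤ 4 * K0 * ν := by positivity
    linarith
theorem minEig_coer {d : ℕ} (q : Fin d → Fin d → ℝ) (ξ : Fin d → ℝ) :
    minEig d q * ∑ i, ξ i ^ 2 ≤ Gam d q ξ ξ := by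
  set S := ∑ i, ξ i ^ 2 with hS
  have hS0 : 0 ≤ S := Finset.sum_nonneg fun _ _ => sq_nonneg _
  rcases hS0.eq_or_lt with h | h
  · have hz : ∀ i, ξ i = 0 := by
      intro i
      have := (Finset.sum_eq_zero_iff_of_nonneg (fun i _ => sq_nonneg (ξ i))).mp h.symm i
        (Finset.mem_univ i)
      exact pow_eq_zero_iff (two_ne_zero) |>.mp this
    rw [← h]
    simp [Gam, hz]
  set N := Real.sqrt S with hN
  have hN0 : 0 < N := Real.sqrt_pos.mpr h
  have hN2 : N ^ 2 = S := Real.sq_sqrt hS0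
  set ζ : Euc d := WithLp.toLp 2 (fun i => N⁻¹ * ξ i) with hζ
  have hζn : ‖ζ‖ = 1 := by
    rw [EuclideanSpace.norm_eq, Real.sqrt_eq_one]
    simp only [hζ, Real.norm_eq_abs, sq_abs, mul_pow]
    rw [← Finset.mul_sum, ← hS, ← hN2]
    field_simp
  have hmem : (∑ i, ∑ j, q i j * ζ i * ζ j) ∈
      {r : ℝ | ∃ ξ : Euc d, ‖ξ‖ = 1 ∧ (∑ i, ∑ j, q i j * ξ i * ξ j) = r} := ⟨ζ, hζn, rfl⟩
  have hbd : BddBelow {r : ℝ | ∃ ξ : Euc d, ‖ξ‖ = 1 ∧ (∑ i, ∑ j, q i j * ξ i * ξ j) = r} := by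
    refine ⟨-∑ i, ∑ j, |q i j|, ?_⟩
    rintro r ⟨η, hη, rfl⟩
    have h1 : ∀ i, |η i| ≤ 1 := fun i => by
      have := PiLp.norm_apply_le η i
      rw [Real.norm_eq_abs, hη] at this; exact this
    rw [← Finset.sum_neg_distrib]
    refine Finset.sum_le_sum fun i _ => ?_
    rw [← Finset.sum_neg_distrib]
    refine Finset.sum_le_sum fun j _ => ?_
    have : |q i j * η i * η j| ≤ |q i j| := by
      rw [abs_mul, abs_mul, mul_assoc]
      refine mul_le_of_le_one_right (abs_nonneg _) ?_
      exact mul_le_one₀ (h1 i) (abs_nonneg _) (h1 j)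
    exact (neg_le_neg this).trans (neg_abs_le _)
  have hle := csInf_le hbd hmem
  have e : (∑ i, ∑ j, q i j * ζ i * ζ j) = (N ^ 2)⁻¹ * Gam d q ξ ξ := by
    unfold Gam
    simp only [Finset.mul_sum]
    refine Finset.sum_congr rfl fun i _ => Finset.sum_congr rfl fun j _ => ?_
    simp only [hζ]
    ring
  rw [e, hN2] at hle
  have := mul_le_mul_of_nonneg_right hle hS0
  rw [mul_comm S⁻¹, mul_assoc, inv_mul_cancel₀ h.ne', mul_one] at this
  exact this

theorem holder_cont {d : ℕ} {α : ℝ} (hα : 0 < α) {I : Set ℝ} {g : ℝ → Euc d → ℝ}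
    (hg : LocHolderParab d α I g) {a b : ℝ} (hab : Icc a b ⊆ I) :
    ContinuousOn (fun p : ℝ × Euc d => g p.1 p.2) (Icc a b ×ˢ univ) := by
  intro p hp
  set K : Set (ℝ × Euc d) := Icc a b ×ˢ Metric.closedBall p.2 1 with hK
  have hKc : IsCompact K := isCompact_Icc.prod (isCompact_closedBall _ _)
  obtain ⟨C, hC, hb⟩ := hg K hKc (fun z hz => ⟨hab hz.1, mem_univ _⟩)
  have hpK : p ∈ K := ⟨hp.1, by simp⟩
  have hKn : K ∈ nhdsWithin p (Icc a b ×ˢ univ) := by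
    have : (univ ×ˢ Metric.closedBall p.2 1 : Set (ℝ × Euc d)) ∈ nhds p :=
      prod_mem_nhds univ_mem (Metric.closedBall_mem_nhds _ one_pos)
    filter_upwards [self_mem_nhdsWithin, mem_nhdsWithin_of_mem_nhds this] with z h1 h2
    exact ⟨h1.1, h2.2⟩
  have ht : Tendsto (fun z : ℝ × Euc d => C * pdist d z p ^ α) (nhds p) (nhds 0) := by
    have h1 : Continuous (fun z : ℝ × Euc d => C * pdist d z p ^ α) := by
      unfold pdist
      refine continuous_const.mul (Continuous.rpow_const (by fun_prop) fun _ => Or.inr hα.le)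
    have h2 := h1.tendsto p
    have : pdist d p p = 0 := by simp [pdist]
    rw [this, Real.zero_rpow hα.ne', mul_zero] at h2
    exact h2
  unfold ContinuousWithinAt
  rw [tendsto_iff_dist_tendsto_zero]
  refine squeeze_zero' (Eventually.of_forall fun _ => dist_nonneg) ?_
    (ht.mono_left nhdsWithin_le_nhds)
  filter_upwards [hKn] with z hz
  rw [Real.dist_eq]
  exact hb z hz p hpK

theorem seq_tendsto {d : ℕ} {S : Set ℝ} {E : Type*} [TopologicalSpace E] {g : ℝ → Euc d → E}
    (hg : ContinuousOn (fun p : ℝ × Euc d => g p.1 p.2) (S ×ˢ univ)) {t : ℕ → ℝ} {x : ℕ → Euc d}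
    {t' : ℝ} {x' : Euc d} (htS : ∀ n, t n ∈ S) (ht' : t' ∈ S) (ht : Tendsto t atTop (nhds t'))
    (hx : Tendsto x atTop (nhds x')) : Tendsto (fun n => g (t n) (x n)) atTop (nhds (g t' x')) := by
  have h1 := hg (t', x') ⟨ht', mem_univ _⟩
  have h2 : Tendsto (fun n => (t n, x n)) atTop (nhdsWithin (t', x') (S ×ˢ univ)) :=
    tendsto_nhdsWithin_iff.mpr ⟨ht.prodMk_nhds hx, Eventually.of_forall fun n => ⟨htS n, mem_univ _⟩⟩
  exact h1.tendsto.comp h2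

theorem ee_norm {d : ℕ} (k : Fin d) : ‖ee d k‖ = 1 := by
  simp [ee]

theorem wk_mvt {d : ℕ} {F : Euc d → ℝ} (hF : Differentiable ℝ F) {h : ℝ} (hh : 0 < h) (k : Fin d)
    (x : Euc d) : ∃ σ ∈ Ioo 0 h, wk d F h k x = dd d F k (x + σ • ee d k) := by
  have hd : ∀ σ : ℝ, HasDerivAt (fun σ : ℝ => F (x + σ • ee d k)) (dd d F k (x + σ • ee d k)) σ := by
    intro σ
    have h1 : HasDerivAt (fun σ : ℝ => x + σ • ee d k) (ee d k) σ := by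
      simpa using ((hasDerivAt_id σ).smul_const (ee d k)).const_add x
    exact (hF _).hasFDerivAt.comp_hasDerivAt σ h1
  obtain ⟨σ, hσ, e⟩ := exists_hasDerivAt_eq_slope (fun σ : ℝ => F (x + σ • ee d k)) _ hh
    (fun σ _ => (hd σ).continuousAt.continuousWithinAt) (fun σ _ => hd σ)
  refine ⟨σ, hσ, ?_⟩
  rw [e]
  unfold wk
  simp
  field_simp
  ring

theorem wk_tendsto {d : ℕ} {F : ℝ → Euc d → ℝ} {S : Set ℝ} (k : Fin d)
    (hF : ∀ t ∈ S, Differentiable ℝ (F t))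
    (hc : ContinuousOn (fun p : ℝ × Euc d => dd d (F p.1) k p.2) (S ×ˢ univ))
    {t h : ℕ → ℝ} {x : ℕ → Euc d}
    {t' : ℝ} {x' : Euc d} (htS : ∀ n, t n ∈ S) (ht' : t' ∈ S) (ht : Tendsto t atTop (nhds t'))
    (hx : Tendsto x atTop (nhds x')) (hh : ∀ n, 0 < h n) (hh0 : Tendsto h atTop (nhds 0)) :
    Tendsto (fun n => wk d (F (t n)) (h n) k (x n)) atTop (nhds (dd d (F t') k x')) := by
  choose σ hσ he using fun n => wk_mvt (hF _ (htS n)) (hh n) k (x n)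
  simp only [he]
  have hs : Tendsto σ atTop (nhds 0) :=
    squeeze_zero (fun n => (hσ n).1.le) (fun n => (hσ n).2.le) hh0
  refine seq_tendsto (g := fun t x => dd d (F t) k x) hc htS ht' ht ?_
  simpa using hx.add (hs.smul_const (ee d k))

theorem Gam_tendsto {d : ℕ} {q : ℕ → Fin d → Fin d → ℝ} {a b : ℕ → Fin d → ℝ}
    {q' : Fin d → Fin d → ℝ} {a' b' : Fin d → ℝ}
    (h1 : ∀ i j, Tendsto (fun n => q n i j) atTop (nhds (q' i j)))
    (h2 : ∀ i, Tendsto (fun n => a n i) atTop (nhds (a' i)))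
    (h3 : ∀ i, Tendsto (fun n => b n i) atTop (nhds (b' i))) :
    Tendsto (fun n => Gam d (q n) (a n) (b n)) atTop (nhds (Gam d q' a' b')) := by
  unfold Gam
  exact tendsto_finsetSum _ fun i _ => tendsto_finsetSum _ fun j _ =>
    ((h1 i j).mul (h2 i)).mul (h3 j)

theorem Rem_tendsto {d : ℕ} (a μ : ℝ) {q : ℕ → Fin d → Fin d → ℝ} {A θ0 Aθ : ℕ → ℝ}
    {gθ gU w K : ℕ → Fin d → ℝ} {z : ℕ → Fin d → Fin d → ℝ}
    {q' : Fin d → Fin d → ℝ} {A' θ0' Aθ' : ℝ}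
    {gθ' gU' w' K' : Fin d → ℝ} {z' : Fin d → Fin d → ℝ}
    (h1 : ∀ i j, Tendsto (fun n => q n i j) atTop (nhds (q' i j)))
    (h2 : Tendsto A atTop (nhds A'))
    (h3 : Tendsto θ0 atTop (nhds θ0')) (h4 : Tendsto Aθ atTop (nhds Aθ'))
    (h5 : ∀ i, Tendsto (fun n => gθ n i) atTop (nhds (gθ' i)))
    (h6 : ∀ i, Tendsto (fun n => gU n i) atTop (nhds (gU' i)))
    (h7 : ∀ i, Tendsto (fun n => w n i) atTop (nhds (w' i)))
    (h8 : ∀ i, Tendsto (fun n => K n i) atTop (nhds (K' i)))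
    (h9 : ∀ i j, Tendsto (fun n => z n i j) atTop (nhds (z' i j))) :
    Tendsto (fun n => Rem d (q n) a (A n) μ (θ0 n) (Aθ n) (gθ n) (gU n) (w n) (K n) (z n)) atTop
      (nhds (Rem d q' a A' μ θ0' Aθ' gθ' gU' w' K' z')) := by
  unfold Rem
  have e1 : Tendsto (fun n => a * ∑ k, (θ0 n * w n k) ^ 2) atTop
      (nhds (a * ∑ k, (θ0' * w' k) ^ 2)) :=
    tendsto_const_nhds.mul (tendsto_finsetSum _ fun k _ => (h3.mul (h7 k)).pow 2)
  have e2 : Tendsto (fun n => 2 * A n * ∑ k, θ0 n * w n k * (θ0 n * K n k - w n k * Aθ n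
      - 2 * Gam d (q n) (gθ n) (z n k))) atTop
      (nhds (2 * A' * ∑ k, θ0' * w' k * (θ0' * K' k - w' k * Aθ' - 2 * Gam d q' gθ' (z' k)))) :=
    (tendsto_const_nhds.mul h2).mul (tendsto_finsetSum _ fun k _ => (h3.mul (h7 k)).mul
      (((h3.mul (h8 k)).sub ((h7 k).mul h4)).sub
        (tendsto_const_nhds.mul (Gam_tendsto h1 h5 (h9 k)))))
  have hv : ∀ k i, Tendsto (fun n => θ0 n * z n k i + w n k * gθ n i) atTop
      (nhds (θ0' * z' k i + w' k * gθ' i)) := fun k i => (h3.mul (h9 k i)).add ((h7 k).mul (h5 i))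
  have e3 : Tendsto (fun n => μ * (Gam d (q n) (gU n) (gU n)
      + A n * ∑ k, Gam d (q n) (fun i => θ0 n * z n k i + w n k * gθ n i)
        (fun i => θ0 n * z n k i + w n k * gθ n i))) atTop
      (nhds (μ * (Gam d q' gU' gU'
      + A' * ∑ k, Gam d q' (fun i => θ0' * z' k i + w' k * gθ' i)
        (fun i => θ0' * z' k i + w' k * gθ' i)))) :=
    tendsto_const_nhds.mul ((Gam_tendsto h1 h6 h6).add (h2.mul (tendsto_finsetSum _ fun k _ =>
      Gam_tendsto h1 (hv k) (hv k))))
  exact (e1.add e2).sub e3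
structure SupSol (d : ℕ) (Q : ℝ → Euc d → Fin d → Fin d → ℝ)
    (b : ℝ → Euc d → Fin d → ℝ) (c : ℝ → Euc d → ℝ) (s T : ℝ) (V : ℝ → Euc d → ℝ) : Prop where
  cont : ContinuousOn (fun p : ℝ × Euc d => V p.1 p.2) (Icc s T ×ˢ univ)
  c2 : ∀ t ∈ Ioc s T, ContDiff ℝ 2 (V t)
  td : ∀ t ∈ Ioc s T, ∀ x, DifferentiableAt ℝ (fun τ => V τ x) t
  lv : ∀ t ∈ Ioc s T, ∀ x,
    c t x * V t x ≤ deriv (fun τ => V τ x) t - A0 d (Q t x) (b t x) (V t) x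
  pos : ∀ t ∈ Icc s T, ∀ x, 0 < V t x
  big : ∀ B : ℝ, ∃ ρ : ℝ, ∀ t ∈ Icc s T, ∀ x : Euc d, ρ ≤ ‖x‖ → B ≤ V t x

theorem shift_cont {d : ℕ} {u : ℝ → Euc d → ℝ} {S : Set ℝ}
    (hu : ContinuousOn (fun p : ℝ × Euc d => u p.1 p.2) (S ×ˢ univ)) (e : Euc d) :
    ContinuousOn (fun p : ℝ × Euc d => u p.1 (p.2 + e)) (S ×ˢ univ) := by
  have h1 : ContinuousOn (fun p : ℝ × Euc d => (p.1, p.2 + e)) (S ×ˢ univ) := by fun_prop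
  exact hu.comp h1 (fun p hp => ⟨hp.1, mem_univ _⟩)

theorem wk_cont {d : ℕ} {u : ℝ → Euc d → ℝ} {S : Set ℝ}
    (hu : ContinuousOn (fun p : ℝ × Euc d => u p.1 p.2) (S ×ˢ univ)) (h : ℝ) (k : Fin d) :
    ContinuousOn (fun p : ℝ × Euc d => wk d (u p.1) h k p.2) (S ×ˢ univ) := by
  unfold wk
  exact continuousOn_const.mul ((shift_cont hu _).add (continuousOn_const.mul hu))

theorem GG_cont {d : ℕ} {u : ℝ → Euc d → ℝ} {S : Set ℝ} {θ : Euc d → ℝ} (hθ : Continuous θ)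
    (hu : ContinuousOn (fun p : ℝ × Euc d => u p.1 p.2) (S ×ˢ univ)) (h a s0 : ℝ) :
    ContinuousOn (fun p : ℝ × Euc d => GG d (u p.1) θ h (a * (p.1 - s0)) p.2) (S ×ˢ univ) := by
  unfold GG
  have h1 : ContinuousOn (fun p : ℝ × Euc d => θ p.2) (S ×ˢ univ) := by fun_prop
  refine (hu.mul hu).add (ContinuousOn.mul (by fun_prop) (continuousOn_finsetSum _ fun k _ => ?_))
  exact (h1.mul (wk_cont hu h k)).mul (h1.mul (wk_cont hu h k))

theorem GG_deriv {d : ℕ} {u : ℝ → Euc d → ℝ} {Ut : Euc d → ℝ} {t : ℝ} (θ : Euc d → ℝ)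
    (hu : ∀ y, HasDerivAt (fun τ => u τ y) (Ut y) t) (h a s0 : ℝ) (x : Euc d) :
    HasDerivAt (fun τ => GG d (u τ) θ h (a * (τ - s0)) x)
      (2 * u t x * Ut x + (a * ∑ k, (θ x * wk d (u t) h k x) * (θ x * wk d (u t) h k x)
        + (a * (t - s0)) * ∑ k, 2 * (θ x * wk d (u t) h k x) * (θ x * wk d Ut h k x))) t := by
  have hw : ∀ k, HasDerivAt (fun τ => θ x * wk d (u τ) h k x) (θ x * wk d Ut h k x) t := by
    intro k
    unfold wk
    exact (((hu _).add ((hu x).const_mul (-1))).const_mul h⁻¹).const_mul (θ x)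
  have hA : HasDerivAt (fun τ => a * (τ - s0)) a t := by
    simpa using ((hasDerivAt_id t).sub_const s0).const_mul a
  have hs : HasDerivAt (fun τ => ∑ k, (θ x * wk d (u τ) h k x) * (θ x * wk d (u τ) h k x))
      (∑ k, 2 * (θ x * wk d (u t) h k x) * (θ x * wk d Ut h k x)) t := by
    have := HasDerivAt.fun_sum (u := Finset.univ) (fun k _ => (hw k).mul (hw k))
    refine this.congr_deriv ?_
    refine Finset.sum_congr rfl fun k _ => by ring
  have := ((hu x).mul (hu x)).add (hA.mul hs)
  refine this.congr_deriv ?_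
  ring

theorem GG_run {d : ℕ} (Q : ℝ → Euc d → Fin d → Fin d → ℝ) (b : ℝ → Euc d → Fin d → ℝ)
    (c : ℝ → Euc d → ℝ) (s s0 T r κ μ : ℝ) (hr : 0 < r) (hμ2 : μ ≤ 2) (hμr : μ ≤ 4 / r - 2)
    (hss : s ≤ s0) {V : ℝ → Euc d → ℝ} (hV : SupSol d Q b c s T V)
    (hsym : ∀ t ∈ Icc s T, ∀ x, ∀ i j, Q t x i j = Q t x j i)
    (hpsd : ∀ t ∈ Icc s T, ∀ x, ∀ ξ : Fin d → ℝ, 0 ≤ Gam d (Q t x) ξ ξ)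
    {f : Euc d → ℝ} {u : ℝ → Euc d → ℝ} (hu : IsClassicalSolution d Q b c s f u)
    {θ : Euc d → ℝ} (hθ : ContDiff ℝ 2 θ) (h a : ℝ) (ha : 0 ≤ a)
    (hinit : ∀ x, GG d (u s0) θ h (a * (s0 - s0)) x ≤ Real.exp (r * κ * (s0 - s)) * V s0 x ^ r)
    (ρ : ℝ) (hfar : ∀ t ∈ Icc s0 T, ∀ x : Euc d, ρ ≤ ‖x‖ →
      GG d (u t) θ h (a * (t - s0)) x ≤ Real.exp (r * κ * (t - s)) * V t x ^ r)
    (t1 : ℝ) (ht1 : t1 ∈ Icc s0 T) (x1 : Euc d)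
    (hbad : Real.exp (r * κ * (t1 - s)) * V t1 x1 ^ r < GG d (u t1) θ h (a * (t1 - s0)) x1) :
    ∃ t ∈ Ioc s0 T, ∃ x : Euc d, ‖x‖ ≤ ρ ∧
      Real.exp (r * κ * (t - s)) * V t x ^ r < GG d (u t) θ h (a * (t - s0)) x ∧
      (r * κ - (2 - r) * c t x) * GG d (u t) θ h (a * (t - s0)) x ≤
      Rem d (Q t x) a (a * (t - s0)) μ (θ x) (A0 d (Q t x) (b t x) θ x) (fun i => dd d θ i x)
        (fun i => dd d (u t) i x)
        (fun k => wk d (u t) h k x) (KK d (Q t) (b t) (c t) (u t) h x)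
        (fun k i => wk d (dd d (u t) i) h k x) := by
  have sub1 : Icc s0 T ⊆ Icc s T := Icc_subset_Icc_left hss
  have sub2 : Ioc s0 T ⊆ Ioc s T := Ioc_subset_Ioc_left hss
  have sub3 : Ioc s0 T ⊆ Icc s T := sub2.trans Ioc_subset_Icc_self
  have huc : ContinuousOn (fun p : ℝ × Euc d => u p.1 p.2) (Icc s0 T ×ˢ univ) :=
    hu.cont.mono (prod_mono (fun t ht => hss.trans ht.1) subset_rfl)
  have hud : ∀ t ∈ Ioc s0 T, ∀ y, HasDerivAt (fun τ => u τ y) (deriv (fun τ => u τ y) t) t :=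
    fun t ht y => (hu.tdiff t (hss.trans_lt ht.1) y).hasDerivAt
  obtain ⟨t, ht, x, hx, hlt, hmax⟩ := ratio_max Q b c s s0 T r κ hr
    (fun t x => GG d (u t) θ h (a * (t - s0)) x)
    (fun t x => 2 * u t x * deriv (fun τ => u τ x) t +
      (a * ∑ k, (θ x * wk d (u t) h k x) * (θ x * wk d (u t) h k x)
        + (a * (t - s0)) * ∑ k, 2 * (θ x * wk d (u t) h k x) *
          (θ x * wk d (fun y => deriv (fun τ => u τ y) t) h k x)))
    V (fun t x => deriv (fun τ => V τ x) t)
    (GG_cont hθ.continuous huc h a s0) (hV.cont.mono (prod_mono sub1 subset_rfl))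
    (fun t ht x => hV.pos t (sub1 ht) x)
    (fun t ht => c2_GG (hu.xdiff t (hss.trans_lt ht.1)) hθ h _)
    (fun t ht => hV.c2 t (sub2 ht))
    (fun t ht x => GG_deriv θ (hud t ht) h a s0 x)
    (fun t ht x => (hV.td t (sub2 ht) x).hasDerivAt)
    (fun t ht x => hV.lv t (sub2 ht) x)
    (fun t ht x => hsym t (sub3 ht) x) (fun t ht x => hpsd t (sub3 ht) x)
    hinit ρ hfar t1 ht1 x1 hbad
  refine ⟨t, ht, x, hx, hlt, ?_⟩
  have hGpos : 0 < GG d (u t) θ h (a * (t - s0)) x :=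
    (mul_pos (Real.exp_pos _) (Real.rpow_pos_of_pos (hV.pos t (sub3 ht) x) _)).trans hlt
  exact GG_static (Q t) (b t) (c t) x (hsym t (sub3 ht) x) (hpsd t (sub3 ht) x)
    (hu.xdiff t (hss.trans_lt ht.1)) hθ h (a * (t - s0)) a
    (mul_nonneg ha (by linarith [ht.1]))
    (fun y => hu.pde t (hss.trans_lt ht.1) y) r κ μ hr hμ2 hμr hGpos hmax

theorem far_exists {d : ℕ} {Q : ℝ → Euc d → Fin d → Fin d → ℝ} {b : ℝ → Euc d → Fin d → ℝ}
    {c : ℝ → Euc d → ℝ} {s T r κ : ℝ} (hr : 0 < r) (hκ : 0 ≤ κ)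
    {V : ℝ → Euc d → ℝ} (hV : SupSol d Q b c s T V) (B : ℝ) (hB : 0 ≤ B) :
    ∃ ρ : ℝ, ∀ t ∈ Icc s T, ∀ x : Euc d, ρ ≤ ‖x‖ → B ≤ Real.exp (r * κ * (t - s)) * V t x ^ r := by
  obtain ⟨ρ, hρ⟩ := hV.big (B ^ (1 / r))
  refine ⟨ρ, fun t ht x hx => ?_⟩
  have h1 := Real.rpow_le_rpow (Real.rpow_nonneg hB _) (hρ t ht x hx) hr.le
  rw [← Real.rpow_mul hB, one_div_mul_cancel hr.ne', Real.rpow_one] at h1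
  have h2 : 1 ≤ Real.exp (r * κ * (t - s)) :=
    Real.one_le_exp (mul_nonneg (mul_nonneg hr.le hκ) (by linarith [ht.1]))
  exact h1.trans (le_mul_of_one_le_left (hB.trans h1) h2)

theorem run1 {d : ℕ} (Q : ℝ → Euc d → Fin d → Fin d → ℝ) (b : ℝ → Euc d → Fin d → ℝ)
    (c : ℝ → Euc d → ℝ) (s T r κ μ c₁ : ℝ) (hr : 0 < r) (hr2 : r < 2) (hκ : 0 ≤ κ)
    (hμ0 : 0 ≤ μ) (hμ2 : μ ≤ 2) (hμr : μ ≤ 4 / r - 2)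
    {V : ℝ → Euc d → ℝ} (hV : SupSol d Q b c s T V)
    (hsym : ∀ t ∈ Icc s T, ∀ x, ∀ i j, Q t x i j = Q t x j i)
    (hpsd : ∀ t ∈ Icc s T, ∀ x, ∀ ξ : Fin d → ℝ, 0 ≤ Gam d (Q t x) ξ ξ)
    (hc : ∀ t ∈ Icc s T, ∀ x, c t x ≤ c₁) (hκc : (2 - r) * c₁ < r * κ)
    {f : Euc d → ℝ} {u : ℝ → Euc d → ℝ} (hu : IsClassicalSolution d Q b c s f u)
    (B : ℝ) (hB : ∀ t ∈ Icc s T, ∀ x, |u t x| ≤ B)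
    (hinit : ∀ x, f x ^ 2 ≤ V s x ^ r) :
    ∀ t ∈ Icc s T, ∀ x, u t x ^ 2 ≤ Real.exp (r * κ * (t - s)) * V t x ^ r := by
  intro t1 ht1 x1
  by_contra hbad
  push Not at hbad
  have e : ∀ t x, GG d (u t) (fun _ => (0:ℝ)) 1 (0 * (t - s)) x = u t x ^ 2 := by
    intro t x; unfold GG; ring
  obtain ⟨ρ, hρ⟩ := far_exists hr hκ hV (B ^ 2) (sq_nonneg _)
  obtain ⟨t, ht, x, -, hlt, hle⟩ := GG_run Q b c s s T r κ μ hr hμ2 hμr le_rfl hV hsym hpsd hu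
    (θ := fun _ => (0:ℝ)) contDiff_const 1 0 le_rfl
    (fun x => by rw [e, hu.init]; simpa using hinit x) ρ
    (fun t ht x hx => by
      rw [e]
      refine le_trans ?_ (hρ t ht x hx)
      rw [← sq_abs]
      exact pow_le_pow_left₀ (abs_nonneg _) (hB t ht x) 2) t1 ht1 x1 (by rw [e]; exact hbad)
  have ht' : t ∈ Icc s T := Ioc_subset_Icc_self ht
  rw [e] at hlt hle
  have hpos : 0 < u t x ^ 2 :=
    (mul_pos (Real.exp_pos _) (Real.rpow_pos_of_pos (hV.pos t ht' x) _)).trans hlt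
  have h1 : 0 < r * κ - (2 - r) * c t x := by
    have := mul_le_mul_of_nonneg_left (hc t ht' x) (show 0 ≤ 2 - r by linarith)
    linarith
  have h2 := mul_pos h1 hpos
  have h3 := mul_nonneg hμ0 (hpsd t ht' x (fun i => dd d (u t) i x))
  unfold Rem at hle
  simp only [zero_mul, mul_zero, add_zero, zero_sub] at hle
  linarith
def K0lim (d : ℕ) (Q : Euc d → Fin d → Fin d → ℝ) (b : Euc d → Fin d → ℝ)
    (c : Euc d → ℝ) (U : Euc d → ℝ) (x : Euc d) (k : Fin d) : ℝ :=
  (∑ i, ∑ j, dd d (fun y => Q y i j) k x * hess d U x i j)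
  + (∑ i, dd d (fun y => b y i) k x * dd d U i x)
  + dd d c k x * U x

theorem KK_eq {d : ℕ} (Q : Euc d → Fin d → Fin d → ℝ) (b : Euc d → Fin d → ℝ)
    (c : Euc d → ℝ) (U : Euc d → ℝ) (h : ℝ) (x : Euc d) (k : Fin d) :
    KK d Q b c U h x k =
      (∑ i, ∑ j, wk d (fun y => Q y i j) h k x * hess d U (x + h • ee d k) i j)
      + (∑ i, wk d (fun y => b y i) h k x * dd d U i (x + h • ee d k))
      + wk d c h k x * U (x + h • ee d k) := by
  unfold KK wk
  simp only [neg_one_mul, ← sub_eq_add_neg]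

theorem GG_unif_bound {d : ℕ} {u : ℝ → Euc d → ℝ} {s0 T R B a : ℝ} (ha : 0 ≤ a)
    (_hR : 0 ≤ R)
    (hud : ∀ t ∈ Icc s0 T, Differentiable ℝ (u t))
    (hug : ∀ k, ContinuousOn (fun p : ℝ × Euc d => dd d (u p.1) k p.2) (Icc s0 T ×ˢ univ))
    (hB : ∀ t ∈ Icc s0 T, ∀ x, |u t x| ≤ B)
    {θ : Euc d → ℝ} (hθ0 : ∀ x, 0 ≤ θ x) (hθ1 : ∀ x, θ x ≤ 1) (hθz : ∀ x, R ≤ ‖x‖ → θ x = 0) :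
    ∃ D : ℝ, 0 ≤ D ∧ ∀ h ∈ Ioc (0:ℝ) 1, ∀ t ∈ Icc s0 T, ∀ x,
      GG d (u t) θ h (a * (t - s0)) x ≤ D := by
  have hK : IsCompact (Icc s0 T ×ˢ Metric.closedBall (0 : Euc d) (R + 1)) :=
    isCompact_Icc.prod (isCompact_closedBall _ _)
  have hex : ∀ k, ∃ C, ∀ p ∈ Icc s0 T ×ˢ Metric.closedBall (0 : Euc d) (R + 1),
      ‖dd d (u p.1) k p.2‖ ≤ C := fun k =>
    hK.exists_bound_of_continuousOn ((hug k).mono (prod_mono subset_rfl (subset_univ _)))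
  choose C hC using hex
  set S := ∑ k, C k ^ 2 with hS
  have hS0 : 0 ≤ S := Finset.sum_nonneg fun _ _ => sq_nonneg _
  refine ⟨B ^ 2 + a * |T - s0| * S, by positivity, fun h hh t ht x => ?_⟩
  unfold GG
  have h1 : u t x * u t x ≤ B ^ 2 := by
    rw [← pow_two, ← sq_abs]
    exact pow_le_pow_left₀ (abs_nonneg _) (hB t ht x) 2
  have h2 : ∑ k, θ x * wk d (u t) h k x * (θ x * wk d (u t) h k x) ≤ S := by
    refine Finset.sum_le_sum fun k _ => ?_
    rcases le_or_gt R ‖x‖ with hx | hx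
    · rw [hθz x hx]; simp; positivity
    · obtain ⟨σ, hσ, e⟩ := wk_mvt (hud t ht) hh.1 k x
      have hb : |wk d (u t) h k x| ≤ C k := by
        rw [e]
        refine hC k (t, x + σ • ee d k) ⟨ht, ?_⟩
        rw [mem_closedBall_zero_iff]
        refine (norm_add_le _ _).trans ?_
        rw [norm_smul, ee_norm, mul_one, Real.norm_eq_abs, abs_of_pos hσ.1]
        linarith [hσ.2, hh.2]
      rw [← pow_two, ← sq_abs, abs_mul, abs_of_nonneg (hθ0 x)]
      refine pow_le_pow_left₀ (mul_nonneg (hθ0 x) (abs_nonneg _)) ?_ 2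
      exact (mul_le_of_le_one_left (abs_nonneg _) (hθ1 x)).trans hb
  have h3 : 0 ≤ t - s0 := by linarith [ht.1]
  have h4 : t - s0 ≤ |T - s0| := (by linarith [ht.2] : t - s0 ≤ T - s0).trans (le_abs_self _)
  refine add_le_add h1 ?_
  have h5 : 0 ≤ ∑ k, θ x * wk d (u t) h k x * (θ x * wk d (u t) h k x) :=
    Finset.sum_nonneg fun k _ => mul_self_nonneg _
  gcongr

theorem run2 {d : ℕ} (Q : ℝ → Euc d → Fin d → Fin d → ℝ) (b : ℝ → Euc d → Fin d → ℝ)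
    (c : ℝ → Euc d → ℝ) (s s0 T r κ μ c₁ a R ζ : ℝ) (hr : 0 < r) (hr2 : r < 2) (hκ : 0 ≤ κ)
    (hμ2 : μ ≤ 2) (hμr : μ ≤ 4 / r - 2) (hss : s < s0) (ha : 0 ≤ a) (hR : 0 ≤ R)
    {V : ℝ → Euc d → ℝ} (hV : SupSol d Q b c s T V)
    (hsym : ∀ t ∈ Icc s T, ∀ x, ∀ i j, Q t x i j = Q t x j i)
    (hpsd : ∀ t ∈ Icc s T, ∀ x, ∀ ξ : Fin d → ℝ, 0 ≤ Gam d (Q t x) ξ ξ)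
    (hQd : ∀ t ∈ Icc s T, ∀ i j, Differentiable ℝ (fun y => Q t y i j))
    (hbd : ∀ t ∈ Icc s T, ∀ i, Differentiable ℝ (fun y => b t y i))
    (hcd : ∀ t ∈ Icc s T, Differentiable ℝ (c t))
    (hQc : ∀ i j, ContinuousOn (fun p : ℝ × Euc d => Q p.1 p.2 i j) (Icc s T ×ˢ univ))
    (hbc : ∀ i, ContinuousOn (fun p : ℝ × Euc d => b p.1 p.2 i) (Icc s T ×ˢ univ))
    (hcc : ContinuousOn (fun p : ℝ × Euc d => c p.1 p.2) (Icc s T ×ˢ univ))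
    (hQg : ∀ i j k, ContinuousOn (fun p : ℝ × Euc d => dd d (fun y => Q p.1 y i j) k p.2)
      (Icc s T ×ˢ univ))
    (hbg : ∀ i k, ContinuousOn (fun p : ℝ × Euc d => dd d (fun y => b p.1 y i) k p.2)
      (Icc s T ×ˢ univ))
    (hcg : ∀ k, ContinuousOn (fun p : ℝ × Euc d => dd d (c p.1) k p.2) (Icc s T ×ˢ univ))
    (hc : ∀ t ∈ Icc s T, ∀ x, c t x ≤ c₁) (hζ : 0 ≤ ζ) (hκc : (2 - r) * c₁ + ζ < r * κ)
    {f : Euc d → ℝ} {u : ℝ → Euc d → ℝ} (hu : IsClassicalSolution d Q b c s f u)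
    (B : ℝ) (hB : ∀ t ∈ Icc s T, ∀ x, |u t x| ≤ B)
    {θ : Euc d → ℝ} (hθ : ContDiff ℝ 2 θ) (hθ0 : ∀ x, 0 ≤ θ x) (hθ1 : ∀ x, θ x ≤ 1)
    (hθz : ∀ x, R ≤ ‖x‖ → θ x = 0)
    (hinit : ∀ x, u s0 x ^ 2 ≤ Real.exp (r * κ * (s0 - s)) * V s0 x ^ r)
    (hRem : ∀ t ∈ Icc s0 T, ∀ x,
      Rem d (Q t x) a (a * (t - s0)) μ (θ x) (A0 d (Q t x) (b t x) θ x) (fun i => dd d θ i x)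
        (fun i => dd d (u t) i x) (fun k => dd d (u t) k x)
        (K0lim d (Q t) (b t) (c t) (u t) x) (fun k i => hess d (u t) x k i) ≤ ζ * u t x ^ 2) :
    ∀ t ∈ Icc s0 T, ∀ x, u t x * u t x + a * (t - s0) * ∑ k, (θ x * dd d (u t) k x) * (θ x * dd d (u t) k x)
      ≤ Real.exp (r * κ * (t - s)) * V t x ^ r := by
  intro t1 ht1 x1
  by_contra hbad
  push Not at hbad
  have sub1 : Icc s0 T ⊆ Icc s T := Icc_subset_Icc_left hss.le
  have subP : Icc s0 T ×ˢ (univ : Set (Euc d)) ⊆ Icc s T ×ˢ univ := prod_mono sub1 subset_rfl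
  have subI : Icc s0 T ×ˢ (univ : Set (Euc d)) ⊆ Ioi s ×ˢ univ :=
    prod_mono (fun t ht => hss.trans_le ht.1) subset_rfl
  have hu2 : ∀ t ∈ Icc s0 T, ContDiff ℝ 2 (u t) := fun t ht => hu.xdiff t (hss.trans_le ht.1)
  have huc : ContinuousOn (fun p : ℝ × Euc d => u p.1 p.2) (Icc s0 T ×ˢ univ) :=
    hu.cont.mono (prod_mono (fun t ht => hss.le.trans ht.1) subset_rfl)
  have hug : ∀ k, ContinuousOn (fun p : ℝ × Euc d => dd d (u p.1) k p.2) (Icc s0 T ×ˢ univ) := by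
    intro k
    unfold dd
    exact (hu.grad_cont.mono subI).clm_apply continuousOn_const
  have huh : ∀ i j, ContinuousOn (fun p : ℝ × Euc d => hess d (u p.1) p.2 i j)
      (Icc s0 T ×ˢ univ) := by
    intro i j
    have := hu.hess_cont.mono subI
    exact continuousOn_pi.mp (continuousOn_pi.mp this i) j
  -- uniform bound
  obtain ⟨D, hD0, hD⟩ := GG_unif_bound ha hR (fun t ht => c2_diff (hu2 t ht)) hug
    (fun t ht => hB t (sub1 ht)) hθ0 hθ1 hθz
  obtain ⟨ρ, hρ⟩ := far_exists hr hκ hV D hD0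
  set h : ℕ → ℝ := fun n => 1 / ((n : ℝ) + 1) with hh
  have hpos : ∀ n, 0 < h n := fun n => by simp only [hh]; positivity
  have hle1 : ∀ n, h n ≤ 1 := fun n => by
    simp only [hh]; rw [div_le_one (by positivity)]; linarith [(Nat.cast_nonneg n : (0:ℝ) ≤ n)]
  have hlim : Tendsto h atTop (nhds 0) := tendsto_one_div_add_atTop_nhds_zero_nat
  have hGlim : ∀ (t : ℕ → ℝ) (x : ℕ → Euc d) (g : ℕ → ℝ) (t' : ℝ) (x' : Euc d),
      (∀ n, t n ∈ Icc s0 T) → t' ∈ Icc s0 T → Tendsto t atTop (nhds t') →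
      Tendsto x atTop (nhds x') → (∀ n, 0 < g n) → Tendsto g atTop (nhds 0) →
      Tendsto (fun n => GG d (u (t n)) θ (g n) (a * (t n - s0)) (x n)) atTop
        (nhds (u t' x' * u t' x' +
          a * (t' - s0) * ∑ k, (θ x' * dd d (u t') k x') * (θ x' * dd d (u t') k x'))) := by
    intro t x g t' x' h1 h2 h3 h4 h5 h6
    unfold GG
    have e1 := seq_tendsto huc h1 h2 h3 h4
    have e2 : Tendsto (fun n => θ (x n)) atTop (nhds (θ x')) := (hθ.continuous.tendsto x').comp h4
    refine (e1.mul e1).add ((tendsto_const_nhds.mul (h3.sub tendsto_const_nhds)).mul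
      (tendsto_finsetSum _ fun k _ => ?_))
    have e3 := wk_tendsto k (fun t ht => c2_diff (hu2 t ht)) (hug k) h1 h2 h3 h4 h5 h6
    exact (e2.mul e3).mul (e2.mul e3)
  have hev := (hGlim (fun _ => t1) (fun _ => x1) h t1 x1 (fun _ => ht1) ht1 tendsto_const_nhds
    tendsto_const_nhds hpos hlim).eventually (lt_mem_nhds hbad)
  obtain ⟨N, hN⟩ := eventually_atTop.mp hev
  set g : ℕ → ℝ := fun n => h (n + N) with hg
  have hgpos : ∀ n, 0 < g n := fun n => hpos _
  have hglim : Tendsto g atTop (nhds 0) := hlim.comp (tendsto_add_atTop_nat N)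
  have hrun := fun n => GG_run Q b c s s0 T r κ μ hr hμ2 hμr hss.le hV hsym hpsd hu hθ (g n) a ha
    (fun x => by
      have : GG d (u s0) θ (g n) (a * (s0 - s0)) x = u s0 x ^ 2 := by unfold GG; ring
      rw [this]; exact hinit x) ρ
    (fun t ht x hx => (hD (g n) ⟨hgpos n, hle1 _⟩ t ht x).trans (hρ t (sub1 ht) x hx))
    t1 ht1 x1 (hN (n + N) (Nat.le_add_left _ _))
  choose t ht x hx hlt hle using hrun
  have hK : IsCompact (Icc s0 T ×ˢ Metric.closedBall (0 : Euc d) ρ) :=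
    isCompact_Icc.prod (isCompact_closedBall _ _)
  obtain ⟨⟨t', x'⟩, ⟨ht', -⟩, φ, hφ, hconv⟩ := hK.tendsto_subseq (x := fun n => (t n, x n))
    (fun n => ⟨Ioc_subset_Icc_self (ht n), by simpa using hx n⟩)
  simp only at ht'
  have c1 : Tendsto (fun n => t (φ n)) atTop (nhds t') := (continuous_fst.tendsto _).comp hconv
  have c2 : Tendsto (fun n => x (φ n)) atTop (nhds x') := (continuous_snd.tendsto _).comp hconv
  have c3 : Tendsto (fun n => g (φ n)) atTop (nhds 0) := hglim.comp hφ.tendsto_atTop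
  have p1 : ∀ n, t (φ n) ∈ Icc s0 T := fun n => Ioc_subset_Icc_self (ht _)
  have p1' : ∀ n, t (φ n) ∈ Icc s T := fun n => sub1 (p1 n)
  have ht'' : t' ∈ Icc s T := sub1 ht'
  have p3 : ∀ n, 0 < g (φ n) := fun n => hgpos _
  have gl := hGlim _ _ _ t' x' p1 ht' c1 c2 p3 c3
  set G := u t' x' * u t' x' +
    a * (t' - s0) * ∑ k, (θ x' * dd d (u t') k x') * (θ x' * dd d (u t') k x') with hG
  have hVl := seq_tendsto hV.cont p1' ht'' c1 c2
  have hVp := hV.pos t' ht'' x'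
  have hl : Tendsto (fun n => Real.exp (r * κ * (t (φ n) - s)) * V (t (φ n)) (x (φ n)) ^ r) atTop
      (nhds (Real.exp (r * κ * (t' - s)) * V t' x' ^ r)) := by
    refine Tendsto.mul ?_ (hVl.rpow_const (Or.inl hVp.ne'))
    exact (Real.continuous_exp.tendsto _).comp (tendsto_const_nhds.mul (c1.sub tendsto_const_nhds))
  have hG1 : Real.exp (r * κ * (t' - s)) * V t' x' ^ r ≤ G :=
    le_of_tendsto_of_tendsto' hl gl fun n => (hlt (φ n)).le
  have hGpos : 0 < G := lt_of_lt_of_le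
    (mul_pos (Real.exp_pos _) (Real.rpow_pos_of_pos hVp _)) hG1
  have hcl := seq_tendsto hcc p1' ht'' c1 c2
  have cs : ∀ k, Tendsto (fun n => x (φ n) + g (φ n) • ee d k) atTop (nhds x') := fun k => by
    simpa using c2.add (c3.smul_const (ee d k))
  have tθ : ∀ i, Tendsto (fun n => dd d θ i (x (φ n))) atTop (nhds (dd d θ i x')) := fun i =>
    ((c2_dd hθ i).continuous.tendsto x').comp c2
  have tQ : ∀ i j, Tendsto (fun n => Q (t (φ n)) (x (φ n)) i j) atTop (nhds (Q t' x' i j)) :=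
    fun i j => seq_tendsto (g := fun t x => Q t x i j) (hQc i j) p1' ht'' c1 c2
  have tb : ∀ i, Tendsto (fun n => b (t (φ n)) (x (φ n)) i) atTop (nhds (b t' x' i)) :=
    fun i => seq_tendsto (g := fun t x => b t x i) (hbc i) p1' ht'' c1 c2
  have hθh : ∀ i j, Continuous (fun x => hess d θ x i j) := by
    intro i j
    have h1 : ContDiff ℝ 1 (dd d θ j) := by
      have := hθ.fderiv_right (m := 1) (by norm_num)
      exact this.clm_apply contDiff_const
    have h2 := h1.continuous_fderiv (by norm_num)
    exact h2.clm_apply continuous_const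
  have tA : Tendsto (fun n => A0 d (Q (t (φ n)) (x (φ n))) (b (t (φ n)) (x (φ n))) θ (x (φ n))) atTop
      (nhds (A0 d (Q t' x') (b t' x') θ x')) := by
    unfold A0
    refine (tendsto_finsetSum _ fun i _ => tendsto_finsetSum _ fun j _ => ?_).add
      (tendsto_finsetSum _ fun i _ => (tb i).mul (tθ i))
    exact (tQ i j).mul (((hθh i j).tendsto x').comp c2)
  have tK : ∀ k, Tendsto (fun n => KK d (Q (t (φ n))) (b (t (φ n))) (c (t (φ n))) (u (t (φ n)))
      (g (φ n)) (x (φ n)) k) atTop (nhds (K0lim d (Q t') (b t') (c t') (u t') x' k)) := by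
    intro k
    simp only [KK_eq]
    unfold K0lim
    refine ((tendsto_finsetSum _ fun i _ => tendsto_finsetSum _ fun j _ => ?_).add
      (tendsto_finsetSum _ fun i _ => ?_)).add ?_
    · exact (wk_tendsto (F := fun t y => Q t y i j) k (fun t ht => hQd t ht i j) (hQg i j k)
        p1' ht'' c1 c2 p3 c3).mul
        (seq_tendsto (g := fun t x => hess d (u t) x i j) (huh i j) p1 ht' c1 (cs k))
    · exact (wk_tendsto (F := fun t y => b t y i) k (fun t ht => hbd t ht i) (hbg i k)
        p1' ht'' c1 c2 p3 c3).mul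
        (seq_tendsto (g := fun t x => dd d (u t) i x) (hug i) p1 ht' c1 (cs k))
    · exact (wk_tendsto (F := c) k hcd (hcg k)
        p1' ht'' c1 c2 p3 c3).mul (seq_tendsto huc p1 ht' c1 (cs k))
  have tR := Rem_tendsto a μ tQ
    ((tendsto_const_nhds (x := a)).mul (c1.sub (tendsto_const_nhds (x := s0))))
    ((hθ.continuous.tendsto x').comp c2) tA tθ
    (fun i => seq_tendsto (g := fun t x => dd d (u t) i x) (hug i) p1 ht' c1 c2)
    (fun k => wk_tendsto k (fun t ht => c2_diff (hu2 t ht)) (hug k) p1 ht' c1 c2 p3 c3)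
    tK
    (fun k i => wk_tendsto (F := fun t => dd d (u t) i) k (fun t ht => c2_dd (hu2 t ht) i)
      (huh k i) p1 ht' c1 c2 p3 c3)
  have hfin := le_of_tendsto_of_tendsto'
    (((tendsto_const_nhds (x := r * κ)).sub ((tendsto_const_nhds (x := 2 - r)).mul hcl)).mul gl) tR
    (fun n => hle (φ n))
  have hR2 := hRem t' ht' x'
  have hfin2 : (r * κ - (2 - r) * c t' x') * G ≤ ζ * u t' x' ^ 2 := hfin.trans hR2
  have h1 : ζ < r * κ - (2 - r) * c t' x' := by
    have := mul_le_mul_of_nonneg_left (hc t' ht'' x') (show 0 ≤ 2 - r by linarith)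
    linarith
  have h2 := mul_lt_mul_of_pos_right h1 hGpos
  have h3 : u t' x' ^ 2 ≤ G := by
    rw [hG, pow_two]
    have : 0 ≤ a * (t' - s0) * ∑ k, (θ x' * dd d (u t') k x') * (θ x' * dd d (u t') k x') :=
      mul_nonneg (mul_nonneg ha (by linarith [ht'.1]))
        (Finset.sum_nonneg fun k _ => mul_self_nonneg _)
    linarith
  have h4 := mul_le_mul_of_nonneg_left h3 hζ
  linarith
theorem A0_const {d : ℕ} (q : Fin d → Fin d → ℝ) (β : Fin d → ℝ) (K : ℝ) (x : Euc d) :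
    A0 d q β (fun _ => K) x = 0 := by
  have h1 : ∀ i, dd d (fun _ : Euc d => K) i = fun _ => 0 := by
    intro i; funext x; unfold dd; simp
  have h2 : ∀ i j, hess d (fun _ : Euc d => K) x i j = 0 := by
    intro i j
    rw [hess_eq, h1]; unfold dd; simp
  unfold A0
  simp [h1, h2]

theorem lyap {d : ℕ} (Q : ℝ → Euc d → Fin d → Fin d → ℝ) (b : ℝ → Euc d → Fin d → ℝ)
    (c : ℝ → Euc d → ℝ) (s T c₁ : ℝ) (hc₁ : 0 ≤ c₁) (hc : ∀ t ∈ Icc s T, ∀ x, c t x ≤ c₁)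
    (φ : Euc d → ℝ) (hφ : ContDiff ℝ 2 φ)
    (hco : ∀ M' : ℝ, ∃ R : ℝ, ∀ x : Euc d, R ≤ ‖x‖ → M' ≤ φ x)
    (MJ : ℝ) (hMJ : 0 < MJ) (hA : ∀ t ∈ Icc s T, ∀ x : Euc d, Aop d Q b c t φ x ≤ MJ) :
    ∃ ψ : Euc d → ℝ, ContDiff ℝ 2 ψ ∧ (∀ x, 1 ≤ ψ x) ∧
      (∀ M' : ℝ, ∃ R : ℝ, ∀ x : Euc d, R ≤ ‖x‖ → M' ≤ ψ x) ∧
      ∃ M' ≥ (0:ℝ), ∀ t ∈ Icc s T, ∀ x : Euc d,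
        A0 d (Q t x) (b t x) ψ x + c t x * ψ x ≤ M' * ψ x := by
  obtain ⟨R, hR⟩ := hco 0
  obtain ⟨B, hB⟩ := (isCompact_closedBall (0 : Euc d) R).exists_bound_of_continuousOn
    hφ.continuous.continuousOn
  set K := |B| + 1 with hK
  have hK0 : 0 ≤ K := by positivity
  have h1 : ∀ x, 1 ≤ φ x + K := by
    intro x
    rcases le_total R ‖x‖ with h | h
    · have := hR x h
      have := abs_nonneg B
      linarith
    · have h2 := hB x (by simpa using h)
      rw [Real.norm_eq_abs] at h2
      have := neg_abs_le (φ x)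
      have := le_abs_self B
      linarith
  refine ⟨fun x => φ x + K, hφ.add contDiff_const, h1, fun M' => ?_, MJ + c₁ * K, by positivity,
    fun t ht x => ?_⟩
  · obtain ⟨R', h'⟩ := hco (M' - K)
    exact ⟨R', fun x hx => by linarith [h' x hx]⟩
  · rw [A0_add _ _ hφ contDiff_const, A0_const]
    have h2 : A0 d (Q t x) (b t x) φ x + c t x * φ x ≤ MJ := hA t ht x
    have h3 := mul_le_mul_of_nonneg_right (hc t ht x) hK0
    have h4 : 0 ≤ MJ + c₁ * K := by positivity
    have h5 := le_mul_of_one_le_right h4 (h1 x)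
    linarith

theorem sup_pre {d : ℕ} (Q : ℝ → Euc d → Fin d → Fin d → ℝ) (b : ℝ → Euc d → Fin d → ℝ)
    (c : ℝ → Euc d → ℝ) (s T c₁ : ℝ) (hc : ∀ t ∈ Icc s T, ∀ x, c t x ≤ c₁)
    (hsym : ∀ t ∈ Icc s T, ∀ x, ∀ i j, Q t x i j = Q t x j i)
    (hpsd : ∀ t ∈ Icc s T, ∀ x, ∀ ξ : Fin d → ℝ, 0 ≤ Gam d (Q t x) ξ ξ)
    {ψ : Euc d → ℝ} (hψ : ContDiff ℝ 2 ψ) (hψ1 : ∀ x, 1 ≤ ψ x)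
    (hco : ∀ M' : ℝ, ∃ R : ℝ, ∀ x : Euc d, R ≤ ‖x‖ → M' ≤ ψ x)
    {M' : ℝ} (hM' : 0 ≤ M') (hA : ∀ t ∈ Icc s T, ∀ x : Euc d,
        A0 d (Q t x) (b t x) ψ x + c t x * ψ x ≤ M' * ψ x)
    {F : Euc d → ℝ} (hF : ∀ x, 0 ≤ F x) {v : ℝ → Euc d → ℝ}
    (hv : IsClassicalSolution d Q b c s F v) (B : ℝ) (hB : ∀ t ∈ Icc s T, ∀ x, |v t x| ≤ B) :
    (∀ t ∈ Icc s T, ∀ x, 0 ≤ v t x) ∧ ∀ η > 0,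
      SupSol d Q b c s T (fun t x => v t x + η * (Real.exp (M' * (t - s)) * ψ x)) := by
  have hexp1 : ∀ t ∈ Icc s T, 1 ≤ Real.exp (M' * (t - s)) := fun t ht =>
    Real.one_le_exp (mul_nonneg hM' (by linarith [ht.1]))
  have hcont : ∀ η : ℝ, ContinuousOn (fun p : ℝ × Euc d => v p.1 p.2 +
      η * (Real.exp (M' * (p.1 - s)) * ψ p.2)) (Icc s T ×ˢ univ) := by
    intro η
    have h1 : ContinuousOn (fun p : ℝ × Euc d => v p.1 p.2) (Icc s T ×ˢ univ) :=
      hv.cont.mono (prod_mono (fun t ht => ht.1) subset_rfl)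
    have h2 : Continuous ψ := hψ.continuous
    have h3 : Continuous (fun p : ℝ × Euc d => η * (Real.exp (M' * (p.1 - s)) * ψ p.2)) := by
      fun_prop
    exact h1.add h3.continuousOn
  have hc2 : ∀ η : ℝ, ∀ t ∈ Ioc s T, ContDiff ℝ 2 (fun x => v t x +
      η * (Real.exp (M' * (t - s)) * ψ x)) := fun η t ht =>
    (hv.xdiff t ht.1).add (contDiff_const.mul (contDiff_const.mul hψ))
  have htd : ∀ η : ℝ, ∀ t ∈ Ioc s T, ∀ x, HasDerivAt (fun τ => v τ x +
      η * (Real.exp (M' * (τ - s)) * ψ x))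
      (deriv (fun τ => v τ x) t + η * (Real.exp (M' * (t - s)) * M' * ψ x)) t := by
    intro η t ht x
    have h1 : HasDerivAt (fun τ => M' * (τ - s)) M' t := by
      simpa using ((hasDerivAt_id t).sub_const s).const_mul M'
    exact (hv.tdiff t ht.1 x).hasDerivAt.add ((h1.exp.mul_const (ψ x)).const_mul η)
  have hlv : ∀ η > (0:ℝ), ∀ t ∈ Ioc s T, ∀ x, c t x * (v t x + η * (Real.exp (M' * (t - s)) * ψ x))
      ≤ (deriv (fun τ => v τ x) t + η * (Real.exp (M' * (t - s)) * M' * ψ x))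
        - A0 d (Q t x) (b t x) (fun x => v t x + η * (Real.exp (M' * (t - s)) * ψ x)) x := by
    intro η hη t ht x
    rw [A0_add _ _ (hv.xdiff t ht.1) (contDiff_const.mul (contDiff_const.mul hψ)),
      A0_cmul _ _ (contDiff_const.mul hψ), A0_cmul _ _ hψ, hv.pde t ht.1 x]
    have e : Aop d Q b c t (v t) x = A0 d (Q t x) (b t x) (v t) x + c t x * v t x := rfl
    rw [e]
    have h1 := hA t (Ioc_subset_Icc_self ht) x
    have h2 := mul_le_mul_of_nonneg_left h1
      (mul_nonneg hη.le (Real.exp_pos (M' * (t - s))).le)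
    linarith
  have hbig : ∀ η > (0:ℝ), ∀ B' : ℝ, ∃ ρ : ℝ, ∀ t ∈ Icc s T, ∀ x : Euc d, ρ ≤ ‖x‖ →
      B' ≤ v t x + η * (Real.exp (M' * (t - s)) * ψ x) := by
    intro η hη B'
    obtain ⟨ρ, hρ⟩ := hco ((B' + B) / η)
    refine ⟨ρ, fun t ht x hx => ?_⟩
    have h1 := hρ x hx
    rw [div_le_iff₀ hη] at h1
    have h2 := (abs_le.mp (hB t ht x)).1
    have h3 : ψ x ≤ Real.exp (M' * (t - s)) * ψ x :=
      le_mul_of_one_le_left (by linarith [hψ1 x]) (hexp1 t ht)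
    have h4 := mul_le_mul_of_nonneg_left h3 hη.le
    linarith
  have hnn : ∀ η > (0:ℝ), ∀ t ∈ Icc s T, ∀ x, 0 ≤ v t x + η * (Real.exp (M' * (t - s)) * ψ x) := by
    intro η hη
    obtain ⟨ρ, hρ⟩ := hbig η hη 0
    refine linear_mp Q b c s T c₁ (fun t x => v t x + η * (Real.exp (M' * (t - s)) * ψ x)) _
      (hcont η) (hc2 η) (htd η) (hlv η hη)
      (fun t ht => hsym t (Ioc_subset_Icc_self ht)) (fun t ht => hpsd t (Ioc_subset_Icc_self ht))
      (fun t ht => hc t (Ioc_subset_Icc_self ht)) ?_ ρ hρ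
    intro x
    rw [hv.init]
    have := hF x
    have := hψ1 x
    positivity
  have hv0 : ∀ t ∈ Icc s T, ∀ x, 0 ≤ v t x := by
    intro t ht x
    refine le_of_forall_pos_le_add fun ε hε => ?_
    have hp : 0 < Real.exp (M' * (t - s)) * ψ x :=
      mul_pos (Real.exp_pos _) (by linarith [hψ1 x])
    have := hnn (ε / (Real.exp (M' * (t - s)) * ψ x)) (by positivity) t ht x
    rwa [div_mul_cancel₀ _ hp.ne'] at this
  refine ⟨hv0, fun η hη => ⟨hcont η, hc2 η, fun t ht x => (htd η t ht x).differentiableAt,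
    fun t ht x => ?_, fun t ht x => ?_, hbig η hη⟩⟩
  · rw [(htd η t ht x).deriv]; exact hlv η hη t ht x
  · have hp : 0 < Real.exp (M' * (t - s)) * ψ x :=
      mul_pos (Real.exp_pos _) (by linarith [hψ1 x])
    have := hv0 t ht x
    positivity

theorem norm_fderiv_sq_le {d : ℕ} (l : Euc d →L[ℝ] ℝ) :
    ‖l‖ ^ 2 = ∑ k, l (EuclideanSpace.single k 1) ^ 2 := by
  set S := ∑ k, l (EuclideanSpace.single k 1) ^ 2 with hS
  have hS0 : 0 ≤ S := Finset.sum_nonneg fun _ _ => sq_nonneg _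
  refine le_antisymm ?_ ?_
  · have h1 : ‖l‖ ≤ Real.sqrt S := by
      refine l.opNorm_le_bound (Real.sqrt_nonneg _) fun ξ => ?_
      rw [fderiv_apply_sum, Real.norm_eq_abs]
      refine Real.abs_le_sqrt (x := ∑ i, ξ i * l (EuclideanSpace.single i 1))
        (y := S * ∑ i, ξ i ^ 2) ?_ |>.trans ?_
      · have := Finset.sum_mul_sq_le_sq_mul_sq Finset.univ (fun i => ξ i)
          (fun i => l (EuclideanSpace.single i 1))
        rw [mul_comm S]; exact this
      · rw [Real.sqrt_mul hS0, EuclideanSpace.norm_eq]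
        simp
    calc ‖l‖ ^ 2 ≤ Real.sqrt S ^ 2 := pow_le_pow_left₀ (norm_nonneg _) h1 2
      _ = S := Real.sq_sqrt hS0
  · set w : Euc d := WithLp.toLp 2 (fun k => l (EuclideanSpace.single k 1)) with hw
    have e1 : l w = S := by
      rw [fderiv_apply_sum, hS]
      refine Finset.sum_congr rfl fun i _ => ?_
      simp only [hw]; ring
    have e2 : ‖w‖ = Real.sqrt S := by
      rw [EuclideanSpace.norm_eq]; simp [hw, hS]
    have h1 := l.le_opNorm w
    rw [e1, e2, Real.norm_eq_abs, abs_of_nonneg hS0] at h1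
    have h2 : Real.sqrt S ≤ ‖l‖ := by
      rcases hS0.eq_or_lt with h | h
      · rw [← h]; simp
      · have hp := Real.sqrt_pos.mpr h
        have : Real.sqrt S * Real.sqrt S ≤ ‖l‖ * Real.sqrt S := by
          rw [Real.mul_self_sqrt hS0]; exact h1
        exact le_of_mul_le_mul_right this hp
    calc S = Real.sqrt S ^ 2 := (Real.sq_sqrt hS0).symm
      _ ≤ _ := pow_le_pow_left₀ (Real.sqrt_nonneg _) h2 2
theorem final_alg {p a κ δ N v : ℝ} (hp : 1 < p) (ha : 0 < a) (hδ : 0 < δ) (hN : 0 ≤ N)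
    (hv : 0 ≤ v)
    (h : a * (min 1 δ / 2) * N ^ 2 ≤ Real.exp (2 / p * κ * δ) * v ^ (2 / p)) :
    N ^ p ≤ (2 / a) ^ (p / 2) * max 1 (δ ^ (-(p / 2))) * Real.exp (κ * δ) * v := by
  have hp0 : 0 < p := by linarith
  set m := min 1 δ with hm
  have hm0 : 0 < m := lt_min one_pos hδ
  have h1 : N ^ 2 ≤ (2 / a) * m⁻¹ * (Real.exp (2 / p * κ * δ) * v ^ (2 / p)) := by
    have := mul_le_mul_of_nonneg_left h (show 0 ≤ (2 / a) * m⁻¹ by positivity)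
    refine le_trans (le_of_eq ?_) this
    field_simp
  have h2 := Real.rpow_le_rpow (sq_nonneg N) h1 (show 0 ≤ p / 2 by positivity)
  have e1 : (N ^ 2) ^ (p / 2) = N ^ p := by
    rw [← Real.rpow_natCast, ← Real.rpow_mul hN]
    congr 1
    push_cast; field_simp
  have hv1 : 0 ≤ v ^ (2 / p) := Real.rpow_nonneg hv _
  have e2 : (v ^ (2 / p)) ^ (p / 2) = v := by
    rw [← Real.rpow_mul hv]
    have : 2 / p * (p / 2) = 1 := by field_simp
    rw [this, Real.rpow_one]
  have e3 : (Real.exp (2 / p * κ * δ)) ^ (p / 2) = Real.exp (κ * δ) := by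
    rw [← Real.exp_mul]
    congr 1
    field_simp
  have e4 : m⁻¹ ^ (p / 2) ≤ max 1 (δ ^ (-(p / 2))) := by
    rcases le_total 1 δ with h | h
    · rw [hm, min_eq_left h]
      simp
    · rw [hm, min_eq_right h, Real.inv_rpow hδ.le, ← Real.rpow_neg hδ.le]
      exact le_max_right _ _
  rw [e1, Real.mul_rpow (by positivity) (by positivity), Real.mul_rpow (by positivity) (by positivity),
    Real.mul_rpow (Real.exp_pos _).le hv1, e2, e3] at h2
  refine h2.trans ?_
  have : (2 / a) ^ (p / 2) * m⁻¹ ^ (p / 2) ≤ (2 / a) ^ (p / 2) * max 1 (δ ^ (-(p / 2))) :=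
    mul_le_mul_of_nonneg_left e4 (by positivity)
  calc _ ≤ (2 / a) ^ (p / 2) * max 1 (δ ^ (-(p / 2))) * (Real.exp (κ * δ) * v) :=
        mul_le_mul_of_nonneg_right this (by positivity)
    _ = _ := by ring

theorem limit_eta {X E v w r : ℝ} (hr : 0 < r) (h : ∀ η > (0:ℝ), X ≤ E * (v + η * w) ^ r) :
    X ≤ E * v ^ r := by
  have hc : Continuous (fun η : ℝ => E * (v + η * w) ^ r) :=
    continuous_const.mul (Continuous.rpow_const (by fun_prop) fun _ => Or.inr hr.le)
  have ht := (hc.tendsto 0).mono_left (nhdsWithin_le_nhds (s := Ioi (0:ℝ)))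
  simp only [zero_mul, add_zero] at ht
  refine ge_of_tendsto ht ?_
  filter_upwards [self_mem_nhdsWithin] with η hη using h η hη

theorem abs_dd_le {d : ℕ} (g : Euc d → ℝ) (k : Fin d) (x : Euc d) : |dd d g k x| ≤ ‖fderiv ℝ g x‖ := by
  have h := (fderiv ℝ g x).le_opNorm (EuclideanSpace.single k 1)
  simpa [dd] using h

/-- short-time singular pointwise gradient estimate
`|∇_x u(t,x)|^p ≤ a_p·max{1,(t−s)^{−p/2}}·e^{ω_p(t−s)}·v(t,x)`, `v` being the solution with
datum `|f|^p`. -/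
theorem gradient_estimate_Cb_data
    (d : ℕ) (hd : 1 ≤ d) (I : Set ℝ)
    (hI : ∀ ⦃t t' : ℝ⦄, t ∈ I → t ≤ t' → t' ∈ I)
    (Q : ℝ → Euc d → Fin d → Fin d → ℝ) (b : ℝ → Euc d → Fin d → ℝ) (c : ℝ → Euc d → ℝ)
    (α : ℝ) (hα : α ∈ Ioo (0:ℝ) 1)
    (hQhold : ∀ i j, LocHolderParab d α I (fun t x => Q t x i j))
    (hbhold : ∀ j, LocHolderParab d α I (fun t x => b t x j))
    (hchold : LocHolderParab d α I c)
    (hsymm : ∀ t ∈ I, ∀ x : Euc d, ∀ i j, Q t x i j = Q t x j i)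
    (ν₀ : ℝ) (hν₀ : 0 < ν₀) (hell : ∀ t ∈ I, ∀ x : Euc d, ν₀ ≤ minEig d (Q t x))
    (c₀ : ℝ) (hc₀ : ∀ t ∈ I, ∀ x : Euc d, c t x ≤ c₀)
    -- first-order Bernstein hypotheses with constant growth functions
    (hQdiff : ∀ t ∈ I, ∀ (x : Euc d) (i j : Fin d),
      DifferentiableAt ℝ (fun y => Q t y i j) x)
    (hbdiff : ∀ t ∈ I, ∀ (x : Euc d) (j : Fin d),
      DifferentiableAt ℝ (fun y => b t y j) x)
    (hcdiff : ∀ t ∈ I, ∀ x : Euc d, DifferentiableAt ℝ (fun y => c t y) x)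
    (hgradHold : ∃ α' ∈ Ioo (0:ℝ) 1,
      (∀ i j k, LocHolderParab d α' I
        (fun t x => fderiv ℝ (fun y => Q t y i j) x (EuclideanSpace.single k 1))) ∧
      (∀ j k, LocHolderParab d α' I
        (fun t x => fderiv ℝ (fun y => b t y j) x (EuclideanSpace.single k 1))) ∧
      (∀ k, LocHolderParab d α' I
        (fun t x => fderiv ℝ (fun y => c t y) x (EuclideanSpace.single k 1))))
    (C₁ C₂ : ℝ)
    (hgrowthQ : ∀ t ∈ I, ∀ x : Euc d,
      Real.sqrt (∑ i, (∑ j, Q t x i j * x j) ^ 2) + (∑ i, Q t x i i) ≤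
        C₁ * (1 + ‖x‖ ^ 2) * minEig d (Q t x))
    (hgrowthb : ∀ t ∈ I, ∀ x : Euc d,
      (∑ i, b t x i * x i) ≤ C₂ * (1 + ‖x‖ ^ 2) * minEig d (Q t x))
    (r₀ : ℝ → Euc d → ℝ)
    (hJac : ∀ t ∈ I, ∀ (x : Euc d) (ξ : Euc d),
      (∑ i, ∑ j, fderiv ℝ (fun y => b t y i) x (EuclideanSpace.single j 1) * ξ i * ξ j) ≤
        r₀ t x * ‖ξ‖ ^ 2)
    (C γ : ℝ) (hC : 0 < C) (hγ : γ ∈ Ioo (0:ℝ) 1)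
    (hQgrad : ∀ t ∈ I, ∀ (x : Euc d) (i j : Fin d),
      ‖fderiv ℝ (fun y => Q t y i j) x‖ ≤ C * minEig d (Q t x) ^ γ)
    (ϱ : ℝ → Euc d → ℝ)
    (hϱpos : ∀ a b' : ℝ, Icc a b' ⊆ I → ∃ ε > 0, ∀ t ∈ Icc a b', ∀ x : Euc d, ε ≤ ϱ t x)
    (hcbd : ∀ t ∈ I, ∀ x : Euc d, |c t x| ≤ ϱ t x)
    (hcgrad : ∀ t ∈ I, ∀ x : Euc d, ‖fderiv ℝ (fun y => c t y) x‖ ≤ ϱ t x)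
    (L M : ℝ) (hL : 0 < L)
    (hdiss : ∀ t ∈ I, ∀ x : Euc d,
      r₀ t x + L * ϱ t x ^ 2 ≤ M * minEig d (Q t x) ^ γ)
    -- Hypothesis 4.4: a Lyapunov function with bounded image under A on bounded time intervals
    (hUltima : ∀ a b' : ℝ, Icc a b' ⊆ I →
      ∃ φJ : Euc d → ℝ, ContDiff ℝ 2 φJ ∧
        (∀ M' : ℝ, ∃ R : ℝ, ∀ x : Euc d, R ≤ ‖x‖ → M' ≤ φJ x) ∧
        ∃ MJ > 0, ∀ t ∈ Icc a b', ∀ x : Euc d, Aop d Q b c t φJ x ≤ MJ) :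
    ∀ p : ℝ, 1 < p →
      ∃ a > 0, ∃ ω ≥ (0:ℝ),
        ∀ s ∈ I, ∀ f : Euc d → ℝ, Continuous f → (∃ Mf, ∀ x, |f x| ≤ Mf) →
        ∀ u v : ℝ → Euc d → ℝ,
          IsClassicalSolution d Q b c s f u → BoundedOnStrips d s u →
          IsClassicalSolution d Q b c s (fun x => |f x| ^ p) v → BoundedOnStrips d s v →
          ∀ t, s < t → ∀ x : Euc d,
            ‖fderiv ℝ (u t) x‖ ^ p ≤
              a * max 1 ((t - s) ^ (-(p / 2))) * Real.exp (ω * (t - s)) * v t x := by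
  intro p hp
  have hp0 : 0 < p := by linarith
  set r := 2 / p with hr
  have hr0 : 0 < r := by positivity
  have hr2 : r < 2 := by rw [hr, div_lt_iff₀ hp0]; linarith
  have h4r : 4 / r = 2 * p := by rw [hr]; field_simp; norm_num
  set μ := min 2 (4 / r - 2) with hμ
  have hμ0 : 0 < μ := lt_min two_pos (by rw [h4r]; linarith)
  have hμ2 : μ ≤ 2 := min_le_left _ _
  have hμr : μ ≤ 4 / r - 2 := min_le_right _ _
  obtain ⟨Kθ, hKθ, hcut⟩ := cutoff_exists d C₁ C₂
  set E := ν₀ ^ (γ - 1) with hE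
  have hE0 : 0 < E := Real.rpow_pos_of_pos hν₀ _
  have hνγ : ∀ t ∈ I, ∀ x : Euc d, minEig d (Q t x) ^ γ ≤ E * minEig d (Q t x) := by
    intro t ht x
    have h1 := hell t ht x
    have hpos : 0 < minEig d (Q t x) := hν₀.trans_le h1
    have h2 : minEig d (Q t x) ^ (γ - 1) ≤ E :=
      Real.rpow_le_rpow_of_nonpos hν₀ h1 (by linarith [hγ.2])
    have e : minEig d (Q t x) ^ γ = minEig d (Q t x) ^ (γ - 1) * minEig d (Q t x) := by
      rw [Real.rpow_sub_one hpos.ne', div_mul_cancel₀ _ hpos.ne']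
    rw [e]
    exact mul_le_mul_of_nonneg_right h2 hpos.le
  set CQ := C * E with hCQ
  have hCQ0 : 0 ≤ CQ := by positivity
  set M' := |M| * E with hM'
  have hM'0 : 0 ≤ M' := by positivity
  set W : ℝ := 1 / ν₀ + (2 * d ^ 3 * CQ * Kθ + 4 * d ^ 2 * Kθ ^ 2 + 2 * Kθ + 2 * M')
      + (2 * d ^ 3 * CQ + 4 * d ^ 2 * Kθ) ^ 2 / (4 * μ) with hW
  have hW0 : 0 < W := by
    have h1 : 0 < 1 / ν₀ := by positivity
    have h2 : 0 ≤ 2 * d ^ 3 * CQ * Kθ + 4 * d ^ 2 * Kθ ^ 2 + 2 * Kθ + 2 * M' := by positivity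
    have h3 : 0 ≤ (2 * d ^ 3 * CQ + 4 * d ^ 2 * Kθ) ^ 2 / (4 * μ) := by positivity
    linarith
  set a := μ / W with ha
  have ha0 : 0 < a := by positivity
  have haW : a * W ≤ μ := by rw [ha, div_mul_cancel₀ _ hW0.ne']
  set c₁ := max c₀ 0 with hc₁
  have hc₁0 : 0 ≤ c₁ := le_max_right _ _
  set κ := ((2 - r) * c₁ + a / (2 * L) + 1) / r with hκ
  have h2r : 0 < 2 - r := by linarith
  have hκ0 : 0 ≤ κ := by positivity
  have hrκ : r * κ = (2 - r) * c₁ + a / (2 * L) + 1 := by rw [hκ, mul_div_cancel₀ _ hr0.ne']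
  have haL : 0 ≤ a / (2 * L) := by positivity
  refine ⟨(2 / a) ^ (p / 2), by positivity, κ, hκ0, ?_⟩
  intro s hs f hf hfb u v hu hub hv hvb t hst x
  have hIcc : ∀ T, Icc s T ⊆ I := fun T τ hτ => hI hs hτ.1
  have hsym : ∀ τ ∈ Icc s t, ∀ y, ∀ i j, Q τ y i j = Q τ y j i :=
    fun τ hτ y => hsymm τ (hIcc t hτ) y
  have hpsdI : ∀ τ ∈ I, ∀ y : Euc d, ∀ ξ : Fin d → ℝ, 0 ≤ Gam d (Q τ y) ξ ξ := by
    intro τ hτ y ξ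
    refine le_trans ?_ (minEig_coer (Q τ y) ξ)
    exact mul_nonneg (hν₀.le.trans (hell τ hτ y)) (Finset.sum_nonneg fun _ _ => sq_nonneg _)
  have hpsd : ∀ τ ∈ Icc s t, ∀ y, ∀ ξ : Fin d → ℝ, 0 ≤ Gam d (Q τ y) ξ ξ :=
    fun τ hτ => hpsdI τ (hIcc t hτ)
  have hc : ∀ τ ∈ Icc s t, ∀ y, c τ y ≤ c₁ :=
    fun τ hτ y => (hc₀ τ (hIcc t hτ) y).trans (le_max_left _ _)
  obtain ⟨φ, hφ2, hφco, MJ, hMJ, hφA⟩ := hUltima s t (hIcc t)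
  obtain ⟨ψ, hψ2, hψ1, hψco, M₁, hM₁, hψA⟩ := lyap Q b c s t c₁ hc₁0 hc φ hφ2 hφco MJ hMJ hφA
  obtain ⟨Bu, hBu⟩ := hub t hst
  obtain ⟨Bv, hBv⟩ := hvb t hst
  obtain ⟨hv0, hsup⟩ := sup_pre Q b c s t c₁ hc hsym hpsd hψ2 hψ1 hψco hM₁ hψA
    (F := fun x => |f x| ^ p) (fun x => Real.rpow_nonneg (abs_nonneg _) _) hv Bv hBv
  set δ := min 1 (t - s) / 2 with hδ
  have hm0 : 0 < min 1 (t - s) := lt_min one_pos (by linarith)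
  have hδ0 : 0 < δ := by positivity
  have hδ1 : δ ≤ 1 := by
    have := min_le_left 1 (t - s)
    linarith
  have hδs : δ < t - s := by
    have := min_le_right 1 (t - s)
    linarith
  set s0 := t - δ with hs0
  have hss : s < s0 := by linarith
  obtain ⟨θ, hθ2, hθ0, hθ1, hθone, hθz, hθb⟩ := hcut (max 1 ‖x‖) (le_max_left _ _)
  obtain ⟨α', hα', hQg, hbg, hcg⟩ := hgradHold
  have hRem : ∀ τ ∈ Icc s0 t, ∀ y,
      Rem d (Q τ y) a (a * (τ - s0)) μ (θ y) (A0 d (Q τ y) (b τ y) θ y) (fun i => dd d θ i y)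
        (fun i => dd d (u τ) i y) (fun k => dd d (u τ) k y)
        (K0lim d (Q τ) (b τ) (c τ) (u τ) y) (fun k i => hess d (u τ) y k i)
        ≤ a / (2 * L) * u τ y ^ 2 := by
    intro τ hτ y
    have hτI : τ ∈ I := hI hs (hss.le.trans hτ.1)
    have hν := hell τ hτI y
    have hνp : 0 < minEig d (Q τ y) := hν₀.trans_le hν
    obtain ⟨k1, k2, k3⟩ := hθb (Q τ y) (b τ y) y (minEig d (Q τ y)) hνp.le (hsymm τ hτI y)
      (hpsdI τ hτI y) (hgrowthQ τ hτI y) (hgrowthb τ hτI y)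
    have hτ0 : 0 ≤ τ - s0 := by linarith [hτ.1]
    have hτ1 : τ - s0 ≤ 1 := by linarith [hτ.2]
    refine Rem_bound (Q τ y) (minEig d (Q τ y)) ν₀ a (a * (τ - s0)) μ (θ y) _ (u τ y) (r₀ τ y)
      (ϱ τ y) L M' CQ Kθ _ _ _ _ (fun k i j => dd d (fun z => Q τ z i j) k y)
      (fun k i => dd d (fun z => b τ z i) k y) (fun k => dd d (c τ) k y)
      hν₀ hν (minEig_coer (Q τ y)) (fun k => rfl) ?_ ?_ ?_ ?_ hL hM'0 hCQ0 hKθ (hθ0 y) (hθ1 y)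
      k1 k3 k2 (mul_nonneg ha0.le hτ0) (mul_le_of_le_one_right ha0.le hτ1) hμ0 haW
    · intro k i j
      refine (abs_dd_le _ _ _).trans ((hQgrad τ hτI y i j).trans ?_)
      rw [hCQ, mul_assoc]
      exact mul_le_mul_of_nonneg_left (hνγ τ hτI y) hC.le
    · have h1 := hJac τ hτI y (WithLp.toLp 2 (fun i => dd d (u τ) i y))
      rw [EuclideanSpace.real_norm_sq_eq, Finset.sum_comm] at h1
      exact h1
    · have h1 := Finset.sum_mul_sq_le_sq_mul_sq Finset.univ (fun k => dd d (c τ) k y)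
        (fun k => dd d (u τ) k y)
      refine h1.trans (mul_le_mul_of_nonneg_right ?_ (Finset.sum_nonneg fun _ _ => sq_nonneg _))
      have h2 := norm_fderiv_sq_le (fderiv ℝ (c τ) y)
      have h3 := pow_le_pow_left₀ (norm_nonneg _) (hcgrad τ hτI y) 2
      exact h2.symm.le.trans h3
    · refine (hdiss τ hτI y).trans ?_
      rw [hM', mul_assoc]
      have h1 : 0 ≤ minEig d (Q τ y) ^ γ := Real.rpow_nonneg hνp.le _
      exact (mul_le_mul_of_nonneg_right (le_abs_self M) h1).trans
        (mul_le_mul_of_nonneg_left (hνγ τ hτI y) (abs_nonneg _))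
  have hmain : ∀ η > (0:ℝ), a * (min 1 (t - s) / 2) * ‖fderiv ℝ (u t) x‖ ^ 2 ≤
      Real.exp (2 / p * κ * (t - s)) * (v t x + η * (Real.exp (M₁ * (t - s)) * ψ x)) ^ (2 / p) := by
    intro η hη
    have hS := hsup η hη
    have hr1 := run1 Q b c s t r κ μ c₁ hr0 hr2 hκ0 hμ0.le hμ2 hμr hS hsym hpsd hc
      (by rw [hrκ]; linarith) hu Bu hBu (by
        intro y
        have e : f y ^ 2 = (|f y| ^ p) ^ r := by
          rw [← Real.rpow_mul (abs_nonneg _), hr, mul_div_cancel₀ _ hp0.ne', ← sq_abs]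
          exact (Real.rpow_two _).symm
        rw [e]
        refine Real.rpow_le_rpow (Real.rpow_nonneg (abs_nonneg _) _) ?_ hr0.le
        simp only [hv.init]
        have h1 : 0 < η * (Real.exp (M₁ * (s - s)) * ψ y) :=
          mul_pos hη (mul_pos (Real.exp_pos _) (by linarith [hψ1 y]))
        linarith)
    have hr2' := run2 Q b c s s0 t r κ μ c₁ a (2 * max 1 ‖x‖) (a / (2 * L)) hr0 hr2 hκ0 hμ2 hμr
      hss ha0.le (by positivity) hS hsym hpsd
      (fun τ hτ i j y => hQdiff τ (hIcc t hτ) y i j)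
      (fun τ hτ i y => hbdiff τ (hIcc t hτ) y i)
      (fun τ hτ y => hcdiff τ (hIcc t hτ) y)
      (fun i j => holder_cont hα.1 (hQhold i j) (hIcc t))
      (fun i => holder_cont hα.1 (hbhold i) (hIcc t))
      (holder_cont hα.1 hchold (hIcc t))
      (fun i j k => holder_cont hα'.1 (hQg i j k) (hIcc t))
      (fun i k => holder_cont hα'.1 (hbg i k) (hIcc t))
      (fun k => holder_cont hα'.1 (hcg k) (hIcc t))
      hc haL (by rw [hrκ]; linarith) hu Bu hBu hθ2 hθ0 hθ1 hθz
      (fun y => hr1 s0 ⟨hss.le, by linarith⟩ y) hRem t ⟨by linarith, le_rfl⟩ x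
    rw [hθone x (le_max_right _ _)] at hr2'
    have e1 : t - s0 = δ := by rw [hs0]; ring
    have e2 : ∑ k, 1 * dd d (u t) k x * (1 * dd d (u t) k x) = ‖fderiv ℝ (u t) x‖ ^ 2 := by
      rw [norm_fderiv_sq_le]
      refine Finset.sum_congr rfl fun k _ => ?_
      unfold dd; ring
    rw [e1, e2] at hr2'
    have h9 := mul_self_nonneg (u t x)
    refine le_trans ?_ hr2'
    rw [← hδ]
    linarith
  exact final_alg hp ha0 (by linarith) (norm_nonneg _) (hv0 t ⟨hst.le, le_rfl⟩ x)
    (limit_eta hr0 hmain)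
end
end
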